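/- arXiv:2003.07810 — 3 statements merged into one kernel-verified Lean document; each statement's English description precedes it below -/
import Mathlib

section
/- There exists n₀ ∈ ℕ such that the following holds for all n ≥ n₀. Let v_1, …, v_m ∈ ℝ^n and x ∈ [0,1]^m satisfy Σ_{i=1}^m x_i v_i v_iᵀ = I_n, let ε ∈ (0, 1/4), and let c ∈ ℝ_+^m. Then there exists z ∈ {0,1}^m such that Σ_{i=1}^m z_i v_i v_iᵀ ⪰ I_n and ⟨c, z⟩ ≤ (1 + 6ε)·⟨c, x⟩ + 15·n·c_∞/ε. (Existential form of the one-sided spectral rounding theorem.) -/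
open Matrix BigOperators

/-!
Write `V i = vᵢ vᵢᵀ`. Scale the fractional solution to `y = min 1 ((1 + ε) x)`, and let `B` be the
set of indices where `y = 1`; these are always selected. The surplus that scaling gains outside `B`,
plus a multiple `η` of the identity, is a positive definite matrix `E`.
With `L = ∑ xᵢ V i - η I`, take a set `S ⊇ B` minimising `∑_{i ∈ S} cᵢ + γ C tr (E W⁻¹)`, where
`W = ∑_{i ∈ S} V i - L` is required to be positive definite, `C` bounds the costs and
`γ = (2 + ε) / ε`. By the Sherman–Morrison formula, inserting or deleting an index changes the
trace by an explicit amount, so minimality is a linear inequality for each index. Weighting the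
inequalities for deletions by `1 - yᵢ` and those for insertions by `yᵢ` and adding them up bounds
`c(S) - ⟨c, y⟩` by traces of `W⁻¹`, `E` and the frame operators, and the trace form of Young's
inequality, `2 tr (W⁻¹ E) ≤ tr (W⁻¹ E W⁻¹ E) + n`, cancels all terms except `(1 + γ) n C`.
As there are finitely many sets `S`, one of them works for arbitrarily small `η`.
-/

section ShermanMorrison

variable {n K : Type*} [Fintype n] [DecidableEq n] [Field K]

/-- The **Sherman–Morrison formula**. -/
theorem inv_add_vecMulVec {W : Matrix n n K} (hW : IsUnit W) {u v : n → K}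
    (h : 1 + v ⬝ᵥ W⁻¹ *ᵥ u ≠ 0) :
    (W + vecMulVec u v)⁻¹ =
      W⁻¹ - (1 + v ⬝ᵥ W⁻¹ *ᵥ u)⁻¹ • vecMulVec (W⁻¹ *ᵥ u) (v ᵥ* W⁻¹) := by
  have hcore : 1⁻¹ + replicateRow Unit v * W⁻¹ * replicateCol Unit u =
      (1 + v ⬝ᵥ W⁻¹ *ᵥ u) • 1 := by
    rw [Matrix.mul_assoc, ← replicateCol_mulVec]
    ext
    simp
  have hinv : (1⁻¹ + replicateRow Unit v * W⁻¹ * replicateCol Unit u)⁻¹ =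
      (1 + v ⬝ᵥ W⁻¹ *ᵥ u)⁻¹ • 1 :=
    inv_eq_right_inv <| by
      rw [hcore, smul_mul_smul_comm, mul_inv_cancel₀ h, one_smul, Matrix.one_mul]
  have hunit : IsUnit (1⁻¹ + replicateRow Unit v * W⁻¹ * replicateCol Unit u) :=
    hcore ▸ isUnit_one.smul (Units.mk0 _ h)
  have hwoodbury := add_mul_mul_inv_eq_sub W (replicateCol Unit u) 1 (replicateRow Unit v)
    hW isUnit_one hunit
  rwa [hinv, Matrix.mul_one, ← vecMulVec_eq, Matrix.mul_smul, Matrix.mul_one, Matrix.smul_mul,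
    Matrix.smul_mul, Matrix.mul_assoc, ← replicateCol_mulVec, ← replicateRow_vecMul,
    ← vecMulVec_eq] at hwoodbury

theorem trace_mul_inv_add_vecMulVec {W : Matrix n n K} (hW : IsUnit W) (D : Matrix n n K)
    {u v : n → K} (h : 1 + v ⬝ᵥ W⁻¹ *ᵥ u ≠ 0) :
    trace (D * (W + vecMulVec u v)⁻¹) =
      trace (D * W⁻¹) - (v ⬝ᵥ (W⁻¹ * D * W⁻¹) *ᵥ u) / (1 + v ⬝ᵥ W⁻¹ *ᵥ u) := by
  have hupdate : trace (D * vecMulVec (W⁻¹ *ᵥ u) (v ᵥ* W⁻¹)) = v ⬝ᵥ (W⁻¹ * D * W⁻¹) *ᵥ u := by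
    rw [mul_vecMulVec, trace_vecMulVec, dotProduct_comm, ← dotProduct_mulVec]
    simp only [mulVec_mulVec, Matrix.mul_assoc]
  rw [inv_add_vecMulVec hW h, Matrix.mul_sub, trace_sub, Matrix.mul_smul, trace_smul, hupdate,
    smul_eq_mul, div_eq_inv_mul]

end ShermanMorrison

section Loewner

theorem posSemidef_vecMulVec_self {n R : Type*} [Finite n] [Ring R] [PartialOrder R] [StarRing R]
    [TrivialStar R] [StarOrderedRing R] (v : n → R) : (vecMulVec v v).PosSemidef := by
  simpa using posSemidef_vecMulVec_self_star v

theorem isClosed_setOf_posSemidef {n R : Type*} [Finite n] [CommRing R] [PartialOrder R]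
    [StarRing R] [TopologicalSpace R] [IsTopologicalSemiring R] [ContinuousStar R]
    [OrderClosedTopology R] : IsClosed {A : Matrix n n R | A.PosSemidef} := by
  cases nonempty_fintype n
  simp only [posSemidef_iff_dotProduct_mulVec, IsHermitian, Set.ofPred_and, Set.ofPred_forall]
  exact (isClosed_eq (by fun_prop) (by fun_prop)).inter
    (isClosed_iInter fun u => isClosed_le (by fun_prop) (by fun_prop))

open scoped MatrixOrder ComplexOrder

theorem exists_le_of_forall_exists_sub_smul_one_le {n 𝕜 α : Type*} [Finite n] [DecidableEq n]
    [RCLike 𝕜] {s : Set α} (hs : s.Finite) {A : Matrix n n 𝕜} {Z : α → Matrix n n 𝕜}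
    (h : ∀ η : ℝ, 0 < η → ∃ a ∈ s, A - η • 1 ≤ Z a) : ∃ a ∈ s, A ≤ Z a := by
  have hclosed : IsClosed (⋃ a ∈ s, {η : ℝ | A - η • 1 ≤ Z a}) :=
    hs.isClosed_biUnion fun a _ =>
      isClosed_setOf_posSemidef.preimage (f := fun η : ℝ => Z a - (A - η • 1)) (by fun_prop)
  have hpos : Set.Ioi (0 : ℝ) ⊆ ⋃ a ∈ s, {η : ℝ | A - η • 1 ≤ Z a} := fun η hη => by
    simpa using h η hη
  have hzero : (0 : ℝ) ∈ ⋃ a ∈ s, {η : ℝ | A - η • 1 ≤ Z a} :=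
    closure_minimal hpos hclosed (by simp)
  simpa using hzero

variable {n 𝕜 : Type*} [Fintype n] [RCLike 𝕜]

theorem trace_mul_nonneg {P Q : Matrix n n 𝕜} (hP : 0 ≤ P) (hQ : 0 ≤ Q) :
    0 ≤ trace (P * Q) := by
  obtain ⟨k, w, rfl⟩ := posSemidef_iff_eq_sum_vecMulVec.1 hQ.posSemidef
  rw [Finset.mul_sum, trace_sum]
  refine Finset.sum_nonneg fun i _ => ?_
  rw [mul_vecMulVec, trace_vecMulVec, dotProduct_comm]
  exact hP.posSemidef.dotProduct_mulVec_nonneg (w i)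

theorem trace_mul_le_trace_mul_left {P Q R : Matrix n n 𝕜} (hP : 0 ≤ P) (h : Q ≤ R) :
    trace (P * Q) ≤ trace (P * R) := by
  simpa [Matrix.mul_sub] using trace_mul_nonneg hP (sub_nonneg.2 h)

theorem two_mul_trace_inv_mul_le [DecidableEq n] {W D : Matrix n n 𝕜} (hW : W.PosDef)
    (hD : D.IsHermitian) :
    2 * trace (W⁻¹ * D) ≤ trace (W⁻¹ * D * W⁻¹ * D) + Fintype.card n := by
  have hdet : IsUnit W.det := (isUnit_iff_isUnit_det W).1 hW.isUnit
  have hM : 0 ≤ W⁻¹ := hW.inv.posSemidef.nonneg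
  have hnonneg : 0 ≤ trace (W⁻¹ * ((D - W) * W⁻¹ * (D - W))) :=
    trace_mul_nonneg hM (IsSelfAdjoint.conjugate_nonneg hM (hD.sub hW.isHermitian))
  have hexpand : W⁻¹ * ((D - W) * W⁻¹ * (D - W)) =
      W⁻¹ * D * W⁻¹ * D + 1 - 2 • (W⁻¹ * D) := by
    simp only [← Matrix.mul_assoc, Matrix.mul_sub, Matrix.sub_mul, nonsing_inv_mul _ hdet,
      Matrix.one_mul, nonsing_inv_mul_cancel_right _ _ hdet]
    abel
  rw [hexpand, trace_sub, trace_add, trace_one, trace_smul, nsmul_eq_mul, Nat.cast_ofNat] at hnonneg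
  exact sub_nonneg.1 hnonneg

theorem dotProduct_mulVec_nonneg {A : Matrix n n ℝ} (hA : 0 ≤ A) (u : n → ℝ) :
    0 ≤ u ⬝ᵥ A *ᵥ u := by
  simpa only [star_trivial] using hA.posSemidef.dotProduct_mulVec_nonneg u

theorem two_mul_dotProduct_le [DecidableEq n] {W : Matrix n n ℝ} (hW : W.PosDef) (u v : n → ℝ) :
    2 * (v ⬝ᵥ u) ≤ u ⬝ᵥ W *ᵥ u + v ⬝ᵥ W⁻¹ *ᵥ v := by
  have hdet : IsUnit W.det := (isUnit_iff_isUnit_det W).1 hW.isUnit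
  have hsymm : Wᵀ = W := by simpa using hW.isHermitian.eq
  have hnonneg := hW.posSemidef.dotProduct_mulVec_nonneg (u - W⁻¹ *ᵥ v)
  have hWM : W *ᵥ W⁻¹ *ᵥ v = v := by rw [mulVec_mulVec, mul_nonsing_inv _ hdet, one_mulVec]
  have hcross : (W⁻¹ *ᵥ v) ⬝ᵥ W *ᵥ u = v ⬝ᵥ u := by
    rw [dotProduct_mulVec, ← mulVec_transpose, hsymm, hWM]
  rw [star_trivial, mulVec_sub, hWM, sub_dotProduct, dotProduct_sub, dotProduct_sub, hcross,
    dotProduct_comm u v, dotProduct_comm _ v] at hnonneg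
  linarith

theorem posDef_sub_vecMulVec [DecidableEq n] {W : Matrix n n ℝ} (hW : W.PosDef) {v : n → ℝ}
    (hv : v ⬝ᵥ W⁻¹ *ᵥ v < 1) : (W - vecMulVec v v).PosDef := by
  refine .of_dotProduct_mulVec_pos
    (hW.isHermitian.sub (posSemidef_vecMulVec_self v).isHermitian) fun u hu => ?_
  have hpos : 0 < u ⬝ᵥ W *ᵥ u := by simpa using hW.dotProduct_mulVec_pos hu
  have hyoung := two_mul_dotProduct_le hW u ((v ⬝ᵥ u) • v)
  simp only [smul_dotProduct, mulVec_smul, dotProduct_smul, smul_eq_mul] at hyoung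
  have hexpand : star u ⬝ᵥ (W - vecMulVec v v) *ᵥ u = u ⬝ᵥ W *ᵥ u - (v ⬝ᵥ u) ^ 2 := by
    rw [star_trivial, sub_mulVec, dotProduct_sub, vecMulVec_mulVec, op_smul_eq_smul,
      dotProduct_smul, dotProduct_comm u v, smul_eq_mul, sq]
  rw [hexpand]
  rcases eq_or_ne (v ⬝ᵥ u) 0 with h | h
  · simpa [h] using hpos
  · have := mul_pos (sq_pos_of_ne_zero h) (sub_pos.2 hv)
    nlinarith

end Loewner

section Frame

open scoped MatrixOrder

variable {ι n : Type*}

/-- The 0-1 vector of a finite set of indices, in which fractional and integral solutions are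
compared. -/
noncomputable abbrev indicatorVector (S : Finset ι) : ι → ℝ :=
  (S : Set ι).indicator 1

theorem indicatorVector_of_mem {S : Finset ι} {i : ι} (hi : i ∈ S) : indicatorVector S i = 1 :=
  Set.indicator_of_mem hi 1

theorem indicatorVector_of_notMem {S : Finset ι} {i : ι} (hi : i ∉ S) : indicatorVector S i = 0 :=
  Set.indicator_of_notMem hi 1

variable [Fintype ι]

/-- The weighted frame operator `∑ i, a i • vᵢ vᵢᵀ` of a family of vectors, as a linear map in the
weights `a`. -/
def frameOperator (v : ι → n → ℝ) : (ι → ℝ) →ₗ[ℝ] Matrix n n ℝ :=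
  Fintype.linearCombination ℝ fun i => vecMulVec (v i) (v i)

theorem frameOperator_apply (v : ι → n → ℝ) (a : ι → ℝ) :
    frameOperator v a = ∑ i, a i • vecMulVec (v i) (v i) := rfl

theorem frameOperator_indicatorVector (v : ι → n → ℝ) (S : Finset ι) :
    frameOperator v (indicatorVector S) = ∑ i ∈ S, vecMulVec (v i) (v i) := by
  classical simp [frameOperator_apply, Set.indicator_apply, ite_smul]

theorem frameOperator_mono [Finite n] (v : ι → n → ℝ) : Monotone (frameOperator v) := by
  intro a b hab
  rw [← sub_nonneg, ← map_sub]
  exact (posSemidef_sum _ fun i _ =>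
    (posSemidef_vecMulVec_self (v i)).smul (sub_nonneg.2 (hab i))).nonneg

theorem trace_mul_frameOperator [Fintype n] (P : Matrix n n ℝ) (v : ι → n → ℝ) (a : ι → ℝ) :
    trace (P * frameOperator v a) = ∑ i, a i * (v i ⬝ᵥ P *ᵥ v i) := by
  simp only [frameOperator_apply, Finset.mul_sum, trace_sum, Matrix.mul_smul, trace_smul,
    mul_vecMulVec, trace_vecMulVec, smul_eq_mul, dotProduct_comm (v _)]

end Frame

section Barrier

open scoped MatrixOrder

variable {ι n : Type*}

/-- The amount by which the frame operator of `S` exceeds the barrier `L`. -/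
def barrierSlack (v : ι → n → ℝ) (L : Matrix n n ℝ) (S : Finset ι) : Matrix n n ℝ :=
  ∑ i ∈ S, vecMulVec (v i) (v i) - L

/-- The sets of indices that contain the forced indices `B` and lie strictly above the barrier `L`
in the Loewner order. -/
def barrierFeasible (v : ι → n → ℝ) (L : Matrix n n ℝ) (B : Finset ι) : Set (Finset ι) :=
  {S | B ⊆ S ∧ (barrierSlack v L S).PosDef}

variable {v : ι → n → ℝ} {c : ι → ℝ} {L E : Matrix n n ℝ} {τ : ℝ} {B S : Finset ι} {i : ι}

theorem barrierSlack_insert [DecidableEq ι] (hi : i ∉ S) :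
    barrierSlack v L (insert i S) = barrierSlack v L S + vecMulVec (v i) (v i) := by
  rw [barrierSlack, Finset.sum_insert hi, barrierSlack]
  abel

theorem barrierSlack_erase [DecidableEq ι] (hi : i ∈ S) :
    barrierSlack v L (S.erase i) = barrierSlack v L S - vecMulVec (v i) (v i) := by
  rw [barrierSlack, Finset.sum_erase_eq_sub hi, barrierSlack]
  abel

theorem barrierFeasible_nonempty [Fintype ι] [Finite n] {y : ι → ℝ} (hE : E.PosDef) (hy : y ≤ 1)
    (hcover : L + E ≤ frameOperator v y) : (barrierFeasible v L B).Nonempty := by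
  have hle : L + E ≤ ∑ i, vecMulVec (v i) (v i) := by
    simpa [frameOperator_apply] using hcover.trans (frameOperator_mono v hy)
  have hslack : barrierSlack v L Finset.univ =
      E + (∑ i, vecMulVec (v i) (v i) - (L + E)) := by
    rw [barrierSlack]
    abel
  exact ⟨Finset.univ, Finset.subset_univ B, hslack ▸ hE.add_posSemidef hle⟩

variable [Fintype n] [DecidableEq n]

/-- The leverage score of `v i` with respect to the slack of `S`; it is the denominator correction
in the Sherman–Morrison formula. -/
noncomputable def leverage (v : ι → n → ℝ) (L : Matrix n n ℝ) (S : Finset ι) (i : ι) : ℝ :=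
  v i ⬝ᵥ (barrierSlack v L S)⁻¹ *ᵥ v i

/-- The leverage score of `v i` weighted by `E`: the first-order change of `trace (E * W⁻¹)`, up to
sign, when `vᵢ vᵢᵀ` is added to the slack `W` of `S`. -/
noncomputable def weightedLeverage (v : ι → n → ℝ) (L E : Matrix n n ℝ) (S : Finset ι) (i : ι) :
    ℝ :=
  v i ⬝ᵥ ((barrierSlack v L S)⁻¹ * E * (barrierSlack v L S)⁻¹) *ᵥ v i

/-- The cost of `S` plus `τ` times the barrier potential `trace (E * W⁻¹)`, where `W` is the slack
of `S`. It is only meaningful on `barrierFeasible`: `W⁻¹` is `0` when `W` is singular. -/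
noncomputable def barrierObjective (v : ι → n → ℝ) (c : ι → ℝ) (L E : Matrix n n ℝ) (τ : ℝ)
    (S : Finset ι) : ℝ :=
  ∑ i ∈ S, c i + τ * trace (E * (barrierSlack v L S)⁻¹)

theorem leverage_nonneg (hS : (barrierSlack v L S).PosDef) (i : ι) : 0 ≤ leverage v L S i :=
  dotProduct_mulVec_nonneg hS.inv.posSemidef.nonneg (v i)

theorem weightedLeverage_nonneg (hS : (barrierSlack v L S).PosDef) (hE : 0 ≤ E) (i : ι) :
    0 ≤ weightedLeverage v L E S i :=
  dotProduct_mulVec_nonneg (IsSelfAdjoint.conjugate_nonneg hE hS.inv.isHermitian) (v i)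

theorem barrierObjective_insert [DecidableEq ι] (hS : (barrierSlack v L S).PosDef) (hi : i ∉ S) :
    barrierObjective v c L E τ (insert i S) = barrierObjective v c L E τ S + c i -
      τ * weightedLeverage v L E S i / (1 + leverage v L S i) := by
  have hq := leverage_nonneg hS i
  rw [barrierObjective, barrierSlack_insert hi, Finset.sum_insert hi,
    trace_mul_inv_add_vecMulVec hS.isUnit E (by rw [← leverage]; positivity), barrierObjective,
    leverage, weightedLeverage]
  ring

theorem barrierObjective_erase [DecidableEq ι] (hS : (barrierSlack v L S).PosDef) (hi : i ∈ S)
    (hq : leverage v L S i < 1) :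
    barrierObjective v c L E τ (S.erase i) = barrierObjective v c L E τ S - c i +
      τ * weightedLeverage v L E S i / (1 - leverage v L S i) := by
  have hne : 1 + v i ⬝ᵥ (barrierSlack v L S)⁻¹ *ᵥ (-v i) ≠ 0 := by
    rw [mulVec_neg, dotProduct_neg, ← leverage]
    linarith
  rw [barrierObjective, barrierSlack_erase hi, Finset.sum_erase_eq_sub hi,
    sub_eq_add_neg (barrierSlack v L S), ← neg_vecMulVec,
    trace_mul_inv_add_vecMulVec hS.isUnit E hne, barrierObjective, leverage, weightedLeverage]
  simp only [mulVec_neg, dotProduct_neg, ← sub_eq_add_neg]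
  ring

theorem mul_weightedLeverage_le_of_isMinOn (hS : S ∈ barrierFeasible v L B)
    (hmin : IsMinOn (barrierObjective v c L E τ) (barrierFeasible v L B) S) (hi : i ∉ S) :
    τ * weightedLeverage v L E S i ≤ c i * (1 + leverage v L S i) := by
  classical
  have hfeas : insert i S ∈ barrierFeasible v L B := by
    refine ⟨hS.1.trans (Finset.subset_insert i S), ?_⟩
    rw [barrierSlack_insert hi]
    exact hS.2.add_posSemidef (posSemidef_vecMulVec_self (v i))
  have hle := isMinOn_iff.1 hmin _ hfeas
  have hq := leverage_nonneg hS.2 i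
  rw [barrierObjective_insert hS.2 hi] at hle
  rw [← div_le_iff₀ (by positivity)]
  linarith

theorem le_mul_weightedLeverage_of_isMinOn (hE : 0 ≤ E) (hτ : 0 ≤ τ) (hc : 0 ≤ c i)
    (hS : S ∈ barrierFeasible v L B)
    (hmin : IsMinOn (barrierObjective v c L E τ) (barrierFeasible v L B) S)
    (hi : i ∈ S) (hiB : i ∉ B) :
    c i * (1 - leverage v L S i) ≤ τ * weightedLeverage v L E S i := by
  classical
  rcases le_or_gt 1 (leverage v L S i) with hq | hq
  -- Deleting `i` may leave the feasible domain, but then the left-hand side is nonpositive.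
  · exact (mul_nonpos_of_nonneg_of_nonpos hc (sub_nonpos.2 hq)).trans
      (mul_nonneg hτ (weightedLeverage_nonneg hS.2 hE i))
  · have hfeas : S.erase i ∈ barrierFeasible v L B := by
      refine ⟨Finset.subset_erase.2 ⟨hS.1, hiB⟩, ?_⟩
      rw [barrierSlack_erase hi]
      exact posDef_sub_vecMulVec hS.2 hq
    have hle := isMinOn_iff.1 hmin _ hfeas
    rw [barrierObjective_erase hS.2 hi hq] at hle
    rw [← le_div_iff₀ (sub_pos.2 hq)]
    linarith

variable {y : ι → ℝ} {C γ : ℝ}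

theorem mul_indicatorVector_sub_le_of_isMinOn (hy : y i ∈ Set.Icc 0 1) (hyB : i ∈ B → y i = 1)
    (hC : 0 ≤ C) (hc : c i ∈ Set.Icc 0 C) (hE : 0 ≤ E) (hτ : 0 ≤ τ)
    (hS : S ∈ barrierFeasible v L B)
    (hmin : IsMinOn (barrierObjective v c L E τ) (barrierFeasible v L B) S) :
    c i * (indicatorVector S - y) i ≤
      τ * ((indicatorVector S - y) i * weightedLeverage v L E S i) +
        C * ((indicatorVector S + y - (2 : ℝ) • indicatorVector B) i * leverage v L S i) := by
  obtain ⟨hy0, hy1⟩ := hy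
  obtain ⟨hc0, hcC⟩ := hc
  have hq := leverage_nonneg hS.2 i
  have hcq := mul_le_mul_of_nonneg_right hcC hq
  have hCq := mul_nonneg hC hq
  simp only [Pi.sub_apply, Pi.add_apply, Pi.smul_apply, smul_eq_mul]
  by_cases hiS : i ∈ S
  · rw [indicatorVector_of_mem hiS]
    by_cases hiB : i ∈ B
    · simp [indicatorVector_of_mem hiB, hyB hiB, one_add_one_eq_two]
    · have hopt := le_mul_weightedLeverage_of_isMinOn hE hτ hc0 hS hmin hiS hiB
      have hdelete := mul_le_mul_of_nonneg_left hopt (sub_nonneg.2 hy1)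
      have hcapped := mul_le_mul_of_nonneg_left hcq (sub_nonneg.2 hy1)
      have hslack := mul_nonneg hy0 hCq
      rw [indicatorVector_of_notMem hiB]
      linarith
  · have hopt := mul_weightedLeverage_le_of_isMinOn hS hmin hiS
    rw [indicatorVector_of_notMem hiS, indicatorVector_of_notMem fun hiB => hiS (hS.1 hiB)]
    have hinsert := mul_le_mul_of_nonneg_left hopt hy0
    have hcapped := mul_le_mul_of_nonneg_left hcq hy0
    linarith

variable [Fintype ι]

theorem sum_mul_weightedLeverage_le (hS : (barrierSlack v L S).PosDef) (hE : 0 ≤ E)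
    (hcover : L + E ≤ frameOperator v y) :
    ∑ i, (indicatorVector S - y) i * weightedLeverage v L E S i ≤
      trace ((barrierSlack v L S)⁻¹ * E) -
        trace ((barrierSlack v L S)⁻¹ * E * (barrierSlack v L S)⁻¹ * E) := by
  have hdet : IsUnit (barrierSlack v L S).det := (isUnit_iff_isUnit_det _).1 hS.isUnit
  have hle : frameOperator v (indicatorVector S - y) ≤ barrierSlack v L S - E := by
    rw [map_sub, frameOperator_indicatorVector, barrierSlack, sub_sub]
    gcongr
  simp only [weightedLeverage]
  rw [← trace_mul_frameOperator]
  refine (trace_mul_le_trace_mul_left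
    (IsSelfAdjoint.conjugate_nonneg hE hS.inv.isHermitian) hle).trans_eq ?_
  rw [Matrix.mul_sub, trace_sub, nonsing_inv_mul_cancel_right _ _ hdet]

theorem sum_mul_leverage_le (hS : (barrierSlack v L S).PosDef)
    (hfrac : L + frameOperator v y ≤ (2 : ℝ) • frameOperator v (indicatorVector B) + γ • E) :
    ∑ i, (indicatorVector S + y - (2 : ℝ) • indicatorVector B) i * leverage v L S i ≤
      Fintype.card n + γ * trace ((barrierSlack v L S)⁻¹ * E) := by
  have hdet : IsUnit (barrierSlack v L S).det := (isUnit_iff_isUnit_det _).1 hS.isUnit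
  have hle : frameOperator v (indicatorVector S + y - (2 : ℝ) • indicatorVector B) ≤
      barrierSlack v L S + γ • E := by
    rw [map_sub, map_add, map_smul, frameOperator_indicatorVector, sub_le_iff_le_add]
    calc ∑ i ∈ S, vecMulVec (v i) (v i) + frameOperator v y
        = barrierSlack v L S + (L + frameOperator v y) := by rw [barrierSlack]; abel
      _ ≤ barrierSlack v L S + ((2 : ℝ) • frameOperator v (indicatorVector B) + γ • E) := by gcongr
      _ = _ := by abel
  simp only [leverage]
  rw [← trace_mul_frameOperator]
  refine (trace_mul_le_trace_mul_left hS.inv.posSemidef.nonneg hle).trans_eq ?_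
  rw [Matrix.mul_add, trace_add, nonsing_inv_mul _ hdet, trace_one, Matrix.mul_smul, trace_smul,
    smul_eq_mul]

theorem sum_cost_le_of_isMinOn (hy : ∀ i, y i ∈ Set.Icc 0 1) (hyB : ∀ i ∈ B, y i = 1)
    (hC : 0 ≤ C) (hc : ∀ i, c i ∈ Set.Icc 0 C) (hE : 0 ≤ E) (hγ : 0 ≤ γ)
    (hcover : L + E ≤ frameOperator v y)
    (hfrac : L + frameOperator v y ≤ (2 : ℝ) • frameOperator v (indicatorVector B) + γ • E)
    (hS : S ∈ barrierFeasible v L B)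
    (hmin : IsMinOn (barrierObjective v c L E (γ * C)) (barrierFeasible v L B) S) :
    ∑ i ∈ S, c i ≤ ∑ i, c i * y i + (1 + γ) * (Fintype.card n * C) := by
  have hτ : 0 ≤ γ * C := mul_nonneg hγ hC
  have hcost : ∑ i, c i * (indicatorVector S - y) i = ∑ i ∈ S, c i - ∑ i, c i * y i := by
    classical simp [mul_sub, Set.indicator_apply]
  have hsum := Finset.sum_le_sum fun i (_ : i ∈ Finset.univ) =>
    mul_indicatorVector_sub_le_of_isMinOn (hy i) (hyB i) hC (hc i) hE hτ hS hmin
  rw [hcost, Finset.sum_add_distrib, ← Finset.mul_sum, ← Finset.mul_sum] at hsum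
  have hgain := mul_le_mul_of_nonneg_left (sum_mul_weightedLeverage_le hS.2 hE hcover) hτ
  have hloss := mul_le_mul_of_nonneg_left (sum_mul_leverage_le hS.2 hfrac) hC
  have hyoung := mul_le_mul_of_nonneg_left
    (two_mul_trace_inv_mul_le hS.2 hE.posSemidef.isHermitian) hτ
  linarith

end Barrier

section Rounding

open scoped MatrixOrder

variable {ι n : Type*} [Fintype ι] [Fintype n] {v : ι → n → ℝ} {c y : ι → ℝ} {C γ : ℝ}
  {L E : Matrix n n ℝ} {B : Finset ι}

theorem exists_finset_le_sum_vecMulVec (hy : ∀ i, y i ∈ Set.Icc 0 1) (hyB : ∀ i ∈ B, y i = 1)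
    (hC : 0 ≤ C) (hc : ∀ i, c i ∈ Set.Icc 0 C) (hE : E.PosDef) (hγ : 0 ≤ γ)
    (hcover : L + E ≤ frameOperator v y)
    (hfrac : L + frameOperator v y ≤ (2 : ℝ) • frameOperator v (indicatorVector B) + γ • E) :
    ∃ S : Finset ι, L ≤ ∑ i ∈ S, vecMulVec (v i) (v i) ∧
      ∑ i ∈ S, c i ≤ ∑ i, c i * y i + (1 + γ) * (Fintype.card n * C) := by
  classical
  obtain ⟨S, hS, hmin⟩ := Set.exists_min_image (barrierFeasible v L B)
    (barrierObjective v c L E (γ * C)) (Set.toFinite _)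
    (barrierFeasible_nonempty hE (fun i => (hy i).2) hcover)
  exact ⟨S, hS.2.posSemidef,
    sum_cost_le_of_isMinOn hy hyB hC hc hE.posSemidef.nonneg hγ hcover hfrac hS hmin⟩

variable [DecidableEq n] {x : ι → ℝ}

theorem exists_finset_sub_smul_one_le_of_add_smul_le (v : ι → n → ℝ) {r : ι → ℝ}
    {α β η : ℝ} (hr : 0 ≤ r) (hy : ∀ i, y i ∈ Set.Icc 0 1) (hyB : ∀ i ∈ B, y i = 1)
    (hcover : x + α • r ≤ y) (hfrac : x + y ≤ (2 : ℝ) • indicatorVector B + β • r)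
    (hα : 0 < α) (hβ : 0 ≤ β) (hη : 0 < η) (hC : 0 ≤ C) (hc : ∀ i, c i ∈ Set.Icc 0 C) :
    ∃ S : Finset ι, frameOperator v x - η • 1 ≤ ∑ i ∈ S, vecMulVec (v i) (v i) ∧
      ∑ i ∈ S, c i ≤ ∑ i, c i * y i + (1 + β / α) * (Fintype.card n * C) := by
  have hF : Monotone (frameOperator v) := frameOperator_mono v
  have hγ : 0 ≤ β / α := by positivity
  have hFr : (frameOperator v r).PosSemidef :=
    nonneg_iff_posSemidef.1 (by simpa using hF hr)
  have hη1 : (η • (1 : Matrix n n ℝ)).PosDef := PosDef.one.smul hη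
  refine exists_finset_le_sum_vecMulVec (E := α • frameOperator v r + η • 1) hy hyB hC hc
    (hη1.posSemidef_add (hFr.smul hα.le)) hγ ?_ ?_
  · calc frameOperator v x - η • 1 + (α • frameOperator v r + η • 1)
        = frameOperator v (x + α • r) := by rw [map_add, map_smul]; abel
      _ ≤ frameOperator v y := hF hcover
  · calc frameOperator v x - η • 1 + frameOperator v y
        ≤ frameOperator v (x + y) + (β / α) • η • 1 := by
          rw [map_add, sub_add_eq_add_sub, sub_eq_add_neg]
          gcongr
          exact (neg_nonpos.2 hη1.posSemidef.nonneg).trans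
            (hη1.posSemidef.smul hγ).nonneg
      _ ≤ frameOperator v ((2 : ℝ) • indicatorVector B + β • r) + (β / α) • η • 1 := by
          gcongr
          exact hF hfrac
      _ = (2 : ℝ) • frameOperator v (indicatorVector B) +
            (β / α) • (α • frameOperator v r + η • 1) := by
          rw [map_add, map_smul, map_smul, smul_add, smul_smul (β / α) α, div_mul_cancel₀ _ hα.ne',
            add_assoc]

theorem exists_finset_sub_smul_one_le (v : ι → n → ℝ) (hx : ∀ i, x i ∈ Set.Icc 0 1)
    (hc : ∀ i, c i ∈ Set.Icc 0 C) (hC : 0 ≤ C) {ε η : ℝ} (hε : 0 < ε) (hη : 0 < η) :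
    ∃ S : Finset ι, frameOperator v x - η • 1 ≤ ∑ i ∈ S, vecMulVec (v i) (v i) ∧
      ∑ i ∈ S, c i ≤ (1 + ε) * (∑ i, c i * x i + 2 * Fintype.card n * C / ε) := by
  let B : Finset ι := {i | 1 ≤ (1 + ε) * x i}
  let y : ι → ℝ := fun i => min 1 ((1 + ε) * x i)
  let r : ι → ℝ := (Bᶜ : Set ι).indicator x
  have hscaled (i) : 0 ≤ (1 + ε) * x i := mul_nonneg (by positivity) (hx i).1
  have hy (i) : y i ∈ Set.Icc 0 1 := ⟨le_min zero_le_one (hscaled i), min_le_left _ _⟩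
  have hyB : ∀ i ∈ B, y i = 1 := fun i hi => min_eq_left (Finset.mem_filter.1 hi).2
  have hyBc : ∀ i ∉ B, y i = (1 + ε) * x i := fun i hi =>
    min_eq_right (not_le.1 fun h => hi (by simpa [B] using h)).le
  have hcover : x + ε • r ≤ y := fun i => by
    by_cases hi : i ∈ B
    · simpa [r, hi, hyB i hi] using (hx i).2
    · simp [r, hi, hyBc i hi, add_mul]
  have hfrac : x + y ≤ (2 : ℝ) • indicatorVector B + (2 + ε) • r := fun i => by
    by_cases hi : i ∈ B
    · have hxy : x i + 1 ≤ 2 := by linarith [(hx i).2]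
      simpa [r, hi, hyB i hi] using hxy
    · have hxy : x i + (1 + ε) * x i = (2 + ε) * x i := by ring
      simp [r, hi, hyBc i hi, hxy]
  obtain ⟨S, hS, hcost⟩ := exists_finset_sub_smul_one_le_of_add_smul_le v
    (Set.indicator_nonneg fun i _ => (hx i).1) hy hyB hcover hfrac hε (by positivity) hη hC hc
  refine ⟨S, hS, hcost.trans ?_⟩
  calc ∑ i, c i * y i + (1 + (2 + ε) / ε) * (Fintype.card n * C)
      ≤ ∑ i, c i * ((1 + ε) * x i) + (1 + (2 + ε) / ε) * (Fintype.card n * C) := by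
        gcongr with i
        · exact (hc i).1
        · exact min_le_right _ _
    _ = (1 + ε) * (∑ i, c i * x i + 2 * Fintype.card n * C / ε) := by
        rw [mul_add, Finset.mul_sum]
        congr 1
        · exact Finset.sum_congr rfl fun i _ => mul_left_comm _ _ _
        · field_simp
          ring

end Rounding

theorem one_sided_spectral_rounding_exists_general {ι n : Type*} [Fintype ι] [Fintype n]
    (v : ι → n → ℝ) {x c : ι → ℝ} {ε : ℝ} (hx : ∀ i, 0 ≤ x i ∧ x i ≤ 1) (hε : 0 < ε)
    (hc : ∀ i, 0 ≤ c i) :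
    ∃ z : ι → ℝ, (∀ i, z i = 0 ∨ z i = 1) ∧
      (∑ i, z i • vecMulVec (v i) (v i) - ∑ i, x i • vecMulVec (v i) (v i)).PosSemidef ∧
      ∑ i, c i * z i ≤ (1 + ε) * (∑ i, c i * x i + 2 * Fintype.card n * (⨆ i, c i) / ε) := by
  classical
  have hcC (i) : c i ∈ Set.Icc 0 (⨆ i, c i) := ⟨hc i, le_ciSup (Set.finite_range c).bddAbove i⟩
  obtain ⟨S, hcost, hS⟩ := exists_le_of_forall_exists_sub_smul_one_le
    (Set.toFinite {S : Finset ι | ∑ i ∈ S, c i ≤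
      (1 + ε) * (∑ i, c i * x i + 2 * Fintype.card n * (⨆ i, c i) / ε)})
    (A := frameOperator v x) (Z := fun S => ∑ i ∈ S, vecMulVec (v i) (v i)) fun η hη =>
      (exists_finset_sub_smul_one_le v hx hcC (Real.iSup_nonneg hc) hε hη).imp fun _ => And.symm
  refine ⟨indicatorVector S, Set.indicator_eq_zero_or_self _ _, ?_, ?_⟩
  · rwa [← frameOperator_apply, frameOperator_indicatorVector]
  · simpa [Set.indicator_apply] using hcost

/-- **One-sided spectral rounding (existential form).**
There exists `n₀` such that for all `n ≥ n₀`: given vectors `v₁, …, v_m ∈ ℝⁿ` and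
`x ∈ [0,1]^m` with `∑ xᵢ vᵢ vᵢᵀ = Iₙ`, `ε ∈ (0, 1/4)` and nonnegative costs `c`,
there is `z ∈ {0,1}^m` with `∑ zᵢ vᵢ vᵢᵀ ⪰ Iₙ` and
`⟨c, z⟩ ≤ (1 + 6ε) ⟨c, x⟩ + 15 n c_∞ / ε`. -/
theorem one_sided_spectral_rounding_exists :
    ∃ n₀ : ℕ, ∀ n : ℕ, n₀ ≤ n →
      ∀ (m : ℕ) (v : Fin m → Fin n → ℝ) (x c : Fin m → ℝ) (ε : ℝ),
        (∀ i, 0 ≤ x i ∧ x i ≤ 1) →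
        (∑ i, x i • vecMulVec (v i) (v i)) = (1 : Matrix (Fin n) (Fin n) ℝ) →
        0 < ε → ε < 1/4 →
        (∀ i, 0 ≤ c i) →
        ∃ z : Fin m → ℝ, (∀ i, z i = 0 ∨ z i = 1) ∧
          ((∑ i, z i • vecMulVec (v i) (v i)) - (1 : Matrix (Fin n) (Fin n) ℝ)).PosSemidef ∧
          (∑ i, c i * z i) ≤ (1 + 6*ε) * (∑ i, c i * x i) + 15 * n * (⨆ i, c i) / ε := by
  refine ⟨0, fun n _ m v x c ε hx hX hε _ hc => ?_⟩
  obtain ⟨z, hz, hcover, hcost⟩ :=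
    one_sided_spectral_rounding_exists_general v hx (by positivity : 0 < 6 * ε) hc
  refine ⟨z, hz, hX ▸ hcover, hcost.trans ?_⟩
  have hC : 0 ≤ ⨆ i, c i := Real.iSup_nonneg hc
  have hconst : (1 + 6 * ε) / 3 ≤ 15 := by linarith
  calc _ = (1 + 6 * ε) * ∑ i, c i * x i + (1 + 6 * ε) / 3 * (n * (⨆ i, c i) / ε) := by
        rw [Fintype.card_fin]; field_simp; ring
    _ ≤ (1 + 6 * ε) * ∑ i, c i * x i + 15 * (n * (⨆ i, c i) / ε) := by gcongr
    _ = _ := by ring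
end

section
/- Let v_1, …, v_m ∈ ℝ^n, x ∈ [0,1]^m, and c ∈ ℝ_+^m. Suppose Σ_{i=1}^m x_i v_i v_iᵀ = I_n, that ‖v_i‖ ≤ ε < 1/8 for all i ∈ [m], and that c_∞ ≤ ε²·⟨c, x⟩. Then there exists z ∈ {0,1}^m such that (1 − 8ε)·I_n ⪯ Σ_{i=1}^m z_i v_i v_iᵀ ⪯ (1 + 8ε)·I_n and (1 − 8ε)·⟨c, x⟩ ≤ ⟨c, z⟩ ≤ (1 + 8ε)·⟨c, x⟩. -/
open Matrix BigOperators

/-!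
The argument is the method of interlacing polynomials, in the form that bounds a deviation from both
sides by means of variances.

The cost is treated as a family of rank-one `1 × 1` matrices: put `S = ⟨c, x⟩` and give `v_i` the
extra coordinate `√(c_i / S)`. The resulting vectors satisfy `|u_i|² ≤ 2 ε²` and
`∑ x_i u_i u_iᵀ ⪯ 2 I`, so independent Bernoulli variables `z_i` with means `x_i` have
`∑ Var(z_i) |u_i|² u_i u_iᵀ ⪯ (2ε)² I`. For `M = ∑ (z_i - x_i) u_i u_iᵀ` one wants an outcome such
that all roots of `det (t - M) det (t + M)` are below `8ε`. The expectation of this polynomial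
arises from `det X det Y`, at `X = Y = t I`, by applying the operators `1 - Var(z_i) ∂_X ∂_Y` with
derivatives along `u_i u_iᵀ`.

These operators preserve stability, that is, the absence of zeros when `X` and `Y` have positive
definite imaginary part. Hence all conditional expectations are real-rooted, and rounding one
variable at a time leads to an outcome whose roots lie below any strict upper bound for the roots of
the full expectation.

Such a bound comes from a barrier argument. As long as `H ⪰ λ I`, the logarithmic derivative of
`det X det Y` at `X = Y = H` along `w wᵀ` is at most `2 |w|² / λ`. Each operator `1 - κ ∂_X ∂_Y`
preserves this estimate if `H` is first increased by `2 κ φ u uᵀ`, where `φ = 2 |u|² / λ`. This step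
rests on a Wronskian inequality, which is again a consequence of stability.
-/

namespace SpectralRounding

section Differences

variable {K E : Type*} [CommRing K] [AddCommGroup E]

/-- The mixed second difference `∂_X ∂_Y f` along `A`, with one difference in each argument. -/
def mixedDiff (A : E) (f : E → E → K) (X Y : E) : K :=
  f (X + A) (Y + A) - f (X + A) Y - f X (Y + A) + f X Y

/-- The sum `∂_X f + ∂_Y f` of the differences along `A` in the two arguments. On functions that are
affine along `A` in each argument it is the derivative along the diagonal direction `(A, A)`. -/
def diagDiff (A : E) (f : E → E → K) (X Y : E) : K :=
  f (X + A) Y + f X (Y + A) - 2 * f X Y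

lemma mixedDiff_diagDiff_comm (A B : E) (f : E → E → K) (X Y : E) :
    mixedDiff A (diagDiff B f) X Y = diagDiff B (mixedDiff A f) X Y := by
  simp only [diagDiff, mixedDiff, add_right_comm _ A B]
  ring

lemma map_mixedDiff {K' E' : Type*} [CommRing K'] [AddCommGroup E'] {φ : K →+* K'} {ψ : E →+ E'}
    {f : E → E → K} {g : E' → E' → K'} (h : ∀ X Y, φ (f X Y) = g (ψ X) (ψ Y)) (A X Y : E) :
    φ (mixedDiff A f X Y) = mixedDiff (ψ A) g (ψ X) (ψ Y) := by
  simp only [mixedDiff, map_add, map_sub, h]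

lemma map_diagDiff {K' E' : Type*} [CommRing K'] [AddCommGroup E'] {φ : K →+* K'} {ψ : E →+ E'}
    {f : E → E → K} {g : E' → E' → K'} (h : ∀ X Y, φ (f X Y) = g (ψ X) (ψ Y)) (A X Y : E) :
    φ (diagDiff A f X Y) = diagDiff (ψ A) g (ψ X) (ψ Y) := by
  simp only [diagDiff, map_add, map_sub, map_mul, map_ofNat, h]

variable [Module K E]

/-- `f` is affine along `A` in each of its two arguments. -/
structure IsBiaffineAlong (A : E) (f : E → E → K) : Prop where
  left (X Y : E) (y : K) : f (X + y • A) Y = (1 - y) * f X Y + y * f (X + A) Y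
  right (X Y : E) (y : K) : f X (Y + y • A) = (1 - y) * f X Y + y * f X (Y + A)

namespace IsBiaffineAlong

variable {A : E} {f : E → E → K}

protected lemma mixedDiff (hf : IsBiaffineAlong A f) (B : E) :
    IsBiaffineAlong A (mixedDiff B f) where
  left X Y y := by
    simp only [mixedDiff, add_right_comm X _ B, hf.left]
    ring
  right X Y y := by
    simp only [mixedDiff, add_right_comm Y _ B, hf.right]
    ring

protected lemma diagDiff (hf : IsBiaffineAlong A f) (B : E) :
    IsBiaffineAlong A (diagDiff B f) where
  left X Y y := by
    simp only [diagDiff, add_right_comm X _ B, hf.left]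
    ring
  right X Y y := by
    simp only [diagDiff, add_right_comm Y _ B, hf.right]
    ring

lemma sub_mul (hf : IsBiaffineAlong A f) {g : E → E → K} (hg : IsBiaffineAlong A g) (a : K) :
    IsBiaffineAlong A fun X Y => f X Y - a * g X Y where
  left X Y y := by rw [hf.left, hg.left]; ring
  right X Y y := by rw [hf.right, hg.right]; ring

lemma add_smul_add_smul (hf : IsBiaffineAlong A f) (X Y : E) (z : K) :
    f (X + z • A) (Y + z • A) =
      f X Y + diagDiff A f X Y * z + mixedDiff A f X Y * z ^ 2 := by
  simp only [diagDiff, mixedDiff, hf.left, hf.right]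
  ring

lemma add_add_left (hf : IsBiaffineAlong A f) (X Y : E) :
    f (X + A + A) Y = 2 * f (X + A) Y - f X Y := by
  rw [add_assoc, ← two_smul K A, hf.left]
  ring

lemma add_add_right (hf : IsBiaffineAlong A f) (X Y : E) :
    f X (Y + A + A) = 2 * f X (Y + A) - f X Y := by
  rw [add_assoc, ← two_smul K A, hf.right]
  ring

lemma diagDiff_diagDiff_self (hf : IsBiaffineAlong A f) (X Y : E) :
    diagDiff A (diagDiff A f) X Y = 2 * mixedDiff A f X Y := by
  simp only [diagDiff, mixedDiff, hf.add_add_left, hf.add_add_right]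
  ring

lemma mixedDiff_diagDiff_self (hf : IsBiaffineAlong A f) (X Y : E) :
    mixedDiff A (diagDiff A f) X Y = 0 := by
  simp only [diagDiff, mixedDiff, hf.add_add_left, hf.add_add_right]
  ring

/-- If `ξ` is a Bernoulli variable with mean `θ`, the left side is the expectation of
`f (X - ξ A) (Y + ξ A)`, and the correction on the right side is the variance of `ξ` times the mixed
derivative. -/
lemma expectation (hf : IsBiaffineAlong A f) (X Y : E) (θ : K) :
    (1 - θ) * f X Y + θ * f (X - A) (Y + A) = f (X - θ • A) (Y + θ • A) -
      θ * (1 - θ) * mixedDiff A f (X - θ • A) (Y + θ • A) := by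
  have h₁ : X - θ • A + A = X + (1 - θ) • A := by rw [sub_smul, one_smul]; abel
  have h₂ : Y + θ • A + A = Y + (1 + θ) • A := by rw [add_smul, one_smul]; abel
  have h₃ : X - A = X + (-1 : K) • A := by rw [neg_one_smul, sub_eq_add_neg]
  rw [mixedDiff, h₁, h₂, h₃, sub_eq_add_neg X, ← neg_smul]
  simp only [hf.left, hf.right]
  ring

end IsBiaffineAlong

end Differences

section MixedDet

lemma det_add_vecMulVec_eq_det_updateCol {ι K : Type*} [Fintype ι] [DecidableEq ι] [CommRing K]
    (X : Matrix ι ι K) (u v : ι → K) :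
    (X + vecMulVec u v).det =
      ((fromBlocks X 0 (-replicateRow Unit v) (1 : Matrix Unit Unit K)).updateCol (Sum.inr ())
        (Sum.elim u 1)).det := by
  have hblocks : (fromBlocks X 0 (-replicateRow Unit v) (1 : Matrix Unit Unit K)).updateCol
      (Sum.inr ()) (Sum.elim u 1) =
      fromBlocks X (replicateCol Unit u) (-replicateRow Unit v) 1 := by
    ext (i | i) (j | j) <;> simp
  rw [hblocks, det_fromBlocks_one₂₂, Matrix.mul_neg, sub_neg_eq_add, vecMulVec_eq Unit]

lemma det_add_smul_vecMulVec {ι K : Type*} [Fintype ι] [DecidableEq ι] [CommRing K]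
    (X : Matrix ι ι K) (u v : ι → K) (y : K) :
    (X + y • vecMulVec u v).det = (1 - y) * X.det + y * (X + vecMulVec u v).det := by
  have hcol : (Sum.elim (y • u) 1 : ι ⊕ Unit → K) =
      (1 - y) • Sum.elim (0 : ι → K) 1 + y • Sum.elim u 1 := by
    ext (i | i) <;> simp
  have hzero := det_add_vecMulVec_eq_det_updateCol X 0 v
  rw [zero_vecMulVec, add_zero] at hzero
  rw [← smul_vecMulVec, det_add_vecMulVec_eq_det_updateCol, hcol, det_updateCol_add,
    det_updateCol_smul, det_updateCol_smul, ← hzero, ← det_add_vecMulVec_eq_det_updateCol]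

/-- The rank-one matrix `u uᵀ` with entries in an `ℝ`-algebra `K`. -/
def rankOne {ι : Type*} (K : Type*) [CommRing K] [Algebra ℝ K] (u : ι → ℝ) : Matrix ι ι K :=
  vecMulVec (fun i => algebraMap ℝ K (u i)) (fun i => algebraMap ℝ K (u i))

lemma map_rankOne {ι K K' : Type*} [CommRing K] [Algebra ℝ K] [CommRing K'] [Algebra ℝ K']
    (φ : K →ₐ[ℝ] K') (u : ι → ℝ) : (rankOne K u).map φ = rankOne K' u := by
  ext i j
  simp [rankOne, vecMulVec_apply]

variable {ι : Type*} [Fintype ι] [DecidableEq ι] {K : Type*} [CommRing K] [Algebra ℝ K]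

/-- The function obtained from `det X * det Y` by applying the operator `1 - κ ∂_X ∂_Y`, with
derivatives along `u uᵀ`, for each pair `(κ, u)` in the list. Since the functions in question are
biaffine along rank-one matrices, the derivatives are differences; so the definition makes sense
over any `ℝ`-algebra `K`, and it is used for `ℝ`, `ℂ` and `ℝ[X]`. -/
def mixedDet (K : Type*) [CommRing K] [Algebra ℝ K] :
    List (ℝ × (ι → ℝ)) → Matrix ι ι K → Matrix ι ι K → K
  | [], X, Y => X.det * Y.det
  | (κ, u) :: L, X, Y => mixedDet K L X Y -
      algebraMap ℝ K κ * mixedDiff (rankOne K u) (mixedDet K L) X Y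

lemma isBiaffineAlong_mixedDet (L : List (ℝ × (ι → ℝ))) (u : ι → ℝ) :
    IsBiaffineAlong (rankOne K u) (mixedDet K L) := by
  induction L with
  | nil =>
    constructor <;> intro X Y y <;> simp only [mixedDet, rankOne, det_add_smul_vecMulVec] <;> ring
  | cons p L ih => exact ih.sub_mul (ih.mixedDiff _) _

lemma diagDiff_mixedDet_cons (κ : ℝ) (u : ι → ℝ) (L : List (ℝ × (ι → ℝ))) (W X Y : Matrix ι ι K) :
    diagDiff W (mixedDet K ((κ, u) :: L)) X Y = diagDiff W (mixedDet K L) X Y -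
      algebraMap ℝ K κ * mixedDiff (rankOne K u) (diagDiff W (mixedDet K L)) X Y := by
  rw [mixedDiff_diagDiff_comm]
  simp only [diagDiff, mixedDet]
  ring

lemma map_mixedDet {K' : Type*} [CommRing K'] [Algebra ℝ K'] (φ : K →ₐ[ℝ] K')
    (L : List (ℝ × (ι → ℝ))) (X Y : Matrix ι ι K) :
    φ (mixedDet K L X Y) = mixedDet K' L (X.map φ) (Y.map φ) := by
  induction L generalizing X Y with
  | nil => simp only [mixedDet, map_mul, AlgHom.map_det, AlgHom.mapMatrix_apply]
  | cons p L ih =>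
    have hmap := map_mixedDiff (φ := φ.toRingHom) (ψ := φ.toRingHom.toAddMonoidHom.mapMatrix) ih
      (rankOne K p.2) X Y
    simp only [mixedDet, map_sub, map_mul, AlgHom.commutes, ih]
    rw [← map_rankOne φ]
    exact congrArg (_ - _ * ·) hmap

end MixedDet

section Quadratics

lemma exists_inverse_roots_of_stable {a b c : ℂ}
    (h : ∀ z : ℂ, 0 ≤ z.im → a + b * z + c * z ^ 2 ≠ 0) :
    ∃ p q : ℂ, b = -(a * (p + q)) ∧ c = a * (p * q) ∧
      (p = 0 ∨ 0 < p.im) ∧ (q = 0 ∨ 0 < q.im) := by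
  have ha : a ≠ 0 := by simpa using h 0 le_rfl
  obtain ⟨s, hs⟩ := IsAlgClosed.exists_pow_nat_eq (b ^ 2 - 4 * a * c) (n := 2) two_pos
  have hsum : b = -(a * ((-b + s) / (2 * a) + (-b - s) / (2 * a))) := by
    field_simp
    ring
  have hprod : c = a * ((-b + s) / (2 * a) * ((-b - s) / (2 * a))) := by
    field_simp
    linear_combination hs
  generalize (-b + s) / (2 * a) = p at hsum hprod
  generalize (-b - s) / (2 * a) = q at hsum hprod
  have im_pos {r : ℂ} (hr : a + b * r⁻¹ + c * r⁻¹ ^ 2 = 0) : 0 < r.im := by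
    have him : r⁻¹.im < 0 := not_le.mp fun h0 => h _ h0 hr
    rw [Complex.inv_im, div_lt_iff₀' (Complex.normSq_pos.mpr fun h0 => by simp [h0] at him)] at him
    linarith
  refine ⟨p, q, hsum, hprod, or_iff_not_imp_left.mpr fun hp => im_pos ?_,
    or_iff_not_imp_left.mpr fun hq => im_pos ?_⟩
  all_goals
    rw [hsum, hprod]
    field_simp
    ring

lemma sub_mul_ne_zero_of_stable {a b c : ℂ}
    (h : ∀ z : ℂ, 0 ≤ z.im → a + b * z + c * z ^ 2 ≠ 0) {κ : ℝ} (hκ : 0 ≤ κ) :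
    a - κ * c ≠ 0 := by
  have ha : a ≠ 0 := by simpa using h 0 le_rfl
  obtain ⟨p, q, -, hc, hp, hq⟩ := exists_inverse_roots_of_stable h
  intro h0
  have hpq : p * (κ * q) = 1 := by
    refine mul_left_cancel₀ ha ?_
    rw [hc] at h0
    linear_combination -h0
  have hp0 : p ≠ 0 := left_ne_zero_of_mul_eq_one hpq
  have hq0 : q ≠ 0 := right_ne_zero_of_mul (right_ne_zero_of_mul_eq_one hpq)
  have him : (p⁻¹).im = κ * q.im := by
    rw [← eq_inv_of_mul_eq_one_right hpq, Complex.im_ofReal_mul]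
  have hpos : 0 < p.im / Complex.normSq p :=
    div_pos (hp.resolve_left hp0) (Complex.normSq_pos.mpr hp0)
  rw [Complex.inv_im, neg_div] at him
  linarith [mul_nonneg hκ (hq.resolve_left hq0).le]

lemma im_mul_conj_nonpos_of_stable {a b c : ℂ}
    (h : ∀ z : ℂ, 0 ≤ z.im → a + b * z + c * z ^ 2 ≠ 0) :
    (b * (starRingEnd ℂ) a).im ≤ 0 := by
  obtain ⟨p, q, rfl, -, hp, hq⟩ := exists_inverse_roots_of_stable h
  have im_nonneg {r : ℂ} (hr : r = 0 ∨ 0 < r.im) : 0 ≤ r.im := by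
    rcases hr with rfl | hr
    exacts [le_rfl, hr.le]
  have heq : -(a * (p + q)) * (starRingEnd ℂ) a = -((Complex.normSq a : ℂ) * (p + q)) := by
    rw [Complex.normSq_eq_conj_mul_self]
    ring
  rw [heq, Complex.neg_im, Complex.im_ofReal_mul, Complex.add_im, neg_nonpos]
  exact mul_nonneg (Complex.normSq_nonneg a) (add_nonneg (im_nonneg hp) (im_nonneg hq))

/-- The Wronskian of the quadratics `h = A' + B' s + C' s²` and `g = A + B s + C s²` is nonnegative
on the real line, so that `h / g` is nonincreasing on intervals without zeros of `g`. -/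
def WronskianNonneg (A B C A' B' C' : ℝ) : Prop :=
  ∀ s : ℝ, 0 ≤ (A' + B' * s + C' * s ^ 2) * (B + 2 * C * s) -
    (B' + 2 * C' * s) * (A + B * s + C * s ^ 2)

lemma WronskianNonneg.minors {A B C A' B' C' : ℝ} (h : WronskianNonneg A B C A' B' C') :
    0 ≤ A' * B - B' * A ∧
      (A' * C - C' * A) ^ 2 ≤ (A' * B - B' * A) * (B' * C - C' * B) := by
  have hdiscrim : discrim (B' * C - C' * B) (2 * (A' * C - C' * A)) (A' * B - B' * A) ≤ 0 :=
    discrim_le_zero fun s => by linarith [h s]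
  rw [discrim] at hdiscrim
  exact ⟨by simpa using h 0, by linarith⟩

/-- The identity `Im (h * conj g) = -Im s * (D₀ + 2 Re s D₁ + |s|² D₂)`, in which `D₀`, `D₁` and
`D₂` are the minors of the coefficients, exhibits the Wronskian in the limit `Im s → 0`. -/
lemma wronskianNonneg_of_im_mul_conj_nonpos {A B C A' B' C' : ℝ}
    (h : ∀ s : ℂ, 0 < s.im → (((A' : ℂ) + B' * s + C' * s ^ 2) *
      (starRingEnd ℂ) ((A : ℂ) + B * s + C * s ^ 2)).im ≤ 0) :
    WronskianNonneg A B C A' B' C' := by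
  set D₀ := A' * B - B' * A with hD₀
  set D₁ := A' * C - C' * A with hD₁
  set D₂ := B' * C - C' * B with hD₂
  have hupper (a b : ℝ) (hb : 0 < b) : 0 ≤ D₀ + 2 * a * D₁ + (a ^ 2 + b ^ 2) * D₂ := by
    have him := h ⟨a, b⟩ hb
    have heq : (((A' : ℂ) + B' * (⟨a, b⟩ : ℂ) + C' * (⟨a, b⟩ : ℂ) ^ 2) *
        (starRingEnd ℂ) ((A : ℂ) + B * (⟨a, b⟩ : ℂ) + C * (⟨a, b⟩ : ℂ) ^ 2)).im =
        -(b * (D₀ + 2 * a * D₁ + (a ^ 2 + b ^ 2) * D₂)) := by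
      simp only [pow_two, map_add, map_mul, Complex.conj_ofReal, Complex.mul_im, Complex.add_re,
        Complex.add_im, Complex.mul_re, Complex.ofReal_re, Complex.ofReal_im, Complex.conj_re,
        Complex.conj_im, hD₀, hD₁, hD₂]
      ring
    rw [heq, neg_nonpos] at him
    exact nonneg_of_mul_nonneg_right him hb
  intro a
  have hcont : Continuous fun b : ℝ => D₀ + 2 * a * D₁ + (a ^ 2 + b ^ 2) * D₂ := by fun_prop
  have hlimit := ge_of_tendsto
    ((hcont.tendsto 0).mono_left (nhdsWithin_le_nhds (s := Set.Ioi 0)))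
    (Filter.eventually_of_mem self_mem_nhdsWithin fun b hb => hupper a b hb)
  linarith

variable {A B C κ φ δ : ℝ}

lemma leadingCoeff_nonneg_of_forall_pos (h : ∀ s, 0 ≤ s → 0 < A + B * s + C * s ^ 2) : 0 ≤ C := by
  have hcont : Continuous fun t : ℝ => A * t ^ 2 + B * t + C := by fun_prop
  have hlim := (hcont.tendsto 0).mono_left (nhdsWithin_le_nhds (s := Set.Ioi 0))
  simp only [ne_eq, OfNat.ofNat_ne_zero, not_false_eq_true, zero_pow, mul_zero, zero_add] at hlim
  refine ge_of_tendsto hlim (Filter.eventually_of_mem self_mem_nhdsWithin fun t ht => ?_)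
  have ht0 : 0 < t := ht
  have heq : A * t ^ 2 + B * t + C = t ^ 2 * (A + B * t⁻¹ + C * t⁻¹ ^ 2) := by
    field_simp
  rw [heq]
  exact (mul_pos (by positivity) (h _ (by positivity))).le

lemma middleCoeff_nonneg_of_forall_pos (h : ∀ s, 0 ≤ s → 0 < A + B * s + C * s ^ 2)
    (hdiscrim : 4 * A * C ≤ B ^ 2) : 0 ≤ B := by
  have hA : 0 < A := by simpa using h 0 le_rfl
  by_contra! hB
  have hpos := h (-2 * A / B) (div_nonneg_of_nonpos (by linarith) hB.le)
  have heq : A + B * (-2 * A / B) + C * (-2 * A / B) ^ 2 = A * (4 * A * C - B ^ 2) / B ^ 2 := by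
    field_simp [hB.ne]
    ring
  rw [heq] at hpos
  exact hpos.not_ge (div_nonpos_of_nonpos_of_nonneg
    (mul_nonpos_of_nonneg_of_nonpos hA.le (by linarith)) (sq_nonneg B))

/-- Here `D₀`, `D₁`, `D₂` are the minors of the coefficients of two quadratics, and the inequality
compares these at `0` and at `-δ`. If `D₁ > 0`, the syzygy turns `D₁² ≤ D₀ D₂` into nonpositivity of
`A + B s + C s²` at `s = -D₀ / D₁`, which therefore lies to the left of `-δ`. -/
lemma barrier_convexity {D₀ D₁ D₂ : ℝ} (hpos : ∀ s, -δ ≤ s → 0 < A + B * s + C * s ^ 2)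
    (hA : 0 ≤ A) (hC : 0 ≤ C) (hδ : 0 ≤ δ) (hκ : 0 ≤ κ) (hAC : 0 ≤ A - κ * C)
    (hBδ : κ * B ≤ δ * (A - κ * C)) (hD₀ : 0 ≤ D₀) (hD₁ : D₁ ^ 2 ≤ D₀ * D₂)
    (hsyz : A * D₂ - B * D₁ + C * D₀ = 0) :
    κ * D₁ * (A - B * δ + C * δ ^ 2) ≤ δ * (D₀ - δ * D₁) * (A - κ * C) := by
  rcases le_or_gt D₁ 0 with hD₁_nonpos | hD₁_pos
  · have hval : 0 < A - B * δ + C * δ ^ 2 := by linarith [hpos (-δ) le_rfl]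
    have hδD : 0 ≤ D₀ - δ * D₁ := by linarith [mul_nonneg hδ (neg_nonneg.mpr hD₁_nonpos)]
    exact (mul_nonpos_of_nonpos_of_nonneg (mul_nonpos_of_nonneg_of_nonpos hκ hD₁_nonpos)
      hval.le).trans (by positivity)
  obtain ⟨r, rfl⟩ : ∃ r, D₀ = r * D₁ := ⟨D₀ / D₁, (div_mul_cancel₀ _ hD₁_pos.ne').symm⟩
  have hroot : A - B * r + C * r ^ 2 ≤ 0 := by
    have hDr : D₁ ≤ r * D₂ := le_of_mul_le_mul_right (by linarith) hD₁_pos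
    refine nonpos_of_mul_nonpos_right ?_ hD₁_pos
    linarith [mul_le_mul_of_nonneg_left hDr hA, congrArg (r * ·) hsyz]
  have hr : δ < r := by
    by_contra! hrδ
    linarith [hpos (-r) (by linarith)]
  have hr2 : δ ^ 2 ≤ r ^ 2 := pow_le_pow_left₀ hδ hr.le 2
  have hval : A - B * δ + C * δ ^ 2 ≤ B * (r - δ) := by
    linarith [mul_le_mul_of_nonneg_left hr2 hC]
  calc κ * D₁ * (A - B * δ + C * δ ^ 2) ≤ κ * D₁ * (B * (r - δ)) := by gcongr
    _ = κ * B * ((r - δ) * D₁) := by ring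
    _ ≤ δ * (A - κ * C) * ((r - δ) * D₁) :=
        mul_le_mul_of_nonneg_right hBδ (mul_nonneg (sub_nonneg.mpr hr.le) hD₁_pos.le)
    _ = δ * (r * D₁ - δ * D₁) * (A - κ * C) := by ring

lemma two_mul_quadCoeff_le (hA : 0 < A) (hB : 0 ≤ B) (hφ : B ≤ φ * A) (hκ : 0 ≤ κ)
    (hκφ : κ * φ ^ 2 ≤ 2) (hdiscrim : 4 * A * C ≤ B ^ 2) : 2 * (κ * C) ≤ A := by
  refine le_of_mul_le_mul_left ?_ (mul_pos two_pos hA)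
  calc 2 * A * (2 * (κ * C)) = κ * (4 * A * C) := by ring
    _ ≤ κ * (φ * A) ^ 2 := by gcongr; exact hdiscrim.trans (pow_le_pow_left₀ hB hφ 2)
    _ = κ * φ ^ 2 * A ^ 2 := by ring
    _ ≤ 2 * A ^ 2 := by gcongr
    _ = 2 * A * A := by ring

/-- On a line, `A + B s + C s²` is the function and `A' + B' s + C' s²` its derivative in another
direction; the operator `1 - κ ∂_X ∂_Y` replaces their values at `0` by `A - κ C` and
`A' - κ C'`. -/
lemma barrier_step {A' B' C' ψ : ℝ}
    (hpos : ∀ s, -(2 * κ * φ) ≤ s → 0 < A + B * s + C * s ^ 2)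
    (hwronskian : WronskianNonneg A B C A' B' C')
    (hdiscrim : 4 * A * C ≤ B ^ 2) (hφ : B ≤ φ * A) (hκ : 0 ≤ κ) (hφ0 : 0 ≤ φ)
    (hκφ : κ * φ ^ 2 ≤ 2)
    (hψ : A' + B' * -(2 * κ * φ) + C' * (-(2 * κ * φ)) ^ 2 ≤
      ψ * (A + B * -(2 * κ * φ) + C * (-(2 * κ * φ)) ^ 2)) :
    0 < A - κ * C ∧ A' - κ * C' ≤ ψ * (A - κ * C) := by
  have hδ : 0 ≤ 2 * κ * φ := by positivity
  have hpos_Ici : ∀ s, 0 ≤ s → 0 < A + B * s + C * s ^ 2 := fun s hs => hpos s (by linarith)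
  have hA : 0 < A := by simpa using hpos_Ici 0 le_rfl
  have hC : 0 ≤ C := leadingCoeff_nonneg_of_forall_pos hpos_Ici
  have hB : 0 ≤ B := middleCoeff_nonneg_of_forall_pos hpos_Ici hdiscrim
  have hκC : 2 * (κ * C) ≤ A := two_mul_quadCoeff_le hA hB hφ hκ hκφ hdiscrim
  have hAC : 0 < A - κ * C := by linarith
  have hBδ : κ * B ≤ 2 * κ * φ * (A - κ * C) := by
    calc κ * B ≤ κ * (φ * A) := by gcongr
      _ = κ * φ * A := by ring
      _ ≤ κ * φ * (2 * (A - κ * C)) := by gcongr; linarith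
      _ = 2 * κ * φ * (A - κ * C) := by ring
  have hval := hpos _ le_rfl
  obtain ⟨hD₀, hD₁⟩ := hwronskian.minors
  have hconv := barrier_convexity hpos hA.le hC hδ hκ hAC.le hBδ hD₀ hD₁ (by ring)
  generalize 2 * κ * φ = δ at *
  have hratio : (A' - κ * C') * (A + B * -δ + C * (-δ) ^ 2) ≤
      (A' + B' * -δ + C' * (-δ) ^ 2) * (A - κ * C) := by
    refine le_of_mul_le_mul_left ?_ hA
    linarith
  refine ⟨hAC, le_of_mul_le_mul_right ?_ hval⟩
  calc (A' - κ * C') * (A + B * -δ + C * (-δ) ^ 2)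
      ≤ (A' + B' * -δ + C' * (-δ) ^ 2) * (A - κ * C) := hratio
    _ ≤ ψ * (A + B * -δ + C * (-δ) ^ 2) * (A - κ * C) := by gcongr
    _ = ψ * (A - κ * C) * (A + B * -δ + C * (-δ) ^ 2) := by ring

end Quadratics

section Stability

variable {ι : Type*} [Fintype ι]

/-- The imaginary part `(X - Xᴴ) / 2i` of `X` is positive definite, stated in terms of the quadratic
form of `X`. -/
def ImPosDef (X : Matrix ι ι ℂ) : Prop :=
  ∀ v : ι → ℂ, v ≠ 0 → 0 < (star v ⬝ᵥ X *ᵥ v).im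

lemma star_dotProduct_rankOne_mulVec (u : ι → ℝ) (v : ι → ℂ) :
    star v ⬝ᵥ rankOne ℂ u *ᵥ v = Complex.normSq (∑ i, (u i : ℂ) * v i) := by
  rw [rankOne, vecMulVec_mulVec, dotProduct_smul, Complex.normSq_eq_conj_mul_self, mul_comm]
  simp [dotProduct, mul_comm]

lemma im_star_dotProduct_map_mulVec {H : Matrix ι ι ℝ} (hH : H.IsSymm) (v : ι → ℂ) :
    (star v ⬝ᵥ H.map (algebraMap ℝ ℂ) *ᵥ v).im = 0 := by
  have hHc : (H.map (algebraMap ℝ ℂ)).IsHermitian := by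
    ext i j
    simp [hH.apply]
  simpa using hHc.im_star_dotProduct_mulVec_self v

lemma star_dotProduct_self_eq_sum_normSq (v : ι → ℂ) :
    star v ⬝ᵥ v = ((∑ i, Complex.normSq (v i) : ℝ) : ℂ) := by
  simp [dotProduct, Complex.normSq_eq_conj_mul_self]

namespace ImPosDef

lemma add_smul_rankOne {X : Matrix ι ι ℂ} (hX : ImPosDef X) (u : ι → ℝ) {z : ℂ} (hz : 0 ≤ z.im) :
    ImPosDef (X + z • rankOne ℂ u) := by
  intro v hv
  rw [add_mulVec, smul_mulVec, dotProduct_add, dotProduct_smul, star_dotProduct_rankOne_mulVec,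
    Complex.add_im, smul_eq_mul, Complex.im_mul_ofReal]
  exact add_pos_of_pos_of_nonneg (hX v hv) (mul_nonneg hz (Complex.normSq_nonneg _))

variable [DecidableEq ι]

lemma det_ne_zero {X : Matrix ι ι ℂ} (hX : ImPosDef X) : X.det ≠ 0 := by
  intro hdet
  obtain ⟨v, hv, hXv⟩ := exists_mulVec_eq_zero_iff.mpr hdet
  simpa [hXv] using hX v hv

lemma map_add_smul_one {H : Matrix ι ι ℝ} (hH : H.IsSymm) {z : ℂ} (hz : 0 < z.im) :
    ImPosDef (H.map (algebraMap ℝ ℂ) + z • (1 : Matrix ι ι ℂ)) := by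
  intro v hv
  obtain ⟨i, hi⟩ := Function.ne_iff.mp hv
  rw [add_mulVec, dotProduct_add, Complex.add_im, im_star_dotProduct_map_mulVec hH, zero_add,
    smul_mulVec, one_mulVec, dotProduct_smul, star_dotProduct_self_eq_sum_normSq, smul_eq_mul,
    Complex.im_mul_ofReal]
  exact mul_pos hz (Finset.sum_pos' (fun j _ => Complex.normSq_nonneg _)
    ⟨i, Finset.mem_univ _, Complex.normSq_pos.mpr hi⟩)

end ImPosDef

variable [DecidableEq ι] {L : List (ℝ × (ι → ℝ))}

/-- Prepending `(κ, u)` to the list preserves stability because, as a function of `z`, the value at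
`(X + z u uᵀ, Y + z u uᵀ)` is a quadratic without zeros in the closed upper half-plane. -/
theorem mixedDet_ne_zero (hL : ∀ p ∈ L, 0 ≤ p.1) {X Y : Matrix ι ι ℂ} (hX : ImPosDef X)
    (hY : ImPosDef Y) : mixedDet ℂ L X Y ≠ 0 := by
  induction L generalizing X Y with
  | nil => exact mul_ne_zero hX.det_ne_zero hY.det_ne_zero
  | cons p L ih =>
    obtain ⟨hp, hL⟩ := List.forall_mem_cons.mp hL
    refine sub_mul_ne_zero_of_stable (b := diagDiff (rankOne ℂ p.2) (mixedDet ℂ L) X Y)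
      (fun z hz => ?_) hp
    rw [← (isBiaffineAlong_mixedDet L p.2).add_smul_add_smul]
    exact ih hL (hX.add_smul_rankOne _ hz) (hY.add_smul_rankOne _ hz)

lemma im_diagDiff_mul_conj_nonpos (hL : ∀ p ∈ L, 0 ≤ p.1) {X : Matrix ι ι ℂ} (hX : ImPosDef X)
    (w : ι → ℝ) :
    (diagDiff (rankOne ℂ w) (mixedDet ℂ L) X X * (starRingEnd ℂ) (mixedDet ℂ L X X)).im ≤ 0 := by
  refine im_mul_conj_nonpos_of_stable (c := mixedDiff (rankOne ℂ w) (mixedDet ℂ L) X X)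
    fun z hz => ?_
  rw [← (isBiaffineAlong_mixedDet L w).add_smul_add_smul]
  exact mixedDet_ne_zero hL (hX.add_smul_rankOne w hz) (hX.add_smul_rankOne w hz)

lemma continuous_mixedDet {α : Type*} [TopologicalSpace α] (L : List (ℝ × (ι → ℝ)))
    {f g : α → Matrix ι ι ℂ} (hf : Continuous f) (hg : Continuous g) :
    Continuous fun a => mixedDet ℂ L (f a) (g a) := by
  induction L generalizing f g with
  | nil => exact hf.matrix_det.mul hg.matrix_det
  | cons p L ih =>
    have hfp : Continuous fun a => f a + rankOne ℂ p.2 := hf.add continuous_const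
    have hgp : Continuous fun a => g a + rankOne ℂ p.2 := hg.add continuous_const
    exact (ih hf hg).sub (continuous_const.mul
      ((((ih hfp hgp).sub (ih hfp hg)).sub (ih hf hgp)).add (ih hf hg)))

/-- Real symmetric matrices are boundary points of the region `ImPosDef`, so that the inequality
passes to them in the limit. -/
lemma im_diagDiff_mul_conj_nonpos_of_isSymm (hL : ∀ p ∈ L, 0 ≤ p.1) {H : Matrix ι ι ℝ}
    (hH : H.IsSymm) (u w : ι → ℝ) {s : ℂ} (hs : 0 ≤ s.im) {X : Matrix ι ι ℂ}
    (hX : X = H.map (algebraMap ℝ ℂ) + s • rankOne ℂ u) :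
    (diagDiff (rankOne ℂ w) (mixedDet ℂ L) X X * (starRingEnd ℂ) (mixedDet ℂ L X X)).im ≤ 0 := by
  let S : ℝ → Matrix ι ι ℂ := fun η =>
    H.map (algebraMap ℝ ℂ) + (η * Complex.I) • (1 : Matrix ι ι ℂ) + s • rankOne ℂ u
  have hS0 : S 0 = X := by simp [S, hX]
  have hS : Continuous S := by fun_prop
  have hSw : Continuous fun η => S η + rankOne ℂ w := hS.add continuous_const
  have hcont : Continuous fun η => (diagDiff (rankOne ℂ w) (mixedDet ℂ L) (S η) (S η) *
      (starRingEnd ℂ) (mixedDet ℂ L (S η) (S η))).im :=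
    Complex.continuous_im.comp ((((continuous_mixedDet L hSw hS).add
      (continuous_mixedDet L hS hSw)).sub (continuous_const.mul (continuous_mixedDet L hS hS))).mul
      (Complex.continuous_conj.comp (continuous_mixedDet L hS hS)))
  have hpos (η : ℝ) (hη : 0 < η) : ImPosDef (S η) :=
    (ImPosDef.map_add_smul_one hH (by simpa using hη)).add_smul_rankOne u hs
  rw [← hS0]
  exact le_of_tendsto ((hcont.tendsto 0).mono_left (nhdsWithin_le_nhds (s := Set.Ioi 0)))
    (Filter.eventually_of_mem self_mem_nhdsWithin fun η hη =>
      im_diagDiff_mul_conj_nonpos hL (hpos η hη) w)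

lemma wronskianNonneg_mixedDet (hL : ∀ p ∈ L, 0 ≤ p.1) {H : Matrix ι ι ℝ} (hH : H.IsSymm)
    (u w : ι → ℝ) :
    WronskianNonneg (mixedDet ℝ L H H) (diagDiff (rankOne ℝ u) (mixedDet ℝ L) H H)
      (mixedDiff (rankOne ℝ u) (mixedDet ℝ L) H H)
      (diagDiff (rankOne ℝ w) (mixedDet ℝ L) H H)
      (diagDiff (rankOne ℝ u) (diagDiff (rankOne ℝ w) (mixedDet ℝ L)) H H)
      (mixedDiff (rankOne ℝ u) (diagDiff (rankOne ℝ w) (mixedDet ℝ L)) H H) := by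
  let φ : ℝ →+* ℂ := algebraMap ℝ ℂ
  let ψ : Matrix ι ι ℝ →+ Matrix ι ι ℂ := φ.toAddMonoidHom.mapMatrix
  have hmap (X Y : Matrix ι ι ℝ) : φ (mixedDet ℝ L X Y) = mixedDet ℂ L (ψ X) (ψ Y) :=
    map_mixedDet (Algebra.ofId ℝ ℂ) L X Y
  have hψ (x : ι → ℝ) : ψ (rankOne ℝ x) = rankOne ℂ x := map_rankOne (Algebra.ofId ℝ ℂ) x
  have hdiag := map_diagDiff hmap (rankOne ℝ w)
  refine wronskianNonneg_of_im_mul_conj_nonpos fun s hs => ?_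
  have him := im_diagDiff_mul_conj_nonpos_of_isSymm hL hH u w hs.le
    (X := ψ H + s • rankOne ℂ u) rfl
  have hu := isBiaffineAlong_mixedDet (K := ℂ) L u
  rw [hu.add_smul_add_smul, (hu.diagDiff _).add_smul_add_smul] at him
  rwa [← hψ, ← hψ, ← hmap, ← map_diagDiff hmap, ← map_mixedDiff hmap,
    ← map_diagDiff hmap, ← map_diagDiff hdiag, ← map_mixedDiff hdiag] at him

/-- The quadratic in `z` obtained by shifting both arguments by `z u uᵀ` is real-rooted; this is the
case `w = u` of the Wronskian inequality. -/
lemma discrim_mixedDet (hL : ∀ p ∈ L, 0 ≤ p.1) {H : Matrix ι ι ℝ} (hH : H.IsSymm) (u : ι → ℝ) :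
    4 * mixedDet ℝ L H H * mixedDiff (rankOne ℝ u) (mixedDet ℝ L) H H ≤
      diagDiff (rankOne ℝ u) (mixedDet ℝ L) H H ^ 2 := by
  have hu := isBiaffineAlong_mixedDet (K := ℝ) L u
  have hminors := (wronskianNonneg_mixedDet hL hH u u).minors.2
  rw [hu.diagDiff_diagDiff_self, hu.mixedDiff_diagDiff_self] at hminors
  generalize mixedDiff (rankOne ℝ u) (mixedDet ℝ L) H H = C at *
  rcases eq_or_ne C 0 with rfl | hC
  · rw [mul_zero]
    exact sq_nonneg _
  · refine le_of_mul_le_mul_left ?_ (sq_pos_of_ne_zero hC)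
    linarith

end Stability

section Barrier

lemma rankOne_real {ι : Type*} (u : ι → ℝ) : rankOne ℝ u = vecMulVec u u := rfl

lemma isSymm_rankOne {ι : Type*} (u : ι → ℝ) : (rankOne ℝ u).IsSymm :=
  transpose_vecMulVec _ _

lemma isSymm_sum_map_smul_rankOne {κ ι : Type*} (l : List κ) (a : κ → ℝ) (u : κ → ι → ℝ) :
    (l.map fun i => a i • rankOne ℝ (u i)).sum.IsSymm := by
  induction l with
  | nil => exact isSymm_zero
  | cons i l ih =>
    rw [List.map_cons, List.sum_cons]
    exact ((isSymm_rankOne (u i)).smul _).add ih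

lemma posSemidef_rankOne {ι : Type*} (u : ι → ℝ) : (rankOne ℝ u).PosSemidef := by
  refine ⟨isHermitian_iff_isSymm.mpr (isSymm_rankOne u), fun y => ?_⟩
  have hsq : (y.sum fun i yi => y.sum fun j yj => star yi * rankOne ℝ u i j * yj) =
      (y.sum fun i yi => yi * u i) * y.sum fun j yj => u j * yj := by
    simp only [Finsupp.sum, Finset.sum_mul_sum, rankOne_real, vecMulVec_apply, star_trivial,
      mul_assoc]
  rw [hsq]
  simpa only [mul_comm] using mul_self_nonneg (y.sum fun i yi => yi * u i)

lemma posSemidef_add_smul_rankOne_sub {ι : Type*} {δ s : ℝ} {H T : Matrix ι ι ℝ} {u : ι → ℝ}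
    (h : (H - (δ • rankOne ℝ u + T)).PosSemidef) (hs : -δ ≤ s) :
    (H + s • rankOne ℝ u - T).PosSemidef := by
  have hadd := h.add ((posSemidef_rankOne u).smul (neg_le_iff_add_nonneg'.mp hs))
  rwa [add_smul, ← sub_sub, sub_right_comm, ← add_assoc, sub_add_cancel, sub_add_eq_add_sub] at hadd

variable {ι : Type*} [Fintype ι]

lemma dotProduct_self_nonneg (u : ι → ℝ) : 0 ≤ u ⬝ᵥ u :=
  dotProduct_star_self_nonneg u

/-- The total shift spent by the barrier argument: the pair `(κ, u)` costs `2 κ φ u uᵀ`, where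
`φ = 2 |u|² / lam` is the bound on the logarithmic derivative of `mixedDet` along `u uᵀ`. -/
noncomputable def totalShift (lam : ℝ) (L : List (ℝ × (ι → ℝ))) : Matrix ι ι ℝ :=
  (L.map fun p => (2 * p.1 * (2 * (p.2 ⬝ᵥ p.2) / lam)) • rankOne ℝ p.2).sum

lemma totalShift_cons (lam κ : ℝ) (u : ι → ℝ) (L : List (ℝ × (ι → ℝ))) :
    totalShift lam ((κ, u) :: L) =
      (2 * κ * (2 * (u ⬝ᵥ u) / lam)) • rankOne ℝ u + totalShift lam L := by
  rw [totalShift, List.map_cons, List.sum_cons, totalShift]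

lemma isSymm_totalShift (lam : ℝ) (L : List (ℝ × (ι → ℝ))) : (totalShift lam L).IsSymm :=
  isSymm_sum_map_smul_rankOne L _ _

variable [DecidableEq ι] {H : Matrix ι ι ℝ} {lam : ℝ}

lemma dotProduct_inv_mulVec_le (hlam : 0 < lam)
    (hH : (H - lam • (1 : Matrix ι ι ℝ)).PosSemidef) (hdet : IsUnit H.det) (w : ι → ℝ) :
    w ⬝ᵥ H⁻¹ *ᵥ w ≤ (w ⬝ᵥ w) / lam := by
  set y := H⁻¹ *ᵥ w
  have hHy : H *ᵥ y = w := by rw [mulVec_mulVec, mul_nonsing_inv _ hdet, one_mulVec]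
  have hyy : lam * (y ⬝ᵥ y) ≤ w ⬝ᵥ y := by
    have hquad := hH.dotProduct_mulVec_nonneg y
    rw [sub_mulVec, hHy, smul_mulVec, one_mulVec, star_trivial, dotProduct_sub, dotProduct_smul,
      smul_eq_mul, dotProduct_comm y w] at hquad
    linarith
  have hsq : 0 ≤ w ⬝ᵥ w - 2 * lam * (w ⬝ᵥ y) + lam * (lam * (y ⬝ᵥ y)) := by
    have hnonneg := dotProduct_self_nonneg (w - lam • y)
    simp only [sub_dotProduct, dotProduct_sub, smul_dotProduct, dotProduct_smul, smul_eq_mul,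
      dotProduct_comm y w] at hnonneg
    linarith
  rw [le_div_iff₀ hlam]
  linarith [mul_le_mul_of_nonneg_left hyy hlam.le]

lemma det_pos_of_posSemidef_sub_smul_one (hlam : 0 < lam)
    (hH : (H - lam • (1 : Matrix ι ι ℝ)).PosSemidef) : 0 < H.det := by
  have hPD := (PosDef.one.smul hlam : (lam • (1 : Matrix ι ι ℝ)).PosDef).add_posSemidef hH
  rw [add_sub_cancel] at hPD
  exact hPD.det_pos

lemma det_add_rankOne_le (hlam : 0 < lam)
    (hH : (H - lam • (1 : Matrix ι ι ℝ)).PosSemidef) (w : ι → ℝ) :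
    (H + rankOne ℝ w).det ≤ H.det * (1 + (w ⬝ᵥ w) / lam) := by
  have hdet := det_pos_of_posSemidef_sub_smul_one hlam hH
  have hformula : (H + rankOne ℝ w).det = H.det * (1 + w ⬝ᵥ H⁻¹ *ᵥ w) := by
    rw [rankOne_real, vecMulVec_eq Unit, det_add_replicateCol_mul_replicateRow hdet.ne'.isUnit,
      det_unique (n := Unit), dotProduct_mulVec]
    rfl
  rw [hformula]
  gcongr
  exact dotProduct_inv_mulVec_le hlam hH hdet.ne'.isUnit w

lemma diagDiff_det_mul_det_le (hlam : 0 < lam)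
    (hH : (H - lam • (1 : Matrix ι ι ℝ)).PosSemidef) (w : ι → ℝ) :
    diagDiff (rankOne ℝ w) (fun X Y => X.det * Y.det) H H ≤
      (2 * (w ⬝ᵥ w) / lam) * (H.det * H.det) := by
  have hdet := det_pos_of_posSemidef_sub_smul_one hlam hH
  calc diagDiff (rankOne ℝ w) (fun X Y => X.det * Y.det) H H
      = 2 * (H.det * ((H + rankOne ℝ w).det - H.det)) := by
        rw [diagDiff]
        ring
    _ ≤ 2 * (H.det * (H.det * (1 + (w ⬝ᵥ w) / lam) - H.det)) := by
        gcongr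
        exact det_add_rankOne_le hlam hH w
    _ = (2 * (w ⬝ᵥ w) / lam) * (H.det * H.det) := by ring

theorem mixedDet_pos_and_diagDiff_le (hlam : 0 < lam) {L : List (ℝ × (ι → ℝ))}
    (hL : ∀ p ∈ L, 0 ≤ p.1 ∧ p.1 * (2 * (p.2 ⬝ᵥ p.2) / lam) ^ 2 ≤ 2)
    (hH : (H - (totalShift lam L + lam • (1 : Matrix ι ι ℝ))).PosSemidef) :
    0 < mixedDet ℝ L H H ∧
      ∀ w, diagDiff (rankOne ℝ w) (mixedDet ℝ L) H H ≤
        (2 * (w ⬝ᵥ w) / lam) * mixedDet ℝ L H H := by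
  induction L generalizing H with
  | nil =>
    rw [totalShift, List.map_nil, List.sum_nil, zero_add] at hH
    have hdet := det_pos_of_posSemidef_sub_smul_one hlam hH
    exact ⟨mul_pos hdet hdet, diagDiff_det_mul_det_le hlam hH⟩
  | cons p L ih =>
    obtain ⟨κ, u⟩ := p
    obtain ⟨⟨hκ, hκφ⟩, hL⟩ := List.forall_mem_cons.mp hL
    have hφ : 0 ≤ 2 * (u ⬝ᵥ u) / lam := by
      have := dotProduct_self_nonneg u
      positivity
    rw [totalShift_cons, add_assoc] at hH
    have hshift (s : ℝ) (hs : -(2 * κ * (2 * (u ⬝ᵥ u) / lam)) ≤ s) :=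
      ih hL (posSemidef_add_smul_rankOne_sub hH hs)
    have hlogderiv := (hshift 0 (neg_nonpos.mpr (by positivity))).2 u
    rw [zero_smul, add_zero] at hlogderiv
    have hL0 : ∀ q ∈ L, 0 ≤ q.1 := fun q hq => (hL q hq).1
    have hsymm : H.IsSymm := by
      have hshifts := ((isSymm_rankOne u).smul (2 * κ * (2 * (u ⬝ᵥ u) / lam))).add
        ((isSymm_totalShift lam L).add (isSymm_one.smul lam))
      simpa only [sub_add_cancel] using (isHermitian_iff_isSymm.mp hH.isHermitian).add hshifts
    have hu := isBiaffineAlong_mixedDet (K := ℝ) L u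
    have hψ (w : ι → ℝ) := (hshift _ le_rfl).2 w
    simp only [hu.add_smul_add_smul, (hu.diagDiff _).add_smul_add_smul] at hψ
    have hstep (w : ι → ℝ) := barrier_step
      (fun s hs => hu.add_smul_add_smul H H s ▸ (hshift s hs).1)
      (wronskianNonneg_mixedDet hL0 hsymm u w) (discrim_mixedDet hL0 hsymm u)
      hlogderiv hκ hφ hκφ (hψ w)
    refine ⟨(hstep 0).1, fun w => ?_⟩
    rw [diagDiff_mixedDet_cons]
    exact (hstep w).2

end Barrier

section RealRooted

open Polynomial

lemma splits_of_forall_aeval_eq_zero_im_eq_zero {f : ℝ[X]}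
    (hf : ∀ z : ℂ, aeval z f = 0 → z.im = 0) : f.Splits := by
  refine (IsAlgClosed.splits (f.map (algebraMap ℝ ℂ))).of_splits_map _ fun z hz => ?_
  exact ⟨z.re, Complex.ext rfl (by simpa using (hf z (mem_aroots'.mp hz).2).symm)⟩

lemma coeff_prod_X_add_C_pos {s : Multiset ℝ} (hs : ∀ r ∈ s, 0 < r) {k : ℕ}
    (hk : k ≤ Multiset.card s) : 0 < (s.map fun r => X + C r).prod.coeff k := by
  rw [Multiset.prod_X_add_C_coeff _ hk, Multiset.esymm]
  refine Multiset.sum_induction_nonempty (0 < ·) (fun a b => add_pos) ?_ fun a ha => ?_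
  · rw [Multiset.empty_eq_zero, Ne, ← Multiset.card_eq_zero, Multiset.card_map,
      Multiset.card_powersetCard]
    exact (Nat.choose_pos (Nat.sub_le _ _)).ne'
  · obtain ⟨t, ht, rfl⟩ := Multiset.mem_map.mp ha
    exact Multiset.prod_induction (0 < ·) t (fun a b => mul_pos) one_pos fun r hr =>
      hs r (Multiset.mem_of_le (Multiset.mem_powersetCard.mp ht).1 hr)

lemma coeff_taylor_pos {f : ℝ[X]} {d : ℕ} (hf : IsMonicOfDegree f d) (hsplits : f.Splits)
    {β : ℝ} (hroots : ∀ r ∈ f.roots, r < β) {k : ℕ} (hk : k ≤ d) :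
    0 < (taylor β f).coeff k := by
  have htaylor : taylor β f = ((f.roots.map fun r => β - r).map fun r => X + C r).prod := by
    nth_rewrite 1 [hsplits.eq_prod_roots_of_monic hf.monic]
    rw [taylor_apply, multiset_prod_comp, Multiset.map_map, Multiset.map_map]
    refine congrArg _ (Multiset.map_congr rfl fun r _ => ?_)
    simp only [Function.comp_apply, sub_comp, X_comp, C_comp, C_sub]
    ring
  rw [htaylor]
  refine coeff_prod_X_add_C_pos (fun t ht => ?_) ?_
  · obtain ⟨r, hr, rfl⟩ := Multiset.mem_map.mp ht
    exact sub_pos.mpr (hroots r hr)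
  · rwa [Multiset.card_map, ← hsplits.natDegree_eq_card_roots, hf.natDegree_eq]

lemma roots_lt_of_coeff_taylor_nonneg {f : ℝ[X]} {β : ℝ} (hf : 0 < f.eval β)
    (hcoeff : ∀ k, 0 ≤ (taylor β f).coeff k) : ∀ r ∈ f.roots, r < β := by
  intro r hr
  by_contra! hβr
  refine (isRoot_of_mem_roots hr).not_gt ?_
  rw [← sub_add_cancel r β, ← taylor_eval, eval_eq_sum_range]
  refine Finset.sum_pos' (fun k _ => mul_nonneg (hcoeff k) (pow_nonneg (sub_nonneg.mpr hβr) k))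
    ⟨0, Finset.mem_range.mpr (Nat.succ_pos _), ?_⟩
  rwa [pow_zero, mul_one, taylor_coeff_zero]

lemma forall_pos_of_nonneg_imp_pos {κ : Type*} {s : Finset κ} {g : κ → ℝ → ℝ}
    (hg : ∀ k ∈ s, Continuous (g k)) {a b : ℝ} (hab : a ≤ b) (ha : ∀ k ∈ s, 0 < g k a)
    (h : ∀ t ∈ Set.Icc a b, (∀ k ∈ s, 0 ≤ g k t) → ∀ k ∈ s, 0 < g k t) :
    ∀ k ∈ s, 0 < g k b := by
  rcases s.eq_empty_or_nonempty with rfl | hs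
  · simp
  have hcont : Continuous fun t => s.inf' hs fun k => g k t :=
    Continuous.finset_inf'_apply hs hg
  rw [← Finset.lt_inf'_iff hs]
  by_contra! hb
  obtain ⟨t, ht, hzero⟩ := intermediate_value_Icc' hab hcont.continuousOn
    ⟨hb, ((Finset.lt_inf'_iff hs).mpr ha).le⟩
  have hpos := h t ht ((Finset.le_inf'_iff hs _).mp hzero.ge)
  exact ((Finset.lt_inf'_iff hs).mpr hpos).ne' hzero

/-- Having all roots below `β` amounts to positivity of the Taylor coefficients at `β`; along the
segment this is an open condition, and it cannot be lost in the limit as the value at `β` stays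
positive. -/
lemma roots_lt_of_segment {f g : ℝ[X]} {d : ℕ} {β : ℝ}
    (hseg : ∀ h ∈ segment ℝ f g, IsMonicOfDegree h d ∧ h.Splits)
    (hf : ∀ r ∈ f.roots, r < β) (hg : 0 < g.eval β) : ∀ r ∈ g.roots, r < β := by
  let h (t : ℝ) : ℝ[X] := (1 - t) • f + t • g
  have hmem (t : ℝ) (ht : t ∈ Set.Icc 0 1) : h t ∈ segment ℝ f g :=
    ⟨1 - t, t, sub_nonneg.mpr ht.2, ht.1, sub_add_cancel 1 t, rfl⟩
  have hpos (t : ℝ) (ht : t ∈ Set.Icc 0 1) (hroots : ∀ r ∈ (h t).roots, r < β) :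
      ∀ k ∈ Finset.range (d + 1), 0 < (taylor β (h t)).coeff k := fun k hk =>
    coeff_taylor_pos (hseg _ (hmem t ht)).1 (hseg _ (hmem t ht)).2 hroots
      (Finset.mem_range_succ_iff.mp hk)
  have hroots (t : ℝ) (ht : t ∈ Set.Icc 0 1) (heval : 0 < (h t).eval β)
      (hnonneg : ∀ k ∈ Finset.range (d + 1), 0 ≤ (taylor β (h t)).coeff k) :
      ∀ r ∈ (h t).roots, r < β := by
    refine roots_lt_of_coeff_taylor_nonneg heval fun k => ?_
    rcases le_or_gt k d with hk | hk
    · exact hnonneg k (Finset.mem_range_succ_iff.mpr hk)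
    · refine (coeff_eq_zero_of_natDegree_lt ?_).ge
      rwa [natDegree_taylor, (hseg _ (hmem t ht)).1.natDegree_eq]
  have hzero := hpos 0 ⟨le_rfl, zero_le_one⟩ (by simpa [h] using hf)
  have heval (t : ℝ) (ht : t ∈ Set.Icc 0 1) : 0 < (h t).eval β := by
    have hf₀ : 0 < f.eval β := by simpa [h] using hzero 0 (by simp)
    simpa [h] using (convex_Ioi (0 : ℝ)) hf₀ hg (sub_nonneg.mpr ht.2) ht.1 (sub_add_cancel 1 t)
  have hcont (k : ℕ) : Continuous fun t => (taylor β (h t)).coeff k := by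
    simp only [h, map_add, map_smul, coeff_add, coeff_smul]
    fun_prop
  have hone := forall_pos_of_nonneg_imp_pos (fun k _ => hcont k) zero_le_one hzero
    fun t ht hnonneg => hpos t ht (hroots t ht (heval t ht) hnonneg)
  simpa [h] using hroots 1 ⟨zero_le_one, le_rfl⟩ (by simpa [h] using hg) fun k hk => (hone k hk).le

/-- If `f₀` and `f₁` were both nonpositive at `β`, then so would be `f`. -/
lemma roots_lt_or_roots_lt_of_mem_segment {f f₀ f₁ : ℝ[X]} {d : ℕ} {β : ℝ}
    (hseg : ∀ h ∈ segment ℝ f₀ f₁, IsMonicOfDegree h d ∧ h.Splits) (hf : f ∈ segment ℝ f₀ f₁)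
    (hroots : ∀ r ∈ f.roots, r < β) : (∀ r ∈ f₀.roots, r < β) ∨ ∀ r ∈ f₁.roots, r < β := by
  have hβ : 0 < f.eval β := by
    rw [← taylor_coeff_zero]
    exact coeff_taylor_pos (hseg f hf).1 (hseg f hf).2 hroots (Nat.zero_le d)
  have hsub {g : ℝ[X]} (hg : g ∈ segment ℝ f₀ f₁) (hgβ : 0 < g.eval β) : ∀ r ∈ g.roots, r < β :=
    roots_lt_of_segment (fun h hh => hseg h ((convex_segment f₀ f₁).segment_subset hf hg hh))
      hroots hgβ
  obtain ⟨a, b, ha, hb, -, rfl⟩ := hf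
  rw [eval_add, eval_smul, eval_smul, smul_eq_mul, smul_eq_mul] at hβ
  rcases lt_or_ge 0 (f₀.eval β) with h₀ | h₀
  · exact Or.inl (hsub (left_mem_segment ℝ f₀ f₁) h₀)
  · refine Or.inr (hsub (right_mem_segment ℝ f₀ f₁) (pos_of_mul_pos_right ?_ hb))
    linarith [mul_nonpos_of_nonneg_of_nonpos ha h₀]

end RealRooted

section MixedCharpoly

open Polynomial

variable {ι : Type*} [Fintype ι] [DecidableEq ι] {L : List (ℝ × (ι → ℝ))} {M N : Matrix ι ι ℝ}

/-- The polynomial `mixedDet L (t I - M) (t I - N)` in `t`. With `N = -M` and the variances of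
independent Bernoulli variables `ξ_i` in the list, it is the expectation of the product of the
characteristic polynomials of `M'` and `-M'`, where `M' = M + ∑ i, (ξ_i - E ξ_i) u_i u_iᵀ`. -/
noncomputable def mixedCharpoly (L : List (ℝ × (ι → ℝ))) (M N : Matrix ι ι ℝ) : ℝ[X] :=
  mixedDet ℝ[X] L (charmatrix M) (charmatrix N)

lemma mixedCharpoly_nil (M N : Matrix ι ι ℝ) : mixedCharpoly [] M N = M.charpoly * N.charpoly :=
  rfl

lemma charmatrix_sub_smul_rankOne (M : Matrix ι ι ℝ) (u : ι → ℝ) (a : ℝ) :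
    charmatrix (M - a • rankOne ℝ u) = charmatrix M + C a • rankOne ℝ[X] u := by
  ext i j : 1
  simp only [charmatrix_apply, rankOne, vecMulVec_apply, Matrix.add_apply, Matrix.sub_apply,
    Matrix.smul_apply, algebraMap_eq, Algebra.algebraMap_self, RingHom.id_apply, smul_eq_mul,
    C_sub, C_mul]
  ring

lemma charmatrix_sub_rankOne (M : Matrix ι ι ℝ) (u : ι → ℝ) :
    charmatrix (M - rankOne ℝ u) = charmatrix M + rankOne ℝ[X] u := by
  simpa only [one_smul, C_1] using charmatrix_sub_smul_rankOne M u 1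

lemma isMonicOfDegree_mixedCharpoly (L : List (ℝ × (ι → ℝ))) (M N : Matrix ι ι ℝ) :
    IsMonicOfDegree (mixedCharpoly L M N) (2 * Fintype.card ι) := by
  induction L generalizing M N with
  | nil =>
    rw [mixedCharpoly_nil, two_mul]
    exact IsMonicOfDegree.mul ⟨M.charpoly_natDegree_eq_dim, M.charpoly_monic⟩
      ⟨N.charpoly_natDegree_eq_dim, N.charpoly_monic⟩
  | cons p L ih =>
    simp only [isMonicOfDegree_iff] at ih ⊢
    simp only [mixedCharpoly, mixedDet, mixedDiff, ← charmatrix_sub_rankOne, algebraMap_eq] at ih ⊢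
    constructor
    · refine (natDegree_sub_le _ _).trans (max_le (ih _ _).1 ((natDegree_C_mul_le _ _).trans ?_))
      refine natDegree_add_le_of_degree_le ?_ (ih _ _).1
      refine (natDegree_sub_le _ _).trans (max_le ?_ (ih _ _).1)
      exact (natDegree_sub_le _ _).trans (max_le (ih _ _).1 (ih _ _).1)
    · simp [ih]

lemma map_aeval_charmatrix {K : Type*} [CommRing K] [Algebra ℝ K] (M : Matrix ι ι ℝ) (z : K) :
    (charmatrix M).map (aeval z : ℝ[X] →ₐ[ℝ] K) =
      (-M).map (algebraMap ℝ K) + z • (1 : Matrix ι ι K) := by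
  ext i j
  rcases eq_or_ne i j with rfl | hij
  · simp [charmatrix_apply_eq, add_comm, sub_eq_add_neg]
  · simp [hij]

lemma aeval_mixedCharpoly {K : Type*} [CommRing K] [Algebra ℝ K] (L : List (ℝ × (ι → ℝ)))
    (M N : Matrix ι ι ℝ) (z : K) :
    aeval z (mixedCharpoly L M N) =
      mixedDet K L ((-M).map (algebraMap ℝ K) + z • (1 : Matrix ι ι K))
        ((-N).map (algebraMap ℝ K) + z • (1 : Matrix ι ι K)) := by
  rw [mixedCharpoly, map_mixedDet, map_aeval_charmatrix, map_aeval_charmatrix]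

lemma splits_mixedCharpoly (hL : ∀ p ∈ L, 0 ≤ p.1) (hM : M.IsSymm) (hN : N.IsSymm) :
    (mixedCharpoly L M N).Splits := by
  have hne (z : ℂ) (hz : 0 < z.im) : aeval z (mixedCharpoly L M N) ≠ 0 := by
    rw [aeval_mixedCharpoly]
    exact mixedDet_ne_zero hL (ImPosDef.map_add_smul_one hM.neg hz)
      (ImPosDef.map_add_smul_one hN.neg hz)
  refine splits_of_forall_aeval_eq_zero_im_eq_zero fun z hz => ?_
  rcases lt_trichotomy z.im 0 with him | him | him
  · refine absurd ?_ (hne ((starRingEnd ℂ) z) (by simpa using him))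
    rw [aeval_conj, hz, map_zero]
  · exact him
  · exact absurd hz (hne z him)

lemma mixedCharpoly_expectation (L : List (ℝ × (ι → ℝ))) (u : ι → ℝ) (M N : Matrix ι ι ℝ)
    (θ : ℝ) :
    (1 - θ) • mixedCharpoly L M N +
        θ • mixedCharpoly L (M + rankOne ℝ u) (N - rankOne ℝ u) =
      mixedCharpoly ((θ * (1 - θ), u) :: L) (M + θ • rankOne ℝ u) (N - θ • rankOne ℝ u) := by
  have hadd (a : ℝ) :
      charmatrix (M + a • rankOne ℝ u) = charmatrix M - C a • rankOne ℝ[X] u := by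
    rw [eq_sub_iff_add_eq, ← charmatrix_sub_smul_rankOne, add_sub_cancel_right]
  have hadd_one := hadd 1
  rw [one_smul, C_1, one_smul] at hadd_one
  have hexp := (isBiaffineAlong_mixedDet (K := ℝ[X]) L u).expectation (charmatrix M) (charmatrix N)
    (C θ)
  simpa only [mixedCharpoly, mixedDet, hadd, hadd_one, charmatrix_sub_rankOne,
    charmatrix_sub_smul_rankOne, algebraMap_eq, smul_eq_C_mul, C_sub, C_1, C_mul] using hexp

lemma exists_roots_mixedCharpoly_lt (hL : ∀ p ∈ L, 0 ≤ p.1) (hM : M.IsSymm) (u : ι → ℝ) {θ β : ℝ}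
    (hθ₀ : 0 ≤ θ) (hθ₁ : θ ≤ 1)
    (hroots : ∀ r ∈ (mixedCharpoly ((θ * (1 - θ), u) :: L) (M + θ • rankOne ℝ u)
      (-(M + θ • rankOne ℝ u))).roots, r < β) :
    ∃ b : ℝ, (b = 0 ∨ b = 1) ∧ ∀ r ∈ (mixedCharpoly L (M + b • rankOne ℝ u)
      (-(M + b • rankOne ℝ u))).roots, r < β := by
  have hseg (h : ℝ[X]) (hh : h ∈ segment ℝ (mixedCharpoly L M (-M))
      (mixedCharpoly L (M + rankOne ℝ u) (-M - rankOne ℝ u))) :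
      IsMonicOfDegree h (2 * Fintype.card ι) ∧ h.Splits := by
    obtain ⟨a, b, ha, hb, hab, rfl⟩ := hh
    obtain rfl : a = 1 - b := eq_sub_of_add_eq hab
    rw [mixedCharpoly_expectation]
    have hu := (isSymm_rankOne u).smul b
    exact ⟨isMonicOfDegree_mixedCharpoly _ _ _, splits_mixedCharpoly
      (List.forall_mem_cons.mpr ⟨mul_nonneg hb ha, hL⟩) (hM.add hu) (hM.neg.sub hu)⟩
  have hmem : mixedCharpoly ((θ * (1 - θ), u) :: L) (M + θ • rankOne ℝ u)
      (-(M + θ • rankOne ℝ u)) ∈ segment ℝ (mixedCharpoly L M (-M))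
      (mixedCharpoly L (M + rankOne ℝ u) (-M - rankOne ℝ u)) := by
    rw [neg_add', ← mixedCharpoly_expectation]
    exact ⟨1 - θ, θ, sub_nonneg.mpr hθ₁, hθ₀, sub_add_cancel 1 θ, rfl⟩
  rcases roots_lt_or_roots_lt_of_mem_segment hseg hmem hroots with h | h
  · exact ⟨0, Or.inl rfl, by simpa only [zero_smul, add_zero] using h⟩
  · exact ⟨1, Or.inr rfl, by simpa only [one_smul, neg_add'] using h⟩

/-- The method of conditional expectations: the variables are rounded one after another. -/
theorem exists_rounding_roots_lt {κ : Type*} {l : List κ} (hl : l.Nodup) {x : κ → ℝ}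
    (hx : ∀ i, 0 ≤ x i ∧ x i ≤ 1) (u : κ → ι → ℝ) {β : ℝ} (hM : M.IsSymm)
    (hroots : ∀ r ∈ (mixedCharpoly (l.map fun i => (x i * (1 - x i), u i))
      (M + (l.map fun i => x i • rankOne ℝ (u i)).sum)
      (-(M + (l.map fun i => x i • rankOne ℝ (u i)).sum))).roots, r < β) :
    ∃ z : κ → ℝ, (∀ i, z i = 0 ∨ z i = 1) ∧
      ∀ r ∈ (mixedCharpoly [] (M + (l.map fun i => z i • rankOne ℝ (u i)).sum)
        (-(M + (l.map fun i => z i • rankOne ℝ (u i)).sum))).roots, r < β := by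
  classical
  induction l generalizing M with
  | nil => exact ⟨0, fun i => Or.inl rfl, hroots⟩
  | cons i l ih =>
    obtain ⟨hi, hl⟩ := List.nodup_cons.mp hl
    simp only [List.map_cons, List.sum_cons] at hroots ⊢
    have hnonneg : ∀ p ∈ l.map fun j => (x j * (1 - x j), u j), 0 ≤ p.1 :=
      List.forall_mem_map.mpr fun j _ => mul_nonneg (hx j).1 (sub_nonneg.mpr (hx j).2)
    rw [add_left_comm, add_comm] at hroots
    obtain ⟨b, hb, hbroots⟩ :=
      exists_roots_mixedCharpoly_lt hnonneg
        (hM.add (isSymm_sum_map_smul_rankOne l x u)) (u i) (hx i).1 (hx i).2 hroots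
    rw [add_right_comm] at hbroots
    obtain ⟨z, hz, hzroots⟩ := ih hl (hM.add ((isSymm_rankOne (u i)).smul b)) hbroots
    have hupdate : (l.map fun j => Function.update z i b j • rankOne ℝ (u j)) =
        l.map fun j => z j • rankOne ℝ (u j) :=
      List.map_congr_left fun j hj => by rw [Function.update_of_ne (ne_of_mem_of_not_mem hj hi)]
    refine ⟨Function.update z i b, fun j => ?_, ?_⟩
    · rcases eq_or_ne j i with rfl | hj
      · rwa [Function.update_self]
      · rw [Function.update_of_ne hj]
        exact hz j
    · rwa [hupdate, Function.update_self, ← add_assoc]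

lemma posSemidef_smul_one_sub_of_roots_charpoly_lt {β : ℝ} (hM : M.IsSymm)
    (hroots : ∀ r ∈ M.charpoly.roots, r < β) : (β • (1 : Matrix ι ι ℝ) - M).PosSemidef := by
  rw [posSemidef_iff_isHermitian_and_spectrum_nonneg]
  refine ⟨isHermitian_iff_isSymm.mpr ((isSymm_one.smul β).sub hM), ?_⟩
  rw [← Algebra.algebraMap_eq_smul_one, ← spectrum.singleton_sub_eq]
  rintro _ ⟨_, rfl, r, hr, rfl⟩
  exact sub_nonneg.mpr (hroots r ((mem_roots M.charpoly_monic.ne_zero).mpr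
    (mem_spectrum_iff_isRoot_charpoly.mp hr))).le

end MixedCharpoly

section Blocks

variable {κ ι ι' : Type*} [Fintype κ]

lemma rankOne_sumElim_add_rankOne_sumElim_neg (a : ι → ℝ) (b : ι' → ℝ) :
    rankOne ℝ (Sum.elim a b) + rankOne ℝ (Sum.elim a (-b)) =
      (2 : ℝ) • fromBlocks (rankOne ℝ a) 0 0 (rankOne ℝ b) := by
  ext (j | j) (k | k) <;> simp [rankOne_real, vecMulVec_apply, two_mul]

lemma posSemidef_smul_one_sub_sum_comp [DecidableEq ι] [DecidableEq ι'] {s : ℝ} {d : κ → ℝ}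
    {u : κ → ι → ℝ} {e : ι' → ι} (he : Function.Injective e)
    (h : (s • (1 : Matrix ι ι ℝ) - ∑ i, d i • rankOne ℝ (u i)).PosSemidef) :
    (s • (1 : Matrix ι' ι' ℝ) - ∑ i, d i • rankOne ℝ (u i ∘ e)).PosSemidef := by
  have hsum : (∑ i, d i • rankOne ℝ (u i)).submatrix e e = ∑ i, d i • rankOne ℝ (u i ∘ e) := by
    ext j k
    simp only [submatrix_apply, Matrix.sum_apply, Matrix.smul_apply, rankOne_real, vecMulVec_apply,
      Function.comp_apply]
  rw [← hsum, ← submatrix_one e he]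
  exact h.submatrix e

variable [Finite ι] [Finite ι']

lemma posSemidef_fromBlocks_zero_zero {A : Matrix ι ι ℝ} {B : Matrix ι' ι' ℝ}
    (hA : A.PosSemidef) (hB : B.PosSemidef) : (fromBlocks A 0 0 B).PosSemidef := by
  cases nonempty_fintype ι
  cases nonempty_fintype ι'
  refine .of_dotProduct_mulVec_nonneg (hA.isHermitian.fromBlocks conjTranspose_zero hB.isHermitian)
    fun y => ?_
  rw [← Sum.elim_comp_inl_inr (star y), fromBlocks_mulVec, sumElim_dotProduct_sumElim]
  simp only [zero_mulVec, add_zero, zero_add]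
  exact add_nonneg (hA.dotProduct_mulVec_nonneg _) (hB.dotProduct_mulVec_nonneg _)

lemma posSemidef_two_smul_one_sub_sum_sumElim [DecidableEq ι] [DecidableEq ι'] {x : κ → ℝ}
    (hx : ∀ i, 0 ≤ x i) {a : κ → ι → ℝ} {b : κ → ι' → ℝ}
    (ha : (1 - ∑ i, x i • rankOne ℝ (a i)).PosSemidef)
    (hb : (1 - ∑ i, x i • rankOne ℝ (b i)).PosSemidef) :
    ((2 : ℝ) • (1 : Matrix (ι ⊕ ι') (ι ⊕ ι') ℝ) -
      ∑ i, x i • rankOne ℝ (Sum.elim (a i) (b i))).PosSemidef := by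
  have hsum : ∑ i, x i • rankOne ℝ (Sum.elim (a i) (b i)) +
      ∑ i, x i • rankOne ℝ (Sum.elim (a i) (-b i)) = (2 : ℝ) • fromBlocks
        (∑ i, x i • rankOne ℝ (a i)) 0 0 (∑ i, x i • rankOne ℝ (b i)) := by
    simp only [← Finset.sum_add_distrib, ← smul_add, rankOne_sumElim_add_rankOne_sumElim_neg]
    ext (j | j) (k | k) <;> simp [Matrix.sum_apply, Finset.mul_sum, mul_left_comm]
  have hone : fromBlocks (1 - ∑ i, x i • rankOne ℝ (a i)) 0 0 (1 - ∑ i, x i • rankOne ℝ (b i)) =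
      1 - fromBlocks (∑ i, x i • rankOne ℝ (a i)) 0 0 (∑ i, x i • rankOne ℝ (b i)) := by
    rw [eq_sub_iff_add_eq, fromBlocks_add]
    simp only [sub_add_cancel, add_zero, fromBlocks_one]
  have hblocks := (posSemidef_fromBlocks_zero_zero ha hb).smul (zero_le_two (α := ℝ))
  rw [hone, smul_sub, ← hsum, ← sub_sub] at hblocks
  simpa only [sub_add_cancel] using hblocks.add (posSemidef_sum Finset.univ
    fun i _ => (posSemidef_rankOne (Sum.elim (a i) (-b i))).smul (hx i))

end Blocks

section Rounding

variable {κ ι : Type*} [Fintype κ]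

lemma posSemidef_sub_smul_rankOne {w : κ → ℝ} (hw : ∀ i, 0 ≤ w i) {u : κ → ι → ℝ}
    {A : Matrix ι ι ℝ} (h : (A - ∑ i, w i • rankOne ℝ (u i)).PosSemidef) (i : κ) :
    (A - w i • rankOne ℝ (u i)).PosSemidef := by
  classical
  have hadd := h.add (posSemidef_sum (Finset.univ.erase i)
    fun j _ => (posSemidef_rankOne (u j)).smul (hw j))
  rwa [← Finset.add_sum_erase _ _ (Finset.mem_univ i), ← sub_sub, sub_add_cancel] at hadd

lemma posSemidef_sub_sum_of_le {w w' : κ → ℝ} (hw : ∀ i, w i ≤ w' i) {u : κ → ι → ℝ}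
    {A : Matrix ι ι ℝ} (h : (A - ∑ i, w' i • rankOne ℝ (u i)).PosSemidef) :
    (A - ∑ i, w i • rankOne ℝ (u i)).PosSemidef := by
  have hadd := h.add (posSemidef_sum Finset.univ
    fun i _ => (posSemidef_rankOne (u i)).smul (sub_nonneg.mpr (hw i)))
  simpa only [sub_smul, Finset.sum_sub_distrib, sub_add_sub_cancel] using hadd

variable [Fintype ι] [DecidableEq ι]

lemma mul_dotProduct_self_le_of_posSemidef {s a : ℝ} (hs : 0 ≤ s) {u : ι → ℝ}
    (h : (s • (1 : Matrix ι ι ℝ) - a • rankOne ℝ u).PosSemidef) : a * (u ⬝ᵥ u) ≤ s := by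
  rcases (dotProduct_self_nonneg u).eq_or_lt with hu | hu
  · rwa [← hu, mul_zero]
  · have hquad := h.dotProduct_mulVec_nonneg u
    simp only [star_trivial, sub_mulVec, smul_mulVec, one_mulVec, rankOne_real, vecMulVec_mulVec,
      op_smul_eq_smul, dotProduct_sub, dotProduct_smul, smul_eq_mul, ← mul_assoc,
      ← sub_mul] at hquad
    exact sub_nonneg.mp (nonneg_of_mul_nonneg_left hquad hu)

lemma roots_mixedCharpoly_self_lt {lam β : ℝ} (hlam : 0 < lam) {L : List (ℝ × (ι → ℝ))}
    (hL : ∀ p ∈ L, 0 ≤ p.1 ∧ p.1 * (2 * (p.2 ⬝ᵥ p.2) / lam) ^ 2 ≤ 2) {M : Matrix ι ι ℝ}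
    (hM : (β • 1 - M - (totalShift lam L + lam • (1 : Matrix ι ι ℝ))).PosSemidef) :
    ∀ r ∈ (mixedCharpoly L M M).roots, r < β := by
  intro r hr
  by_contra! hβ
  have hshift := hM.add (PosSemidef.one.smul (sub_nonneg.mpr hβ))
  rw [sub_sub, sub_add_eq_add_sub, sub_smul, add_sub_cancel, ← sub_sub] at hshift
  refine (mixedDet_pos_and_diagDiff_le hlam hL hshift).1.ne' ?_
  have hroot := Polynomial.isRoot_of_mem_roots hr
  rw [Polynomial.IsRoot.def, ← Polynomial.coe_aeval_eq_eval, aeval_mixedCharpoly] at hroot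
  rwa [Algebra.algebraMap_self, RingHom.coe_id, Matrix.map_id, neg_add_eq_sub] at hroot

/-- The barrier argument is run with `λ = 2σ`; then the total shift is at most `2σ` as well. -/
lemma roots_mixedCharpoly_zero_lt {σ : ℝ} (hσ : 0 < σ) {d : κ → ℝ} (hd : ∀ i, 0 ≤ d i)
    {u : κ → ι → ℝ}
    (hvar : (σ ^ 2 • (1 : Matrix ι ι ℝ) -
      ∑ i, (d i * (u i ⬝ᵥ u i)) • rankOne ℝ (u i)).PosSemidef) :
    ∀ r ∈ (mixedCharpoly (Finset.univ.toList.map fun i => (d i, u i)) (0 : Matrix ι ι ℝ) 0).roots,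
      r < 4 * σ := by
  have hdu (i : κ) : d i * (u i ⬝ᵥ u i) * (u i ⬝ᵥ u i) ≤ σ ^ 2 :=
    mul_dotProduct_self_le_of_posSemidef (sq_nonneg σ) (posSemidef_sub_smul_rankOne
      (fun j => mul_nonneg (hd j) (dotProduct_self_nonneg (u j))) hvar i)
  have hL : ∀ p ∈ Finset.univ.toList.map fun i => (d i, u i),
      0 ≤ p.1 ∧ p.1 * (2 * (p.2 ⬝ᵥ p.2) / (2 * σ)) ^ 2 ≤ 2 := by
    refine List.forall_mem_map.mpr fun i _ => ⟨hd i, ?_⟩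
    rw [mul_div_mul_left _ _ two_ne_zero, div_pow, ← mul_div_assoc, div_le_iff₀ (by positivity)]
    linarith [hdu i, sq_nonneg σ]
  have hshift : totalShift (2 * σ) (Finset.univ.toList.map fun i => (d i, u i)) =
      (2 / σ) • ∑ i, (d i * (u i ⬝ᵥ u i)) • rankOne ℝ (u i) := by
    rw [totalShift, List.map_map, Finset.sum_map_toList, Finset.smul_sum]
    refine Finset.sum_congr rfl fun i _ => ?_
    rw [smul_smul, Function.comp_apply, mul_div_mul_left _ _ two_ne_zero]
    ring_nf
  have hpsd : ((4 * σ) • 1 - 0 - (totalShift (2 * σ) (Finset.univ.toList.map fun i => (d i, u i)) +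
      (2 * σ) • (1 : Matrix ι ι ℝ))).PosSemidef := by
    have hscaled := hvar.smul (show 0 ≤ 2 / σ by positivity)
    rw [smul_sub, smul_smul, ← hshift, show 2 / σ * σ ^ 2 = 4 * σ - 2 * σ by field_simp; ring,
      sub_smul, sub_sub, add_comm] at hscaled
    rwa [sub_zero]
  exact roots_mixedCharpoly_self_lt (mul_pos two_pos hσ) hL hpsd

theorem exists_rounding_of_variance_le {σ : ℝ} (hσ : 0 < σ) {x : κ → ℝ}
    (hx : ∀ i, 0 ≤ x i ∧ x i ≤ 1) {u : κ → ι → ℝ}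
    (hvar : (σ ^ 2 • (1 : Matrix ι ι ℝ) -
      ∑ i, (x i * (1 - x i) * (u i ⬝ᵥ u i)) • rankOne ℝ (u i)).PosSemidef) :
    ∃ z : κ → ℝ, (∀ i, z i = 0 ∨ z i = 1) ∧
      ((4 * σ) • (1 : Matrix ι ι ℝ) - ∑ i, (z i - x i) • rankOne ℝ (u i)).PosSemidef ∧
      ((4 * σ) • (1 : Matrix ι ι ℝ) - ∑ i, (x i - z i) • rankOne ℝ (u i)).PosSemidef := by
  set l := (Finset.univ : Finset κ).toList with hl
  set M := -(l.map fun i => x i • rankOne ℝ (u i)).sum with hM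
  have hMsymm : M.IsSymm := (isSymm_sum_map_smul_rankOne l x u).neg
  have hroots := roots_mixedCharpoly_zero_lt hσ
    (fun i => mul_nonneg (hx i).1 (sub_nonneg.mpr (hx i).2)) hvar
  obtain ⟨z, hz, hzroots⟩ := exists_rounding_roots_lt (Finset.nodup_toList _) hx u hMsymm
    (by rwa [hM, neg_add_cancel, neg_zero])
  have hdiff : M + (l.map fun i => z i • rankOne ℝ (u i)).sum =
      ∑ i, (z i - x i) • rankOne ℝ (u i) := by
    simp only [hM, hl, Finset.sum_map_toList, sub_smul, Finset.sum_sub_distrib, neg_add_eq_sub]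
  rw [hdiff, mixedCharpoly_nil, Polynomial.roots_mul
    (mul_ne_zero (charpoly_monic _).ne_zero (charpoly_monic _).ne_zero)] at hzroots
  have hsymm := hdiff ▸ hMsymm.add (isSymm_sum_map_smul_rankOne l z u)
  refine ⟨z, hz, posSemidef_smul_one_sub_of_roots_charpoly_lt hsymm
    fun r hr => hzroots r (Multiset.mem_add.mpr (Or.inl hr)), ?_⟩
  simp only [← neg_sub (z _) (x _), neg_smul, Finset.sum_neg_distrib]
  exact posSemidef_smul_one_sub_of_roots_charpoly_lt hsymm.neg
    fun r hr => hzroots r (Multiset.mem_add.mpr (Or.inr hr))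

variable {ι' : Type*} [Fintype ι'] [DecidableEq ι']

theorem exists_simultaneous_rounding {ε : ℝ}
    (hε : 0 ≤ ε) {x : κ → ℝ} (hx : ∀ i, 0 ≤ x i ∧ x i ≤ 1) {a : κ → ι → ℝ} {b : κ → ι' → ℝ}
    (hanorm : ∀ i, a i ⬝ᵥ a i ≤ ε ^ 2) (hbnorm : ∀ i, b i ⬝ᵥ b i ≤ ε ^ 2)
    (ha : (1 - ∑ i, x i • rankOne ℝ (a i)).PosSemidef)
    (hb : (1 - ∑ i, x i • rankOne ℝ (b i)).PosSemidef) :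
    ∃ z : κ → ℝ, (∀ i, z i = 0 ∨ z i = 1) ∧
      ((8 * ε) • (1 : Matrix ι ι ℝ) - ∑ i, (z i - x i) • rankOne ℝ (a i)).PosSemidef ∧
      ((8 * ε) • (1 : Matrix ι ι ℝ) - ∑ i, (x i - z i) • rankOne ℝ (a i)).PosSemidef ∧
      ((8 * ε) • (1 : Matrix ι' ι' ℝ) - ∑ i, (z i - x i) • rankOne ℝ (b i)).PosSemidef ∧
      ((8 * ε) • (1 : Matrix ι' ι' ℝ) - ∑ i, (x i - z i) • rankOne ℝ (b i)).PosSemidef := by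
  rcases hε.eq_or_lt with rfl | hε
  · have ha0 (i : κ) : a i = 0 := dotProduct_self_eq_zero.mp
      ((hanorm i).trans_eq (zero_pow two_ne_zero) |>.antisymm (dotProduct_self_nonneg _))
    have hb0 (i : κ) : b i = 0 := dotProduct_self_eq_zero.mp
      ((hbnorm i).trans_eq (zero_pow two_ne_zero) |>.antisymm (dotProduct_self_nonneg _))
    exact ⟨0, fun i => Or.inl rfl, by simp [ha0, hb0, rankOne_real, PosSemidef.zero]⟩
  set u : κ → ι ⊕ ι' → ℝ := fun i => Sum.elim (a i) (b i)
  have hvar_le (i : κ) : x i * (1 - x i) * (u i ⬝ᵥ u i) ≤ 2 * ε ^ 2 * x i := by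
    have hu : u i ⬝ᵥ u i ≤ 2 * ε ^ 2 := by
      rw [sumElim_dotProduct_sumElim]
      linarith [hanorm i, hbnorm i]
    rw [mul_comm (2 * ε ^ 2)]
    exact mul_le_mul (mul_le_of_le_one_right (hx i).1 (sub_le_self 1 (hx i).1)) hu
      (dotProduct_self_nonneg _) (hx i).1
  have hvar : ((2 * ε) ^ 2 • (1 : Matrix (ι ⊕ ι') (ι ⊕ ι') ℝ) -
      ∑ i, (x i * (1 - x i) * (u i ⬝ᵥ u i)) • rankOne ℝ (u i)).PosSemidef := by
    have hscaled := (posSemidef_two_smul_one_sub_sum_sumElim (fun i => (hx i).1) ha hb).smul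
      (show 0 ≤ 2 * ε ^ 2 by positivity)
    refine posSemidef_sub_sum_of_le hvar_le ?_
    rw [smul_sub, smul_smul, Finset.smul_sum, show 2 * ε ^ 2 * 2 = (2 * ε) ^ 2 by ring] at hscaled
    simpa only [smul_smul] using hscaled
  obtain ⟨z, hz, hup, hlow⟩ := exists_rounding_of_variance_le (mul_pos two_pos hε) hx hvar
  rw [← mul_assoc, show (4 * 2 : ℝ) = 8 by norm_num] at hup hlow
  have hinl {d : κ → ℝ} := posSemidef_smul_one_sub_sum_comp (s := 8 * ε) (d := d) (u := u)
    Sum.inl_injective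
  have hinr {d : κ → ℝ} := posSemidef_smul_one_sub_sum_comp (s := 8 * ε) (d := d) (u := u)
    Sum.inr_injective
  exact ⟨z, hz, hinl hup, hinl hlow, hinr hup, hinr hlow⟩

lemma sum_smul_rankOne_const_sqrt {w : κ → ℝ} (hw : ∀ i, 0 ≤ w i) (d : κ → ℝ) :
    ∑ i, d i • rankOne ℝ (fun _ : Unit => √(w i)) =
      (∑ i, d i * w i) • (1 : Matrix Unit Unit ℝ) := by
  ext
  simp [Matrix.sum_apply, rankOne_real, vecMulVec_apply, Real.mul_self_sqrt (hw _)]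

/-- Weights `w` are rounded along with matrices by treating them as rank-one `1 × 1` matrices. -/
theorem exists_rounding_with_weights {ε : ℝ} (hε : 0 ≤ ε) {x : κ → ℝ}
    (hx : ∀ i, 0 ≤ x i ∧ x i ≤ 1) {v : κ → ι → ℝ} (hvnorm : ∀ i, v i ⬝ᵥ v i ≤ ε ^ 2)
    (hv : (1 - ∑ i, x i • rankOne ℝ (v i)).PosSemidef) {w : κ → ℝ} (hw : ∀ i, 0 ≤ w i)
    (hw_le : ∀ i, w i ≤ ε ^ 2) (hwsum : ∑ i, x i * w i ≤ 1) :
    ∃ z : κ → ℝ, (∀ i, z i = 0 ∨ z i = 1) ∧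
      ((8 * ε) • (1 : Matrix ι ι ℝ) - ∑ i, (z i - x i) • rankOne ℝ (v i)).PosSemidef ∧
      ((8 * ε) • (1 : Matrix ι ι ℝ) - ∑ i, (x i - z i) • rankOne ℝ (v i)).PosSemidef ∧
      ∑ i, (z i - x i) * w i ≤ 8 * ε ∧ ∑ i, (x i - z i) * w i ≤ 8 * ε := by
  have hb : (1 - ∑ i, x i • rankOne ℝ (fun _ : Unit => √(w i))).PosSemidef := by
    rw [sum_smul_rankOne_const_sqrt hw]
    nth_rw 1 [← one_smul ℝ (1 : Matrix Unit Unit ℝ)]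
    rw [← sub_smul]
    exact PosSemidef.one.smul (sub_nonneg.mpr hwsum)
  have hbnorm (i : κ) : (fun _ : Unit => √(w i)) ⬝ᵥ (fun _ => √(w i)) ≤ ε ^ 2 := by
    simpa [dotProduct, Real.mul_self_sqrt (hw i)] using hw_le i
  obtain ⟨z, hz, hup, hlow, hwup, hwlow⟩ := exists_simultaneous_rounding hε hx hvnorm hbnorm hv hb
  have hle {d : κ → ℝ} (h : ((8 * ε) • 1 -
      ∑ i, d i • rankOne ℝ (fun _ : Unit => √(w i))).PosSemidef) : ∑ i, d i * w i ≤ 8 * ε := by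
    rw [sum_smul_rankOne_const_sqrt hw, ← sub_smul] at h
    simpa using h.diag_nonneg (i := ())
  exact ⟨z, hz, hup, hlow, hle hwup, hle hwlow⟩

end Rounding

end SpectralRounding

open SpectralRounding

theorem two_sided_spectral_rounding_general_s1 {κ ι : Type*} [Fintype κ] [Fintype ι] [DecidableEq ι]
    (v : κ → ι → ℝ) (x c : κ → ℝ) {ε : ℝ} (hε : 0 ≤ ε)
    (hx : ∀ i, 0 ≤ x i ∧ x i ≤ 1)
    (hc : ∀ i, 0 ≤ c i)
    (hsum : (1 - ∑ i, x i • vecMulVec (v i) (v i)).PosSemidef)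
    (hv : ∀ i, √(∑ j, v i j ^ 2) ≤ ε)
    (hcinf : ∀ i, c i ≤ ε ^ 2 * ∑ j, c j * x j) :
    ∃ z : κ → ℝ, (∀ i, z i = 0 ∨ z i = 1) ∧
      (∑ i, z i • vecMulVec (v i) (v i) -
        (∑ i, x i • vecMulVec (v i) (v i) - (8 * ε) • (1 : Matrix ι ι ℝ))).PosSemidef ∧
      (∑ i, x i • vecMulVec (v i) (v i) + (8 * ε) • (1 : Matrix ι ι ℝ) -
        ∑ i, z i • vecMulVec (v i) (v i)).PosSemidef ∧
      (1 - 8 * ε) * ∑ i, c i * x i ≤ ∑ i, c i * z i ∧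
      ∑ i, c i * z i ≤ (1 + 8 * ε) * ∑ i, c i * x i := by
  set S := ∑ j, c j * x j with hS
  have hS0 : 0 ≤ S := Finset.sum_nonneg fun i _ => mul_nonneg (hc i) (hx i).1
  have hvnorm (i : κ) : v i ⬝ᵥ v i ≤ ε ^ 2 := by
    simpa only [dotProduct, ← sq] using (Real.sqrt_le_left hε).mp (hv i)
  -- If `S = 0`, then `c = 0`, so that the junk value `c i / 0 = 0` does no harm.
  have hcS (i : κ) : c i / S * S = c i :=
    div_mul_cancel_of_imp fun hS => ((hcinf i).trans_eq (by rw [hS, mul_zero])).antisymm (hc i)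
  have hscale (d : κ → ℝ) : (∑ i, d i * (c i / S)) * S = ∑ i, c i * d i := by
    rw [Finset.sum_mul]
    exact Finset.sum_congr rfl fun i _ => by rw [mul_assoc, hcS, mul_comm]
  have hcost_le : ∑ i, x i * (c i / S) ≤ 1 := by
    simpa only [hS, Finset.sum_div, mul_div_assoc, mul_left_comm, mul_div_left_comm, mul_comm (x _)]
      using div_self_le_one S
  obtain ⟨z, hz, hup, hlow, hcup, hclow⟩ := exists_rounding_with_weights hε hx hvnorm hsum
    (fun i => div_nonneg (hc i) hS0) (fun i => div_le_of_le_mul₀ hS0 (sq_nonneg ε) (hcinf i))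
    hcost_le
  have hcup' := mul_le_mul_of_nonneg_right hcup hS0
  have hclow' := mul_le_mul_of_nonneg_right hclow hS0
  simp only [hscale, mul_sub, Finset.sum_sub_distrib] at hcup' hclow'
  simp only [sub_smul, Finset.sum_sub_distrib, rankOne_real] at hup hlow
  refine ⟨z, hz, ?_, ?_, by linarith, by linarith⟩
  · convert hlow using 1
    abel
  · convert hup using 1
    abel

/-- **Two-sided spectral rounding with one nonnegative linear constraint.**
If `∑ xᵢ vᵢ vᵢᵀ = Iₙ`, all `‖vᵢ‖ ≤ ε < 1/8`, and `c_∞ ≤ ε² ⟨c, x⟩`, then there is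
`z ∈ {0,1}^m` with `(1 - 8ε) Iₙ ⪯ ∑ zᵢ vᵢ vᵢᵀ ⪯ (1 + 8ε) Iₙ` and
`(1 - 8ε) ⟨c, x⟩ ≤ ⟨c, z⟩ ≤ (1 + 8ε) ⟨c, x⟩`. -/
theorem two_sided_spectral_rounding {n m : ℕ} (v : Fin m → Fin n → ℝ) (x c : Fin m → ℝ)
    (ε : ℝ)
    (hx : ∀ i, 0 ≤ x i ∧ x i ≤ 1)
    (hc : ∀ i, 0 ≤ c i)
    (hsum : (∑ i, x i • vecMulVec (v i) (v i)) = (1 : Matrix (Fin n) (Fin n) ℝ))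
    (hv : ∀ i, Real.sqrt (∑ j, v i j ^ 2) ≤ ε)
    (hε : ε < 1/8)
    (hcinf : ∀ i, c i ≤ ε^2 * ∑ j, c j * x j) :
    ∃ z : Fin m → ℝ, (∀ i, z i = 0 ∨ z i = 1) ∧
      ((∑ i, z i • vecMulVec (v i) (v i)) - (1 - 8*ε) • (1 : Matrix (Fin n) (Fin n) ℝ)).PosSemidef ∧
      ((1 + 8*ε) • (1 : Matrix (Fin n) (Fin n) ℝ) - ∑ i, z i • vecMulVec (v i) (v i)).PosSemidef ∧
      (1 - 8*ε) * (∑ i, c i * x i) ≤ (∑ i, c i * z i) ∧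
      (∑ i, c i * z i) ≤ (1 + 8*ε) * (∑ i, c i * x i) := by
  rcases isEmpty_or_nonempty (Fin m) with _ | ⟨⟨i⟩⟩
  · simp only [Finset.univ_eq_empty, Finset.sum_empty] at hsum ⊢
    simp [← hsum, PosSemidef.zero]
  · have hpsd : (1 - ∑ i, x i • vecMulVec (v i) (v i)).PosSemidef := by
      rw [hsum, sub_self]
      exact PosSemidef.zero
    have hrounding := two_sided_spectral_rounding_general_s1 v x c ((Real.sqrt_nonneg _).trans (hv i))
      hx hc hpsd hv hcinf
    simpa only [hsum, sub_smul, add_smul, one_smul] using hrounding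
end

section
/- Let v_1, …, v_m ∈ ℝ^n, x ∈ [0,1]^m, and c ∈ ℝ_+^m, and let λ > 0 and l > 0. Suppose ‖Σ_{i=1}^m x_i v_i v_iᵀ‖_op ≤ λ, that ‖v_i‖ ≤ l for all i ∈ [m], that c_∞ ≤ l²·⟨c, x⟩/λ, and that l ≤ √λ. Then there exists z ∈ {0,1}^m such that ‖Σ_{i=1}^m x_i v_i v_iᵀ − Σ_{i=1}^m z_i v_i v_iᵀ‖_op ≤ 8·l·√λ and |⟨c, x⟩ − ⟨c, z⟩| ≤ (8l/√λ)·⟨c, x⟩. -/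
/-!
Adjoining to `v i` a coordinate proportional to `√(c i)` turns the linear constraint into part of
a matrix rounding problem. For that problem, start from the polynomial
`det (y + ∑ wᵢ vᵢ vᵢᵀ) * det (y + ∑ w'ᵢ vᵢ vᵢᵀ)`, which is real stable and affine in each of the
`w i` and `w' i`. Replacing `x i` by `0` or `1` shifts `(w i, w' i)` by `(x i, -x i)` or
`(x i - 1, 1 - x i)`, and averaging over a coin of bias `x i` amounts to applying
`1 - x i (1 - x i) ∂²/∂wᵢ∂w'ᵢ`. These operators preserve real stability, so the two outcomes of each
coin have a real-rooted segment between them, and one of them has no root above `b` as soon as the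
average has none. That the full average has none follows from a barrier argument: on an orthant
where the logarithmic derivatives are at most `φ`, each operator costs a shift of
`2 φ x i (1 - x i)` in its two variables and no increase of `φ`.
-/

open Matrix BigOperators

/-- For a real symmetric `n × n` matrix `M`, `OpNormLE M t` expresses that the operator
norm of `M` (the largest absolute value of an eigenvalue) is at most `t`, via the
equivalent positive-semidefinite sandwich `-t Iₙ ⪯ M ⪯ t Iₙ`. -/
def OpNormLE {n : ℕ} (M : Matrix (Fin n) (Fin n) ℝ) (t : ℝ) : Prop :=
  (t • (1 : Matrix (Fin n) (Fin n) ℝ) - M).PosSemidef ∧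
  (M + t • (1 : Matrix (Fin n) (Fin n) ℝ)).PosSemidef

namespace SpectralRounding

open Polynomial Filter Topology

/-! ### Multi-affine functions -/

local notation "𝐞" a:max => Pi.single (M := fun _ => _) a 1

section MultiAffine

variable {κ R E : Type*} [DecidableEq κ] [CommRing R] [AddCommGroup E]

/-- The increment of `F` along the coordinate `a`, which for a multi-affine `F` is the partial
derivative `∂F/∂w_a`. -/
def partialDiff (a : κ) (F : (κ → R) → E) (w : κ → R) : E := F (w + 𝐞 a) - F w

lemma partialDiff_comm (a b : κ) (F : (κ → R) → E) :
    partialDiff a (partialDiff b F) = partialDiff b (partialDiff a F) := by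
  funext w
  simp only [partialDiff, add_right_comm w (𝐞 a) (𝐞 b)]
  abel

variable [Module R E]

/-- The function `F` of several variables is affine in each of them separately. -/
def MultiAffine (F : (κ → R) → E) : Prop :=
  ∀ w a (s : R), F (w + s • 𝐞 a) = F w + s • partialDiff a F w

variable {F : (κ → R) → E}

namespace MultiAffine

protected lemma partialDiff (hF : MultiAffine F) (b : κ) : MultiAffine (partialDiff b F) :=
  fun w a s => by
    simp only [partialDiff, add_right_comm w _ (𝐞 b), hF _ a s]
    module

lemma partialDiff_add_smul (hF : MultiAffine F) (w : κ → R) (a : κ) (s : R) :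
    partialDiff a F (w + s • 𝐞 a) = partialDiff a F w := by
  have hshift : w + s • 𝐞 a + 𝐞 a = w + (s + 1) • 𝐞 a := by module
  rw [partialDiff, hshift, hF, hF]
  module

lemma add_smul_add_smul (hF : MultiAffine F) (w : κ → R) (a b : κ) (s t : R) :
    F (w + s • 𝐞 a + t • 𝐞 b) = F w + s • partialDiff a F w + t • partialDiff b F w
      + (s * t) • partialDiff a (partialDiff b F) w := by
  rw [hF, hF, hF.partialDiff]
  module

lemma partialDiff_add_smul_add_smul (hF : MultiAffine F) (w : κ → R) (a b : κ) (s t : R) :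
    partialDiff a F (w + s • 𝐞 a + t • 𝐞 b) =
      partialDiff a F w + t • partialDiff a (partialDiff b F) w := by
  rw [hF.partialDiff a, partialDiff_comm b a, hF.partialDiff_add_smul,
    (hF.partialDiff b).partialDiff_add_smul]

lemma partialDiff_partialDiff_add_smul_add_smul (hF : MultiAffine F) (w : κ → R) (a b : κ)
    (s t : R) : partialDiff a (partialDiff b F) (w + s • 𝐞 a + t • 𝐞 b) =
      partialDiff a (partialDiff b F) w := by
  rw [partialDiff_comm a b, (hF.partialDiff a).partialDiff_add_smul, partialDiff_comm b a,
    (hF.partialDiff b).partialDiff_add_smul]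

lemma smul (hF : MultiAffine F) (c : R) : MultiAffine (c • F) := fun w a s => by
  simp only [partialDiff, Pi.smul_apply, hF w a s]
  module

lemma sub {G : (κ → R) → E} (hF : MultiAffine F) (hG : MultiAffine G) :
    MultiAffine (F - G) := fun w a s => by
  simp only [partialDiff, Pi.sub_apply, hF w a s, hG w a s]
  module

end MultiAffine

/-- Multiplying the coefficient of `w_a w_b` in `F` by `r` and subtracting it, that is, applying the
differential operator `1 - r ∂_a ∂_b`. -/
def contract (a b : κ) (r : R) (F : (κ → R) → E) : (κ → R) → E :=
  F - r • partialDiff a (partialDiff b F)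

lemma partialDiff_contract (a b c : κ) (r : R) (F : (κ → R) → E) :
    partialDiff c (contract a b r F) = contract a b r (partialDiff c F) := by
  rw [contract, contract, partialDiff_comm b c, partialDiff_comm a c]
  funext w
  simp only [partialDiff, Pi.sub_apply, Pi.smul_apply]
  module

namespace MultiAffine

protected lemma contract (hF : MultiAffine F) (a b : κ) (r : R) : MultiAffine (contract a b r F) :=
  hF.sub (((hF.partialDiff b).partialDiff a).smul r)

lemma contract_add_smul_add_smul (hF : MultiAffine F) (w : κ → R) (a b : κ) (r s : R) :
    contract a b r F (w + s • 𝐞 a + s • 𝐞 b) = F w + s • (partialDiff a F w + partialDiff b F w)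
      + (s ^ 2 - r) • partialDiff a (partialDiff b F) w := by
  rw [contract, Pi.sub_apply, Pi.smul_apply, hF.add_smul_add_smul,
    hF.partialDiff_partialDiff_add_smul_add_smul]
  module

lemma average_eq_contract (hF : MultiAffine F) (w : κ → R) (a b : κ) (t : R) :
    (1 - t) • F w + t • F (w + (-1 : R) • 𝐞 a + (1 : R) • 𝐞 b) =
      contract a b (t * (1 - t)) F (w + (-t) • 𝐞 a + t • 𝐞 b) := by
  rw [contract, Pi.sub_apply, Pi.smul_apply, hF.partialDiff_partialDiff_add_smul_add_smul,
    hF.add_smul_add_smul, hF.add_smul_add_smul]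
  module

end MultiAffine

section DisjointProduct

variable {κ' A : Type*} [DecidableEq κ'] [CommRing A]

/-- The product of two functions of disjoint sets of variables. -/
def disjointMul (F : (κ → R) → A) (G : (κ' → R) → A) (w : κ ⊕ κ' → R) : A :=
  F (w ∘ Sum.inl) * G (w ∘ Sum.inr)

lemma add_smul_single_inl_comp_inl (w : κ ⊕ κ' → R) (a : κ) (s : R) :
    (w + s • 𝐞 (Sum.inl a)) ∘ Sum.inl = w ∘ Sum.inl + s • 𝐞 a := by
  funext c
  simp [Pi.single_apply]

lemma add_smul_single_inl_comp_inr (w : κ ⊕ κ' → R) (a : κ) (s : R) :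
    (w + s • 𝐞 (Sum.inl a)) ∘ Sum.inr = w ∘ Sum.inr := by
  funext c
  simp

lemma add_smul_single_inr_comp_inl (w : κ ⊕ κ' → R) (a : κ') (s : R) :
    (w + s • 𝐞 (Sum.inr a)) ∘ Sum.inl = w ∘ Sum.inl := by
  funext c
  simp

lemma add_smul_single_inr_comp_inr (w : κ ⊕ κ' → R) (a : κ') (s : R) :
    (w + s • 𝐞 (Sum.inr a)) ∘ Sum.inr = w ∘ Sum.inr + s • 𝐞 a := by
  funext c
  simp [Pi.single_apply]

variable (F : (κ → R) → A) (G : (κ' → R) → A) (w : κ ⊕ κ' → R)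

lemma partialDiff_inl_disjointMul (a : κ) : partialDiff (Sum.inl a) (disjointMul F G) w =
    partialDiff a F (w ∘ Sum.inl) * G (w ∘ Sum.inr) := by
  have hinl := add_smul_single_inl_comp_inl w a 1
  have hinr := add_smul_single_inl_comp_inr w a 1
  simp only [one_smul] at hinl hinr
  rw [partialDiff, partialDiff, disjointMul, disjointMul, hinl, hinr]
  ring

lemma partialDiff_inr_disjointMul (a : κ') : partialDiff (Sum.inr a) (disjointMul F G) w =
    F (w ∘ Sum.inl) * partialDiff a G (w ∘ Sum.inr) := by
  have hinl := add_smul_single_inr_comp_inl w a 1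
  have hinr := add_smul_single_inr_comp_inr w a 1
  simp only [one_smul] at hinl hinr
  rw [partialDiff, partialDiff, disjointMul, disjointMul, hinl, hinr]
  ring

variable {F G} [Algebra R A]

protected lemma MultiAffine.disjointMul (hF : MultiAffine F) (hG : MultiAffine G) :
    MultiAffine (disjointMul F G) := by
  rintro w (a | a) s
  · rw [partialDiff_inl_disjointMul, disjointMul, add_smul_single_inl_comp_inl,
      add_smul_single_inl_comp_inr, hF, disjointMul]
    simp only [Algebra.smul_def]
    ring
  · rw [partialDiff_inr_disjointMul, disjointMul, add_smul_single_inr_comp_inl,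
      add_smul_single_inr_comp_inr, hG, disjointMul]
    simp only [Algebra.smul_def]
    ring

end DisjointProduct
end MultiAffine

/-! ### Real stability -/

section Stability

variable {κ : Type*} [DecidableEq κ]

/-- `f` is an extension of the polynomial family `p` to complex parameters which has no zeros with
`y` in the open and all `w a` in the closed upper half-plane. -/
structure IsStableExtension (f : ℂ → (κ → ℂ) → ℂ) (p : (κ → ℝ) → ℝ[X]) : Prop where
  multiAffine : ∀ y, MultiAffine (f y)
  apply_ofReal : ∀ y w, f y (Complex.ofReal ∘ w) = aeval y (p w)
  ne_zero : ∀ y w, 0 < y.im → (∀ a, 0 ≤ (w a).im) → f y w ≠ 0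

/-- Real stability of `(y, w) ↦ (p w)(y)`, a polynomial affine in each coordinate of `w`. -/
def RealStable (p : (κ → ℝ) → ℝ[X]) : Prop := ∃ f, IsStableExtension f p

lemma ofReal_comp_add_smul_single (w : κ → ℝ) (a : κ) (s : ℝ) :
    Complex.ofReal ∘ (w + s • 𝐞 a) = Complex.ofReal ∘ w + (s : ℂ) • 𝐞 a := by
  funext c
  by_cases hc : c = a <;> simp [hc]

lemma im_add_smul_single_nonneg {w : κ → ℂ} (hw : ∀ c, 0 ≤ (w c).im) (a : κ) {τ : ℂ}
    (hτ : 0 ≤ τ.im) (c : κ) : 0 ≤ ((w + τ • 𝐞 a : κ → ℂ) c).im := by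
  by_cases hc : c = a
  · subst hc
    simpa using add_nonneg (hw c) hτ
  · simpa [hc] using hw c

lemma aeval_complex_ofReal (q : ℝ[X]) (Y : ℝ) : aeval (Y : ℂ) q = ((q.eval Y : ℝ) : ℂ) :=
  aeval_ofReal q Y

lemma partialDiff_ofReal_comp {F : (κ → ℂ) → ℂ} {p : (κ → ℝ) → ℝ[X]} {y : ℂ}
    (hF : ∀ w, F (Complex.ofReal ∘ w) = aeval y (p w)) (a : κ) (w : κ → ℝ) :
    partialDiff a F (Complex.ofReal ∘ w) = aeval y (partialDiff a p w) := by
  have hshift := ofReal_comp_add_smul_single w a 1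
  rw [one_smul, Complex.ofReal_one, one_smul] at hshift
  rw [partialDiff, partialDiff, ← hshift, hF, hF, map_sub]

lemma partialDiff_eval (p : (κ → ℝ) → ℝ[X]) (a : κ) (Y : ℝ) :
    partialDiff a (fun w => (p w).eval Y) = fun w => (partialDiff a p w).eval Y := by
  funext w
  simp only [partialDiff, eval_sub]

lemma contract_eval (p : (κ → ℝ) → ℝ[X]) (a b : κ) (r Y : ℝ) :
    contract a b r (fun w => (p w).eval Y) = fun w => (contract a b r p w).eval Y := by
  funext w
  simp only [contract, partialDiff_eval, Pi.sub_apply, Pi.smul_apply, eval_sub, eval_smul]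

lemma exists_bilinear_eq_zero {r : ℝ} (hr : 0 ≤ r) (B C D : ℂ) :
    ∃ τ υ : ℂ, 0 ≤ τ.im ∧ 0 ≤ υ.im ∧ r * D + τ * B + υ * C + τ * υ * D = 0 := by
  rcases eq_or_ne D 0 with rfl | hD
  · exact ⟨0, 0, le_rfl, le_rfl, by ring⟩
  have degenerate (C : ℂ) : ∃ τ υ : ℂ, 0 ≤ τ.im ∧ 0 ≤ υ.im ∧ r * D + υ * C + τ * υ * D = 0 := by
    set T : ℝ := |(C / D).im| + 1
    have hT : 0 < T := by positivity
    refine ⟨T * Complex.I - C / D, (r / T : ℝ) * Complex.I, ?_, ?_, ?_⟩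
    · simpa [T] using (le_abs_self _).trans (le_add_of_nonneg_right zero_le_one)
    · simpa using div_nonneg hr hT.le
    · have hT' : (T : ℂ) ≠ 0 := by exact_mod_cast hT.ne'
      push_cast
      field_simp
      linear_combination (r : ℂ) * D * T * Complex.I_sq
  rcases eq_or_ne B 0 with rfl | hB
  · obtain ⟨τ, υ, hτ, hυ, h⟩ := degenerate C
    exact ⟨τ, υ, hτ, hυ, by linear_combination h⟩
  rcases eq_or_ne C 0 with rfl | hC
  · obtain ⟨τ, υ, hτ, hυ, h⟩ := degenerate B
    exact ⟨υ, τ, hυ, hτ, by linear_combination h⟩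
  rcases hr.eq_or_lt with rfl | hr
  · exact ⟨0, 0, le_rfl, le_rfl, by simp⟩
  obtain ⟨τ, hτ, hsq⟩ : ∃ τ : ℂ, 0 ≤ τ.im ∧ r * C / B = τ * τ := by
    obtain ⟨τ, hsq⟩ := IsAlgClosed.exists_eq_mul_self (r * C / B)
    rcases le_total 0 τ.im with hτ | hτ
    · exact ⟨τ, hτ, hsq⟩
    · exact ⟨-τ, by simpa using hτ, by rw [hsq]; ring⟩
  have hr' : (r : ℂ) ≠ 0 := by exact_mod_cast hr.ne'
  have hτ0 : τ ≠ 0 := by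
    rintro rfl
    simp [hr', hC, hB] at hsq
  refine ⟨τ, -r / τ, hτ, ?_, ?_⟩
  · simp only [Complex.div_im, Complex.neg_re, Complex.neg_im, Complex.ofReal_re, Complex.ofReal_im]
    have : 0 ≤ r * τ.im / Complex.normSq τ :=
      div_nonneg (mul_nonneg hr.le hτ) (Complex.normSq_nonneg τ)
    simpa [neg_div] using this
  · field_simp at hsq ⊢
    linear_combination -hsq

lemma im_mul_conj_nonneg {p q : ℂ} (h : ∀ υ : ℂ, 0 ≤ υ.im → p + υ * q ≠ 0) :
    0 ≤ (p * (starRingEnd ℂ) q).im := by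
  rcases eq_or_ne q 0 with rfl | hq
  · simp
  by_contra! hneg
  have hq' : (Complex.normSq q : ℂ) ≠ 0 := by simpa using hq
  refine h ((Complex.normSq q : ℂ)⁻¹ * -(p * (starRingEnd ℂ) q)) ?_ ?_
  · rw [← Complex.ofReal_inv, Complex.im_ofReal_mul, Complex.neg_im]
    exact mul_nonneg (inv_nonneg.mpr (Complex.normSq_nonneg q)) (neg_nonneg.mpr hneg.le)
  · field_simp
    linear_combination p * (Complex.mul_conj q).symm

namespace IsStableExtension

variable {f : ℂ → (κ → ℂ) → ℂ} {p : (κ → ℝ) → ℝ[X]}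

lemma partialDiff_apply_ofReal (hf : IsStableExtension f p) (a : κ) (y : ℂ) (w : κ → ℝ) :
    partialDiff a (f y) (Complex.ofReal ∘ w) = aeval y (partialDiff a p w) :=
  partialDiff_ofReal_comp (hf.apply_ofReal y) a w

lemma partialDiff_partialDiff_apply_ofReal (hf : IsStableExtension f p) (a b : κ) (y : ℂ)
    (w : κ → ℝ) : partialDiff a (partialDiff b (f y)) (Complex.ofReal ∘ w) =
      aeval y (partialDiff a (partialDiff b p) w) :=
  partialDiff_ofReal_comp (hf.partialDiff_apply_ofReal b y) a w

end IsStableExtension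

namespace RealStable

variable {p : (κ → ℝ) → ℝ[X]}

lemma multiAffine (hp : RealStable p) : MultiAffine p := by
  obtain ⟨f, hf⟩ := hp
  refine fun w a s => Polynomial.funext fun Y => ?_
  have hY := hf.multiAffine Y (Complex.ofReal ∘ w) a s
  rw [← ofReal_comp_add_smul_single, hf.partialDiff_apply_ofReal, hf.apply_ofReal,
    hf.apply_ofReal] at hY
  simp only [aeval_complex_ofReal, smul_eq_mul] at hY
  rw [eval_add, eval_smul, smul_eq_mul]
  exact_mod_cast hY

protected lemma contract (hp : RealStable p) (a b : κ) {r : ℝ} (hr : 0 ≤ r) :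
    RealStable (contract a b r p) := by
  obtain ⟨f, hf⟩ := hp
  refine ⟨fun y => contract a b (r : ℂ) (f y), fun y => (hf.multiAffine y).contract a b _,
    fun y w => ?_, fun y w hy hw hzero => ?_⟩
  · simp [contract, hf.apply_ofReal, hf.partialDiff_partialDiff_apply_ofReal]
  · obtain ⟨τ, υ, hτ, hυ, h⟩ := exists_bilinear_eq_zero hr (partialDiff a (f y) w)
      (partialDiff b (f y) w) (partialDiff a (partialDiff b (f y)) w)
    refine hf.ne_zero y (w + τ • 𝐞 a + υ • 𝐞 b) hy
      (im_add_smul_single_nonneg (im_add_smul_single_nonneg hw a hτ) b hυ) ?_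
    simp only [contract, Pi.sub_apply, Pi.smul_apply, smul_eq_mul] at hzero
    rw [(hf.multiAffine y).add_smul_add_smul]
    simp only [smul_eq_mul]
    linear_combination h + hzero

lemma splits (hp : RealStable p) (w : κ → ℝ) : (p w).Splits := by
  obtain ⟨f, hf⟩ := hp
  have no_root (y : ℂ) (hy : 0 < y.im) : aeval y (p w) ≠ 0 := by
    rw [← hf.apply_ofReal]
    exact hf.ne_zero y _ hy fun _ => by simp
  refine Splits.of_splits_map (algebraMap ℝ ℂ) (IsAlgClosed.splits _) fun y hy => ?_
  have hroot : aeval y (p w) = 0 := (mem_aroots'.mp hy).2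
  have hconj : aeval ((starRingEnd ℂ) y) (p w) = 0 := by rw [aeval_conj, hroot, map_zero]
  rcases lt_trichotomy y.im 0 with him | him | him
  · exact absurd hconj (no_root _ (by simpa using him))
  · exact ⟨y.re, Complex.ext rfl (by simp [him])⟩
  · exact absurd hroot (no_root y him)

protected lemma disjointMul {κ' : Type*} [DecidableEq κ'] {q : (κ' → ℝ) → ℝ[X]} (hp : RealStable p)
    (hq : RealStable q) : RealStable (disjointMul p q) := by
  obtain ⟨f, hf⟩ := hp
  obtain ⟨g, hg⟩ := hq
  refine ⟨fun y => disjointMul (f y) (g y),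
    fun y => (hf.multiAffine y).disjointMul (hg.multiAffine y), fun y w => ?_,
    fun y w hy hw => mul_ne_zero (hf.ne_zero y _ hy fun _ => hw _)
      (hg.ne_zero y _ hy fun _ => hw _)⟩
  rw [disjointMul, disjointMul, map_mul, ← hf.apply_ofReal, ← hg.apply_ofReal]
  rfl

end RealStable

/-- The Rayleigh inequality, satisfied by multi-affine real stable polynomials. It says that each
logarithmic derivative `∂_b h / h` is nonincreasing in every variable. -/
structure IsRayleigh (h : (κ → ℝ) → ℝ) : Prop where
  multiAffine : MultiAffine h
  mul_le : ∀ w a b, h w * partialDiff a (partialDiff b h) w ≤ partialDiff a h w * partialDiff b h w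

lemma RealStable.isRayleigh_eval {p : (κ → ℝ) → ℝ[X]} (hp : RealStable p) (Y : ℝ) :
    IsRayleigh fun w => (p w).eval Y := by
  refine ⟨fun w a s => ?_, fun w a b => ?_⟩
  · rw [hp.multiAffine, eval_add, eval_smul, partialDiff_eval]
  obtain ⟨f, hf⟩ := hp
  let Φ (y : ℂ) : ℂ := (aeval y (p w) + Complex.I * aeval y (partialDiff a p w)) *
    (starRingEnd ℂ) (aeval y (partialDiff b p w) +
      Complex.I * aeval y (partialDiff a (partialDiff b p) w))
  have upper (y : ℂ) (hy : 0 < y.im) : 0 ≤ (Φ y).im := by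
    refine im_mul_conj_nonneg fun υ hυ hzero => ?_
    refine hf.ne_zero y (Complex.ofReal ∘ w + Complex.I • 𝐞 a + υ • 𝐞 b) hy
      (im_add_smul_single_nonneg (im_add_smul_single_nonneg (fun _ => by simp) a (by simp)) b hυ) ?_
    rw [(hf.multiAffine y).add_smul_add_smul]
    simp only [hf.apply_ofReal, hf.partialDiff_apply_ofReal,
      hf.partialDiff_partialDiff_apply_ofReal, smul_eq_mul]
    linear_combination hzero
  have closed : IsClosed {y : ℂ | 0 ≤ (Φ y).im} :=
    isClosed_le continuous_const (by fun_prop)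
  have hY : (Y : ℂ) ∈ closure {y : ℂ | 0 < y.im} := by simp [Complex.closure_setOfPred_lt_im]
  have real : 0 ≤ (Φ Y).im := closure_minimal upper closed hY
  have value : (Φ Y).im = (partialDiff a p w).eval Y * (partialDiff b p w).eval Y
      - (p w).eval Y * (partialDiff a (partialDiff b p) w).eval Y := by
    simp only [Φ, aeval_complex_ofReal, map_add, map_mul, Complex.conj_I, Complex.conj_ofReal,
      Complex.mul_re, Complex.mul_im, Complex.add_re, Complex.add_im, Complex.neg_re,
      Complex.neg_im, Complex.I_re, Complex.I_im, Complex.ofReal_re, Complex.ofReal_im]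
    ring
  simp only [partialDiff_eval]
  linarith

end Stability

/-! ### Interlacing -/

section Interlacing

open Set

lemma concaveOn_log_sub {ρ b R : ℝ} (hρ : ρ ∉ Icc b R) :
    ConcaveOn ℝ (Icc b R) fun y => Real.log (y - ρ) := by
  simp only [sub_eq_add_neg]
  rcases not_and_or.mp hρ with hlt | hlt
  · exact (strictConcaveOn_log_Ioi.concaveOn.translate_left (-ρ)).subset
      (fun y hy => by simpa using (not_le.mp hlt).trans_le hy.1) (convex_Icc b R)
  · exact (strictConcaveOn_log_Iio.concaveOn.translate_left (-ρ)).subset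
      (fun y hy => by simpa using hy.2.trans_lt (not_le.mp hlt)) (convex_Icc b R)

lemma concaveOn_log_prod_sub {b R : ℝ} {s : Multiset ℝ} (hs : ∀ ρ ∈ s, ρ ∉ Icc b R) :
    ConcaveOn ℝ (Icc b R) fun y => Real.log (s.map (y - ·)).prod := by
  induction s using Multiset.induction with
  | empty => simpa using concaveOn_const 0 (convex_Icc b R)
  | cons ρ s ih =>
    have hs' : ∀ σ ∈ s, σ ∉ Icc b R := fun σ hσ => hs σ (Multiset.mem_cons_of_mem hσ)
    have hρ := hs ρ (Multiset.mem_cons_self ρ s)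
    refine ((concaveOn_log_sub hρ).add (ih hs')).congr fun y hy => ?_
    have hyρ : y - ρ ≠ 0 := sub_ne_zero.mpr fun h => hρ (h ▸ hy)
    have hys : (s.map (y - ·)).prod ≠ 0 := by
      refine Multiset.prod_ne_zero fun h => ?_
      obtain ⟨σ, hσ, h⟩ := Multiset.mem_map.mp h
      exact hs' σ hσ (sub_eq_zero.mp h ▸ hy)
    simp [Real.log_mul hyρ hys]

lemma concaveOn_log_eval {P : ℝ[X]} (hP : P.Splits) {b R : ℝ}
    (hpos : ∀ y ∈ Icc b R, 0 < P.eval y) : ConcaveOn ℝ (Icc b R) fun y => Real.log (P.eval y) := by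
  have hroots : ∀ ρ ∈ P.roots, ρ ∉ Icc b R := fun ρ hρ hmem =>
    (hpos ρ hmem).ne' (isRoot_of_mem_roots hρ)
  refine ((concaveOn_log_prod_sub hroots).add_const (Real.log P.leadingCoeff)).congr fun y hy => ?_
  have hy0 := (hpos y hy).ne'
  rw [hP.eval_eq_prod_roots] at hy0 ⊢
  rw [Real.log_mul (left_ne_zero_of_mul hy0) (right_ne_zero_of_mul hy0), add_comm]
  simp

lemma min_eval_endpoints_le {P : ℝ[X]} (hP : P.Splits) {b R : ℝ}
    (hpos : ∀ y ∈ Icc b R, 0 < P.eval y) {y : ℝ} (hy : y ∈ Icc b R) :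
    min (P.eval b) (P.eval R) ≤ P.eval y := by
  have hbR := hy.1.trans hy.2
  have hlog := (concaveOn_log_eval hP hpos).min_le_of_mem_Icc (left_mem_Icc.mpr hbR)
    (right_mem_Icc.mpr hbR) hy
  have hb := hpos b (left_mem_Icc.mpr hbR)
  have hR := hpos R (right_mem_Icc.mpr hbR)
  rcases min_le_iff.mp hlog with h | h
  · exact min_le_of_left_le ((Real.log_le_log_iff hb (hpos y hy)).mp h)
  · exact min_le_of_right_le ((Real.log_le_log_iff hR (hpos y hy)).mp h)

/-- Along the segment the values on `[b, R]` stay above the least of the four endpoint values, so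
positivity can never be lost. -/
lemma pos_of_splits_segment {P Q : ℝ[X]} {b R : ℝ} (hsplit : ∀ L ∈ segment ℝ P Q, L.Splits)
    (hP : ∀ y ∈ Icc b R, 0 < P.eval y) (hQb : 0 < Q.eval b) (hQR : 0 < Q.eval R) :
    ∀ y ∈ Icc b R, 0 < Q.eval y := by
  intro y₀ hy₀
  have hbR := hy₀.1.trans hy₀.2
  set L : ℝ → ℝ[X] := fun t => (1 - t) • P + t • Q
  set δ := min (min (P.eval b) (Q.eval b)) (min (P.eval R) (Q.eval R))
  have hPb := hP b (left_mem_Icc.mpr hbR)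
  have hPR := hP R (right_mem_Icc.mpr hbR)
  have hδ0 : 0 < δ := by simp [δ, hPb, hPR, hQb, hQR]
  have eval_L (t y : ℝ) : (L t).eval y = (1 - t) * P.eval y + t * Q.eval y := by
    simp [L]
  have improve : ∀ t ∈ Icc (0 : ℝ) 1, (∀ y ∈ Icc b R, 0 < (L t).eval y) →
      ∀ y ∈ Icc b R, δ ≤ (L t).eval y := by
    intro t ht hpos y hy
    have hmem : L t ∈ segment ℝ P Q :=
      ⟨1 - t, t, sub_nonneg.mpr ht.2, ht.1, sub_add_cancel 1 t, rfl⟩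
    refine le_trans (min_le_min ?_ ?_) (min_eval_endpoints_le (hsplit _ hmem) hpos hy) <;>
    · rw [eval_L]
      exact Convex.min_le_combo _ _ (sub_nonneg.mpr ht.2) ht.1 (sub_add_cancel 1 t)
  have hclosed : IsClosed ({t | ∀ y ∈ Icc b R, δ ≤ (L t).eval y} ∩ Icc 0 1) := by
    simp only [eval_L, Set.ofPred_forall]
    exact (isClosed_iInter fun y => isClosed_iInter fun _ =>
      isClosed_le (by fun_prop) (by fun_prop)).inter isClosed_Icc
  have hall : Icc 0 1 ⊆ {t | ∀ y ∈ Icc b R, δ ≤ (L t).eval y} := by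
    refine hclosed.Icc_subset_of_forall_mem_nhdsWithin
      (improve 0 (by simp) (by simpa [L] using hP)) fun t ht => ?_
    have hnear : ∀ᶠ t' in 𝓝 t, ∀ y ∈ Icc b R, 0 < (L t').eval y := by
      refine isCompact_Icc.eventually_forall_of_forall_eventually fun y hy => ?_
      have hcont : Continuous fun z : ℝ × ℝ => (L z.1).eval z.2 := by
        simp only [eval_L]
        fun_prop
      exact hcont.continuousAt.eventually (lt_mem_nhds <| hδ0.trans_le (ht.1 y hy))
    filter_upwards [nhdsWithin_le_nhds hnear, Ioo_mem_nhdsGT ht.2.2] with t' hpos ht'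
    exact improve t' ⟨ht.2.1.trans ht'.1.le, ht'.2.le⟩ hpos
  have hδQ := hall (right_mem_Icc.mpr zero_le_one) y₀ hy₀
  simpa [L] using hδ0.trans_le hδQ

lemma endpoint_pos_of_splits_segment {P Q M : ℝ[X]} {b : ℝ} (hM : M ∈ segment ℝ P Q)
    (hsplit : ∀ L ∈ segment ℝ P Q, L.Splits) (hMpos : ∀ Y, b ≤ Y → 0 < M.eval Y)
    (hPb : 0 < P.eval b) (hP : ∀ᶠ Y in atTop, 0 < P.eval Y) (Y : ℝ) (hY : b ≤ Y) :
    0 < P.eval Y := by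
  obtain ⟨R, hPR, hYR⟩ := (hP.and (eventually_ge_atTop Y)).exists
  have hsub : segment ℝ M P ⊆ segment ℝ P Q :=
    (convex_segment P Q).segment_subset hM (left_mem_segment ℝ P Q)
  exact pos_of_splits_segment (fun L hL => hsplit L (hsub hL)) (fun y hy => hMpos y hy.1) hPb hPR
    Y ⟨hY, hYR⟩

lemma exists_endpoint_pos_of_splits_segment {P Q M : ℝ[X]} {b : ℝ} (hM : M ∈ segment ℝ P Q)
    (hsplit : ∀ L ∈ segment ℝ P Q, L.Splits) (hMpos : ∀ Y, b ≤ Y → 0 < M.eval Y)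
    (hP : ∀ᶠ Y in atTop, 0 < P.eval Y) (hQ : ∀ᶠ Y in atTop, 0 < Q.eval Y) :
    (∀ Y, b ≤ Y → 0 < P.eval Y) ∨ ∀ Y, b ≤ Y → 0 < Q.eval Y := by
  by_cases hPb : 0 < P.eval b
  · exact .inl (endpoint_pos_of_splits_segment hM hsplit hMpos hPb hP)
  by_cases hQb : 0 < Q.eval b
  · rw [segment_symm] at hM hsplit
    exact .inr (endpoint_pos_of_splits_segment hM hsplit hMpos hQb hQ)
  obtain ⟨s, t, hs, ht, -, rfl⟩ := hM
  have := hMpos b le_rfl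
  rw [eval_add, eval_smul, eval_smul, smul_eq_mul, smul_eq_mul] at this
  nlinarith

end Interlacing

/-! ### Rounding along a contraction -/

section Rounding

variable {κ ι : Type*} [DecidableEq κ] [DecidableEq ι]

namespace RealStable

variable {p : (κ → ℝ) → ℝ[X]}

lemma splits_of_mem_segment (hp : RealStable p) (w : κ → ℝ) (a b : κ) {L : ℝ[X]}
    (hL : L ∈ segment ℝ (p w) (p (w + (-1 : ℝ) • 𝐞 a + (1 : ℝ) • 𝐞 b))) : L.Splits := by
  obtain ⟨s, t, hs, ht, hst, rfl⟩ := hL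
  obtain rfl : s = 1 - t := eq_sub_of_add_eq hst
  rw [hp.multiAffine.average_eq_contract]
  exact (hp.contract a b (mul_nonneg ht hs)).splits _

lemma exists_move_pos (hp : RealStable p) (htop : ∀ w, ∀ᶠ Y in atTop, 0 < (p w).eval Y)
    {x : ℝ} (hx : 0 ≤ x ∧ x ≤ 1) {a b : κ} {w : κ → ℝ} {β : ℝ}
    (hpos : ∀ Y, β ≤ Y → 0 < (contract a b (x * (1 - x)) p w).eval Y) :
    ∃ s, (s = x ∨ s = x - 1) ∧ ∀ Y, β ≤ Y → 0 < (p (w + s • 𝐞 a + (-s) • 𝐞 b)).eval Y := by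
  set u := w + x • 𝐞 a + (-x) • 𝐞 b with hu
  have hdown : u + (-1 : ℝ) • 𝐞 a + (1 : ℝ) • 𝐞 b = w + (x - 1) • 𝐞 a + (-(x - 1)) • 𝐞 b := by
    rw [hu]
    module
  have hcentre : u + (-x) • 𝐞 a + x • 𝐞 b = w := by
    rw [hu]
    module
  have hmem : contract a b (x * (1 - x)) p w ∈
      segment ℝ (p u) (p (u + (-1 : ℝ) • 𝐞 a + (1 : ℝ) • 𝐞 b)) :=
    ⟨1 - x, x, sub_nonneg.mpr hx.2, hx.1, sub_add_cancel 1 x, by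
      rw [hp.multiAffine.average_eq_contract, hcentre]⟩
  rcases exists_endpoint_pos_of_splits_segment hmem (fun L => hp.splits_of_mem_segment u a b) hpos
    (htop _) (htop _) with h | h
  · exact ⟨x, .inl rfl, h⟩
  · exact ⟨x - 1, .inr rfl, hdown ▸ h⟩

lemma eventually_contract_pos (hp : RealStable p) (htop : ∀ w, ∀ᶠ Y in atTop, 0 < (p w).eval Y)
    {x : ℝ} (hx : 0 ≤ x ∧ x ≤ 1) (a b : κ) (w : κ → ℝ) :
    ∀ᶠ Y in atTop, 0 < (contract a b (x * (1 - x)) p w).eval Y := by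
  set u := w + x • 𝐞 a + (-x) • 𝐞 b with hu
  have hcentre : w = u + (-x) • 𝐞 a + x • 𝐞 b := by
    rw [hu]
    module
  rw [hcentre, ← hp.multiAffine.average_eq_contract]
  filter_upwards [htop u, htop (u + (-1 : ℝ) • 𝐞 a + (1 : ℝ) • 𝐞 b)] with Y h₀ h₁
  rw [eval_add, eval_smul, eval_smul]
  exact convex_Ioi (0 : ℝ) h₀ h₁ (sub_nonneg.mpr hx.2) hx.1 (sub_add_cancel 1 x)

end RealStable

/-- The composition of the contractions of the pairs of variables `w_i`, `w'_i` for `i ∈ L`, with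
weights `r i`. -/
def contractAll {R E : Type*} [CommRing R] [AddCommGroup E] [Module R E] (r : ι → R) (L : List ι)
    (F : (ι ⊕ ι → R) → E) : (ι ⊕ ι → R) → E :=
  L.foldr (fun i G => contract (Sum.inl i) (Sum.inr i) (r i) G) F

namespace RealStable

variable {p : (ι ⊕ ι → ℝ) → ℝ[X]}

protected lemma contractAll (hp : RealStable p) {r : ι → ℝ} (hr : ∀ i, 0 ≤ r i) (L : List ι) :
    RealStable (contractAll r L p) := by
  induction L with
  | nil => exact hp
  | cons i L ih => exact ih.contract _ _ (hr i)

variable {x : ι → ℝ}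

lemma eventually_contractAll_pos (hp : RealStable p)
    (htop : ∀ w, ∀ᶠ Y in atTop, 0 < (p w).eval Y) (hx : ∀ i, 0 ≤ x i ∧ x i ≤ 1) (L : List ι) :
    ∀ w, ∀ᶠ Y in atTop, 0 < (contractAll (fun i => x i * (1 - x i)) L p w).eval Y := by
  induction L with
  | nil => exact htop
  | cons i L ih =>
    exact (hp.contractAll (fun i => mul_nonneg (hx i).1 (sub_nonneg.mpr (hx i).2)) L
      ).eventually_contract_pos ih (hx i) _ _

lemma exists_moves_pos (hp : RealStable p) (htop : ∀ w, ∀ᶠ Y in atTop, 0 < (p w).eval Y)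
    (hx : ∀ i, 0 ≤ x i ∧ x i ≤ 1) {L : List ι} (hL : L.Nodup) {w : ι ⊕ ι → ℝ} {β : ℝ}
    (hpos : ∀ Y, β ≤ Y → 0 < (contractAll (fun i => x i * (1 - x i)) L p w).eval Y) :
    ∃ u : ι → ℝ, (∀ i ∈ L, u i = x i ∨ u i = x i - 1) ∧ (∀ i ∉ L, u i = 0) ∧
      ∀ Y, β ≤ Y → 0 < (p (w + Sum.elim u (-u))).eval Y := by
  induction L generalizing w with
  | nil => exact ⟨0, by simp, by simp, by simpa [contractAll] using hpos⟩
  | cons i L ih =>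
    obtain ⟨hiL, hL⟩ := List.nodup_cons.mp hL
    obtain ⟨s, hs, hspos⟩ := (hp.contractAll
      (fun i => mul_nonneg (hx i).1 (sub_nonneg.mpr (hx i).2)) L).exists_move_pos
      (hp.eventually_contractAll_pos htop hx L) (hx i) hpos
    obtain ⟨u, huL, hu0, hupos⟩ := ih hL hspos
    have hmove : w + s • 𝐞 (Sum.inl i) + (-s) • 𝐞 (Sum.inr i) + Sum.elim u (-u) =
        w + Sum.elim (u + s • 𝐞 i) (-(u + s • 𝐞 i)) := by
      funext c
      rcases c with c | c <;> simp [Pi.single_apply] <;> ring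
    refine ⟨u + s • 𝐞 i, fun j hj => ?_, fun j hj => ?_, hmove ▸ hupos⟩
    · rcases List.mem_cons.mp hj with rfl | hj
      · simpa [hu0 _ hiL] using hs
      · simpa [Pi.single_apply, ne_of_mem_of_not_mem hj hiL] using huL j hj
    · obtain ⟨hji, hjL⟩ := not_or.mp (List.mem_cons.not.mp hj)
      simp [hji, hu0 j hjL]

end RealStable
end Rounding

/-! ### The barrier argument -/

section Barrier

variable {κ ι : Type*} [DecidableEq κ] [DecidableEq ι]

/-- On the orthant above `u` the function `h` is positive, with logarithmic derivatives at most `φ`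
in every direction. -/
def BarrierOn (φ : ℝ) (u : κ → ℝ) (h : (κ → ℝ) → ℝ) : Prop :=
  ∀ w, u ≤ w → 0 < h w ∧ ∀ c, partialDiff c h w ≤ φ * h w

lemma slope_nonneg {p q : ℝ} (h : ∀ s : ℝ, 0 ≤ s → 0 ≤ p + s * q) : 0 ≤ q := by
  by_contra! hq
  have hs := h ((|p| + 1) / -q) (div_nonneg (by positivity) (neg_nonneg.mpr hq.le))
  rw [div_neg, neg_mul, div_mul_cancel₀ _ hq.ne] at hs
  linarith [le_abs_self p]

lemma le_add_smul_single {u w : κ → ℝ} (huw : u ≤ w) (a : κ) {s : ℝ} (hs : 0 ≤ s) :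
    u ≤ w + s • 𝐞 a :=
  huw.trans (le_add_of_nonneg_right (smul_nonneg hs (Pi.single_nonneg.mpr zero_le_one)))

namespace BarrierOn

variable {h : (κ → ℝ) → ℝ} {φ : ℝ} {u w : κ → ℝ}

lemma partialDiff_nonneg (hh : MultiAffine h) (hu : BarrierOn φ u h) (huw : u ≤ w) (a : κ) :
    0 ≤ partialDiff a h w :=
  slope_nonneg fun s hs => by
    rw [← smul_eq_mul, ← hh]
    exact (hu _ (le_add_smul_single huw a hs)).1.le

lemma partialDiff_partialDiff_nonneg (hh : MultiAffine h) (hu : BarrierOn φ u h) (huw : u ≤ w)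
    (a b : κ) : 0 ≤ partialDiff a (partialDiff b h) w :=
  slope_nonneg fun s hs => by
    rw [← smul_eq_mul, ← hh.partialDiff]
    exact hu.partialDiff_nonneg hh (le_add_smul_single huw a hs) b

end BarrierOn

/-- The Wronskian is `A + 2 B z + C z ^ 2` with `α C = S B - D A`, so that its discriminant
bounds `B` by `2 φ A`. -/
lemma wronskian_coeff_bounds {α S D α₁ S₁ D₁ φ : ℝ} (hα : 0 < α) (hS : 0 ≤ S) (hD : 0 ≤ D)
    (hSφ : S ≤ 2 * φ * α)
    (hW : ∀ z, (α + z * S + z ^ 2 * D) * (S₁ + 2 * z * D₁) ≤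
      (S + 2 * z * D) * (α₁ + z * S₁ + z ^ 2 * D₁)) :
    0 ≤ S * α₁ - α * S₁ ∧ 0 ≤ D * α₁ - α * D₁ ∧
      D * α₁ - α * D₁ ≤ 2 * φ * (S * α₁ - α * S₁) := by
  set A := S * α₁ - α * S₁ with hA
  set B := D * α₁ - α * D₁ with hB
  set C := D * S₁ - S * D₁ with hC
  have hA0 : 0 ≤ A := by
    have := hW 0
    linarith
  have hdiscr : B ^ 2 ≤ A * C := by
    have := discrim_le_zero (a := C) (b := 2 * B) (c := A) fun z => by
      have := hW z
      rw [hA, hB, hC]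
      linarith
    rw [discrim] at this
    linarith
  have hBA : α * B * B ≤ S * A * B := by
    have hαC : α * C = S * B - D * A := by
      rw [hA, hB, hC]
      ring
    have hA2 : α * (A * C) = S * A * B - D * A ^ 2 := by linear_combination A * hαC
    nlinarith [mul_le_mul_of_nonneg_left hdiscr hα.le, mul_nonneg hD (sq_nonneg A), hA2]
  have hB0 : 0 ≤ B := by
    by_contra! hB0
    have : S * A * B ≤ 0 := mul_nonpos_of_nonneg_of_nonpos (mul_nonneg hS hA0) hB0.le
    nlinarith [mul_pos hα (mul_pos_of_neg_of_neg hB0 hB0)]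
  refine ⟨hA0, hB0, ?_⟩
  rcases hB0.eq_or_lt with h0 | hB0
  · have hφ : 0 ≤ φ := by nlinarith
    rw [← h0]
    positivity
  · have h1 : α * B ≤ S * A := le_of_mul_le_mul_right hBA hB0
    have h2 : S * A ≤ 2 * φ * α * A := mul_le_mul_of_nonneg_right hSφ hA0
    exact le_of_mul_le_mul_left (by linarith) hα

lemma contracted_quadratic_pos {α S D φ r d : ℝ} (hα : 0 < α) (hS : 0 ≤ S) (hD : 0 ≤ D)
    (hSφ : S ≤ 2 * φ * α) (hαD : 4 * (α * D) ≤ S ^ 2) (hr : 0 ≤ r) (hd : 2 * φ * r ≤ d) :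
    0 < α + d * S + (d ^ 2 - r) * D := by
  have hφ : 0 ≤ φ := by nlinarith
  have hd0 : 0 ≤ d := hd.trans' (by positivity)
  have hDS : 2 * D ≤ φ * S := le_of_mul_le_mul_left (by nlinarith) hα
  have hrD : r * D ≤ d * S := by
    nlinarith [mul_le_mul_of_nonneg_left hDS hr, mul_le_mul_of_nonneg_right hd hS,
      mul_nonneg hr hD]
  nlinarith [mul_nonneg (sq_nonneg d) hD, mul_nonneg hd0 hS]

lemma contracted_ratio_le {α S D α₁ S₁ D₁ φ r d : ℝ} (hα : 0 < α) (hS : 0 ≤ S) (hD : 0 ≤ D)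
    (hSφ : S ≤ 2 * φ * α) (hαD : 4 * (α * D) ≤ S ^ 2) (hα₁ : α₁ ≤ φ * α)
    (hW : ∀ z, (α + z * S + z ^ 2 * D) * (S₁ + 2 * z * D₁) ≤
      (S + 2 * z * D) * (α₁ + z * S₁ + z ^ 2 * D₁)) (hr : 0 ≤ r) (hd : 2 * φ * r ≤ d) :
    α₁ + d * S₁ + (d ^ 2 - r) * D₁ ≤ φ * (α + d * S + (d ^ 2 - r) * D) := by
  obtain ⟨hA, hB, hBA⟩ := wronskian_coeff_bounds hα hS hD hSφ hW
  have hG := contracted_quadratic_pos hα hS hD hSφ hαD hr hd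
  have hrB : r * (D * α₁ - α * D₁) ≤ d * (S * α₁ - α * S₁) := by
    nlinarith [mul_le_mul_of_nonneg_left hBA hr, mul_le_mul_of_nonneg_right hd hA]
  have hfirst : α * (α₁ + d * S₁ + (d ^ 2 - r) * D₁) ≤ α₁ * (α + d * S + (d ^ 2 - r) * D) := by
    nlinarith [mul_nonneg (sq_nonneg d) hB]
  have hsecond := mul_le_mul_of_nonneg_right hα₁ hG.le
  exact le_of_mul_le_mul_left (by linarith) hα

lemma IsRayleigh.wronskian_le {h : (κ → ℝ) → ℝ} (hh : IsRayleigh h) (w : κ → ℝ) (a b c : κ)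
    (z : ℝ) :
    (h w + z * (partialDiff a h w + partialDiff b h w) + z ^ 2 * partialDiff a (partialDiff b h) w)
        * (partialDiff a (partialDiff c h) w + partialDiff b (partialDiff c h) w
          + 2 * z * partialDiff a (partialDiff b (partialDiff c h)) w) ≤
      (partialDiff a h w + partialDiff b h w + 2 * z * partialDiff a (partialDiff b h) w)
        * (partialDiff c h w
          + z * (partialDiff a (partialDiff c h) w + partialDiff b (partialDiff c h) w)
          + z ^ 2 * partialDiff a (partialDiff b (partialDiff c h)) w) := by
  set wz := w + z • 𝐞 a + z • 𝐞 b with hwz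
  have hwz' : wz = w + z • 𝐞 b + z • 𝐞 a := add_right_comm _ _ _
  have value {F : (κ → ℝ) → ℝ} (hF : MultiAffine F) : F wz =
      F w + z * (partialDiff a F w + partialDiff b F w)
        + z ^ 2 * partialDiff a (partialDiff b F) w := by
    rw [hwz, hF.add_smul_add_smul]
    simp only [smul_eq_mul]
    ring
  have slopes {F : (κ → ℝ) → ℝ} (hF : MultiAffine F) : partialDiff a F wz + partialDiff b F wz =
      partialDiff a F w + partialDiff b F w + 2 * z * partialDiff a (partialDiff b F) w := by
    nth_rw 2 [hwz']
    rw [hwz, hF.partialDiff_add_smul_add_smul, hF.partialDiff_add_smul_add_smul,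
      partialDiff_comm b a]
    simp only [smul_eq_mul]
    ring
  have hc := hh.multiAffine.partialDiff c
  rw [← value hh.multiAffine, ← value hc, ← slopes hh.multiAffine, ← slopes hc, mul_add, add_mul]
  exact add_le_add (hh.mul_le wz a c) (hh.mul_le wz b c)

namespace BarrierOn

protected lemma contract {h : (κ → ℝ) → ℝ} (hh : IsRayleigh h) {φ : ℝ} {u : κ → ℝ}
    (hu : BarrierOn φ u h) (a b : κ) {r d : ℝ} (hr : 0 ≤ r) (hd : 2 * φ * r ≤ d) :
    BarrierOn φ (u + d • 𝐞 a + d • 𝐞 b) (contract a b r h) := by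
  intro w hw
  obtain ⟨w₀, rfl, huw₀⟩ : ∃ w₀, w = w₀ + d • 𝐞 a + d • 𝐞 b ∧ u ≤ w₀ := by
    refine ⟨w - d • 𝐞 b - d • 𝐞 a, by abel, ?_⟩
    rw [le_sub_iff_add_le, le_sub_iff_add_le]
    exact hw
  have hm := hh.multiAffine
  obtain ⟨hα, hφ⟩ := hu w₀ huw₀
  have ha := hu.partialDiff_nonneg hm huw₀ a
  have hb := hu.partialDiff_nonneg hm huw₀ b
  have hD := hu.partialDiff_partialDiff_nonneg hm huw₀ a b
  have hSφ : partialDiff a h w₀ + partialDiff b h w₀ ≤ 2 * φ * h w₀ := by linarith [hφ a, hφ b]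
  have hαD : 4 * (h w₀ * partialDiff a (partialDiff b h) w₀) ≤
      (partialDiff a h w₀ + partialDiff b h w₀) ^ 2 := by
    nlinarith [hh.mul_le w₀ a b, sq_nonneg (partialDiff a h w₀ - partialDiff b h w₀)]
  refine ⟨?_, fun c => ?_⟩
  · rw [hm.contract_add_smul_add_smul]
    exact contracted_quadratic_pos hα (add_nonneg ha hb) hD hSφ hαD hr hd
  · rw [partialDiff_contract, hm.contract_add_smul_add_smul,
      (hm.partialDiff c).contract_add_smul_add_smul]
    exact contracted_ratio_le hα (add_nonneg ha hb) hD hSφ hαD (hφ c)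
      (hh.wronskian_le w₀ a b c) hr hd

protected lemma contractAll {p : (ι ⊕ ι → ℝ) → ℝ[X]} (hp : RealStable p) {Y φ : ℝ}
    {u : ι ⊕ ι → ℝ} (hu : BarrierOn φ u fun w => (p w).eval Y) {r d : ι → ℝ} (hr : ∀ i, 0 ≤ r i)
    (hd : ∀ i, 2 * φ * r i ≤ d i) (L : List ι) :
    BarrierOn φ (u + (L.map fun i => d i • 𝐞 (Sum.inl i) + d i • 𝐞 (Sum.inr i)).sum)
      fun w => (contractAll r L p w).eval Y := by
  induction L with
  | nil => simpa [contractAll] using hu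
  | cons i L ih =>
    have hstep := ih.contract ((hp.contractAll hr L).isRayleigh_eval Y) (Sum.inl i) (Sum.inr i)
      (hr i) (hd i)
    rw [contract_eval, add_assoc, add_assoc, add_comm (List.sum _), ← List.sum_cons] at hstep
    exact hstep

protected lemma disjointMul {κ' : Type*} [DecidableEq κ'] {g : (κ → ℝ) → ℝ} {h : (κ' → ℝ) → ℝ}
    {φ : ℝ} {u : κ → ℝ} {u' : κ' → ℝ} (hg : BarrierOn φ u g) (hh : BarrierOn φ u' h) :
    BarrierOn φ (Sum.elim u u') (disjointMul g h) := by
  intro w hw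
  obtain ⟨hgpos, hgφ⟩ := hg (w ∘ Sum.inl) fun a => hw (Sum.inl a)
  obtain ⟨hhpos, hhφ⟩ := hh (w ∘ Sum.inr) fun a => hw (Sum.inr a)
  refine ⟨mul_pos hgpos hhpos, fun c => ?_⟩
  rw [disjointMul, ← mul_assoc]
  rcases c with c | c
  · rw [partialDiff_inl_disjointMul]
    exact mul_le_mul_of_nonneg_right (hgφ c) hhpos.le
  · rw [partialDiff_inr_disjointMul, mul_right_comm, mul_comm]
    exact mul_le_mul_of_nonneg_right (hhφ c) hgpos.le

end BarrierOn
end Barrier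

/-! ### Determinants of weighted Gram matrices -/

section WeightedGram

variable {ι ν R : Type*} [Fintype ι] [CommRing R]

/-- The matrix `∑ tᵢ vᵢ vᵢᵀ`. -/
def weightedGram (v : ι → ν → R) (t : ι → R) : Matrix ν ν R := ∑ i, t i • vecMulVec (v i) (v i)

lemma weightedGram_add (v : ι → ν → R) (s t : ι → R) :
    weightedGram v (s + t) = weightedGram v s + weightedGram v t := by
  simp only [weightedGram, Pi.add_apply, add_smul, Finset.sum_add_distrib]

lemma weightedGram_smul (v : ι → ν → R) (s : R) (t : ι → R) :
    weightedGram v (s • t) = s • weightedGram v t := by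
  simp only [weightedGram, Pi.smul_apply, smul_assoc, Finset.smul_sum]

lemma weightedGram_neg (v : ι → ν → R) (t : ι → R) :
    weightedGram v (-t) = -weightedGram v t := by
  simpa only [neg_one_smul] using weightedGram_smul v (-1) t

lemma weightedGram_sub (v : ι → ν → R) (s t : ι → R) :
    weightedGram v (s - t) = weightedGram v s - weightedGram v t := by
  rw [sub_eq_add_neg, weightedGram_add, weightedGram_neg, ← sub_eq_add_neg]

lemma weightedGram_single [DecidableEq ι] (v : ι → ν → R) (a : ι) :
    weightedGram v (𝐞 a) = vecMulVec (v a) (v a) := by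
  simp [weightedGram, Pi.single_apply, ite_smul]

lemma weightedGram_map {S : Type*} [CommRing S] (f : R →+* S) (v : ι → ν → R) (t : ι → R) :
    (weightedGram v t).map f = weightedGram (fun i => f ∘ v i) (f ∘ t) := by
  ext i j
  simp [weightedGram, Matrix.sum_apply, vecMulVec_apply]

lemma weightedGram_submatrix {ν' : Type*} (v : ι → ν → R) (t : ι → R) (e : ν' → ν) :
    (weightedGram v t).submatrix e e = weightedGram (fun i => v i ∘ e) t := by
  ext i j
  simp [weightedGram, Matrix.sum_apply, vecMulVec_apply]

lemma dotProduct_weightedGram_mulVec [Fintype ν] (v : ι → ν → R) (t : ι → R) (p u : ν → R) :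
    p ⬝ᵥ (weightedGram v t *ᵥ u) = ∑ i, t i * ((p ⬝ᵥ v i) * (v i ⬝ᵥ u)) := by
  rw [weightedGram, sum_mulVec, dotProduct_sum]
  refine Finset.sum_congr rfl fun i _ => ?_
  rw [smul_mulVec, vecMulVec_mulVec, dotProduct_smul, dotProduct_smul, op_smul_eq_mul, smul_eq_mul]

lemma weightedGram_isHermitian [StarRing R] [TrivialStar R] (v : ι → ν → R) (t : ι → R) :
    (weightedGram v t).IsHermitian := by
  ext i j
  simp [weightedGram, Matrix.sum_apply, vecMulVec_apply, mul_comm]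

lemma weightedGram_posSemidef [Finite ν] (v : ι → ν → ℝ) {t : ι → ℝ} (ht : 0 ≤ t) :
    (weightedGram v t).PosSemidef :=
  posSemidef_sum _ fun i _ => by simpa using (posSemidef_vecMulVec_self_star (v i)).smul (ht i)

variable [Fintype ν] [DecidableEq ν]

lemma posSemidef_smul_one_sub_weightedGram_iff {v : ι → ν → ℝ} {t : ι → ℝ} {Λ : ℝ} :
    (Λ • 1 - weightedGram v t).PosSemidef ↔
      ∀ u, ∑ i, t i * (v i ⬝ᵥ u) ^ 2 ≤ Λ * (u ⬝ᵥ u) := by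
  have hform (u : ν → ℝ) : star u ⬝ᵥ ((Λ • 1 - weightedGram v t) *ᵥ u) =
      Λ * (u ⬝ᵥ u) - ∑ i, t i * (v i ⬝ᵥ u) ^ 2 := by
    rw [star_trivial, sub_mulVec, dotProduct_sub, smul_mulVec, one_mulVec, dotProduct_smul,
      smul_eq_mul, dotProduct_weightedGram_mulVec]
    simp only [dotProduct_comm u (v _), sq]
  have hH : (Λ • 1 - weightedGram v t).IsHermitian :=
    (isHermitian_one.smul (IsSelfAdjoint.all Λ)).sub (weightedGram_isHermitian v t)
  simp only [posSemidef_iff_dotProduct_mulVec, hH, true_and, hform, sub_nonneg]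

/-- Bordering `M` by the column `-s u` and the row `w` gives a matrix with the same determinant, in
which `s` occurs in a single column. -/
lemma det_add_smul_vecMulVec_s2 (M : Matrix ν ν R) (u w : ν → R) (s : R) :
    (M + s • vecMulVec u w).det = M.det + s * ((M + vecMulVec u w).det - M.det) := by
  set E : Matrix (ν ⊕ Unit) (ν ⊕ Unit) R := fromBlocks M 0 (replicateRow Unit w) 0 with hE
  have affine (s : R) : (M + s • vecMulVec u w).det =
      (E.updateCol (Sum.inr ()) (Sum.elim 0 1)).det
        + s * (E.updateCol (Sum.inr ()) (Sum.elim (-u) 0)).det := by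
    have hblocks : fromBlocks M (replicateCol Unit (-(s • u))) (replicateRow Unit w) 1 =
        E.updateCol (Sum.inr ())
          (Sum.elim (0 : ν → R) (1 : Unit → R) + s • Sum.elim (-u) (0 : Unit → R)) := by
      ext i j
      rcases i with i | i <;> rcases j with j | j <;> simp [hE]
    have hschur : M + s • vecMulVec u w =
        M - replicateCol Unit (-(s • u)) * replicateRow Unit w := by
      ext i j
      simp [Matrix.mul_apply, vecMulVec_apply, mul_assoc]
    rw [hschur, ← det_fromBlocks_one₂₂, hblocks, det_updateCol_add, det_updateCol_smul]
  have hzero := affine 0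
  have hone := affine 1
  rw [zero_smul, add_zero, zero_mul, add_zero] at hzero
  rw [one_smul] at hone
  rw [affine s, hone, hzero]
  ring

lemma multiAffine_det_add_weightedGram [DecidableEq ι] (M : Matrix ν ν R) (v : ι → ν → R) :
    MultiAffine fun t => (M + weightedGram v t).det := fun t a s => by
  simp only [partialDiff, weightedGram_add, weightedGram_smul, weightedGram_single, ← add_assoc]
  exact det_add_smul_vecMulVec_s2 _ _ _ _

/-- The polynomial `det (X • 1 + ∑ tᵢ vᵢ vᵢᵀ)` in `X`. -/
noncomputable def gramPolynomial (v : ι → ν → R) (t : ι → R) : R[X] := (-weightedGram v t).charpoly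

lemma eval_gramPolynomial (v : ι → ν → R) (t : ι → R) (y : R) :
    (gramPolynomial v t).eval y = (y • 1 + weightedGram v t).det := by
  rw [gramPolynomial, eval_charpoly, sub_neg_eq_add, scalar_apply, smul_one_eq_diagonal]

lemma aeval_gramPolynomial {A : Type*} [CommRing A] [Algebra R A] (v : ι → ν → R) (t : ι → R)
    (y : A) : aeval y (gramPolynomial v t) =
      (y • 1 + weightedGram (fun i => algebraMap R A ∘ v i) (algebraMap R A ∘ t)).det := by
  rw [← eval_gramPolynomial, gramPolynomial, gramPolynomial, ← weightedGram_map,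
    ← eval_map_algebraMap, ← charpoly_map]
  congr 2
  ext i j
  simp

lemma eventually_gramPolynomial_pos (v : ι → ν → ℝ) (t : ι → ℝ) :
    ∀ᶠ Y in atTop, 0 < (gramPolynomial v t).eval Y := by
  have hmonic : (gramPolynomial v t).Monic := charpoly_monic _
  rcases Nat.eq_zero_or_pos (gramPolynomial v t).natDegree with hd | hd
  · simp [hmonic.natDegree_eq_zero.mp hd]
  · exact (tendsto_atTop_of_leadingCoeff_nonneg _ (natDegree_pos_iff_degree_pos.mp hd)
      (by simp [hmonic.leadingCoeff])).eventually_gt_atTop 0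

/-- The quadratic form at a kernel vector `u` has imaginary part at least `y.im * ‖u‖ ^ 2`. -/
lemma det_smul_one_add_weightedGram_ne_zero (v : ι → ν → ℝ) {y : ℂ} (hy : 0 < y.im) {t : ι → ℂ}
    (ht : ∀ i, 0 ≤ (t i).im) :
    (y • 1 + weightedGram (fun i => Complex.ofReal ∘ v i) t).det ≠ 0 := by
  intro hdet
  obtain ⟨u, hu, hker⟩ := exists_mulVec_eq_zero_iff.mpr hdet
  have hform := congrArg (star u ⬝ᵥ ·) hker
  simp only [add_mulVec, smul_mulVec, one_mulVec, dotProduct_add, dotProduct_smul, smul_eq_mul,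
    dotProduct_weightedGram_mulVec, dotProduct_zero] at hform
  have hterm (i : ι) : (star u ⬝ᵥ (Complex.ofReal ∘ v i)) * ((Complex.ofReal ∘ v i) ⬝ᵥ u) =
      (Complex.normSq ((Complex.ofReal ∘ v i) ⬝ᵥ u) : ℂ) := by
    have hstar : star (Complex.ofReal ∘ v i) = Complex.ofReal ∘ v i :=
      funext fun j => Complex.conj_ofReal (v i j)
    rw [Complex.normSq_eq_conj_mul_self, starRingEnd_apply, ← star_dotProduct_star, hstar,
      dotProduct_comm]
  have hnorm : star u ⬝ᵥ u = ((∑ j, Complex.normSq (u j) : ℝ) : ℂ) := by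
    simp [dotProduct, Complex.normSq_eq_conj_mul_self]
  have hu0 : 0 < ∑ j, Complex.normSq (u j) := by
    obtain ⟨j, hj⟩ := Function.ne_iff.mp hu
    exact Finset.sum_pos' (fun j _ => Complex.normSq_nonneg _)
      ⟨j, Finset.mem_univ _, Complex.normSq_pos.mpr hj⟩
  have him := congrArg Complex.im hform
  simp only [hterm, hnorm, Complex.zero_im, Complex.add_im, Complex.im_sum,
    Complex.im_mul_ofReal] at him
  have hsum : 0 ≤ ∑ i, (t i).im * Complex.normSq ((Complex.ofReal ∘ v i) ⬝ᵥ u) :=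
    Finset.sum_nonneg fun i _ => mul_nonneg (ht i) (Complex.normSq_nonneg _)
  exact (add_pos_of_pos_of_nonneg (mul_pos hy hu0) hsum).ne' him

lemma realStable_gramPolynomial [DecidableEq ι] (v : ι → ν → ℝ) : RealStable (gramPolynomial v) :=
  ⟨fun y t => (y • 1 + weightedGram (fun i => Complex.ofReal ∘ v i) t).det,
    fun _ => multiAffine_det_add_weightedGram _ _, fun y t => (aeval_gramPolynomial v t y).symm,
    fun _ _ hy ht => det_smul_one_add_weightedGram_ne_zero v hy ht⟩

lemma det_pos_of_posSemidef_sub {M : Matrix ν ν ℝ} {c : ℝ} (hc : 0 < c)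
    (hM : (M - c • 1).PosSemidef) : 0 < M.det := by
  simpa using (PosDef.posSemidef_add hM (PosDef.one.smul hc)).det_pos

/-- With `u = M⁻¹ v`, the bound `vᵀ u ≤ A / c` follows from `c uᵀ u ≤ vᵀ u` and
`0 ≤ ‖v - c u‖ ^ 2`. -/
lemma det_add_vecMulVec_sub_det_le {M : Matrix ν ν ℝ} {c A : ℝ} (hc : 0 < c)
    (hM : (M - c • 1).PosSemidef) {v : ν → ℝ} (hv : v ⬝ᵥ v ≤ A) :
    (M + vecMulVec v v).det - M.det ≤ A / c * M.det := by
  have hdet := det_pos_of_posSemidef_sub hc hM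
  set u := M⁻¹ *ᵥ v with hu
  have hMu : M *ᵥ u = v := by
    rw [hu, mulVec_mulVec, mul_nonsing_inv _ hdet.ne'.isUnit, one_mulVec]
  have hupdate : (M + vecMulVec v v).det = M.det * (1 + v ⬝ᵥ u) := by
    rw [vecMulVec_eq Unit, det_add_replicateCol_mul_replicateRow (ι := Unit) hdet.ne'.isUnit,
      det_unique (n := Unit), Matrix.mul_assoc, ← replicateCol_mulVec, ← hu]
    simp [replicateRow_mul_replicateCol_apply]
  have hform : c * (u ⬝ᵥ u) ≤ v ⬝ᵥ u := by
    have h := hM.dotProduct_mulVec_nonneg u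
    rw [star_trivial, sub_mulVec, hMu, smul_mulVec, one_mulVec, dotProduct_sub, dotProduct_smul,
      smul_eq_mul, dotProduct_comm u v] at h
    linarith
  have hsq : 0 ≤ v ⬝ᵥ v - 2 * c * (v ⬝ᵥ u) + c * (c * (u ⬝ᵥ u)) := by
    have h : 0 ≤ (v - c • u) ⬝ᵥ (v - c • u) := by
      simpa only [star_trivial] using dotProduct_star_self_nonneg (v - c • u)
    simp only [dotProduct_sub, sub_dotProduct, dotProduct_smul, smul_dotProduct, smul_eq_mul,
      dotProduct_comm u v] at h
    linarith
  have hbound : v ⬝ᵥ u ≤ A / c := by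
    rw [le_div_iff₀ hc]
    linarith [mul_le_mul_of_nonneg_left hform hc.le]
  rw [hupdate]
  linarith [mul_le_mul_of_nonneg_right hbound hdet.le]

/-- A negative eigenvalue `μ` of `b • 1 + M` would give a zero of the determinant at `b - μ`. -/
lemma posSemidef_of_det_ne_zero {M : Matrix ν ν ℝ} (hM : M.IsHermitian) {b : ℝ}
    (h : ∀ Y, b ≤ Y → (Y • 1 + M).det ≠ 0) : (b • 1 + M).PosSemidef := by
  have hH : (b • 1 + M).IsHermitian := (isHermitian_one.smul (IsSelfAdjoint.all b)).add hM
  refine hH.posSemidef_iff_eigenvalues_nonneg.mpr fun i => ?_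
  by_contra! hneg
  refine h (b - hH.eigenvalues i) (by simpa using hneg.le)
    (exists_mulVec_eq_zero_iff.mp ⟨⇑(hH.eigenvectorBasis i), ?_, ?_⟩)
  · exact fun h0 => hH.eigenvectorBasis.orthonormal.ne_zero i (by ext j; exact congrFun h0 j)
  · rw [sub_smul, sub_add_eq_add_sub, sub_mulVec, smul_mulVec, one_mulVec,
      hH.mulVec_eigenvectorBasis, sub_self]

end WeightedGram

/-! ### Rounding matrices -/

section MatrixRounding

variable {ι ν ν' : Type*} [Fintype ι]

lemma weightedGram_sqrt {a : ι → ℝ} (ha : 0 ≤ a) (t : ι → ℝ) :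
    weightedGram (fun i (_ : Unit) => √(a i)) t = (∑ i, a i * t i) • 1 := by
  ext
  simp [weightedGram, Matrix.sum_apply, vecMulVec_apply, Real.mul_self_sqrt (ha _), mul_comm]

lemma posSemidef_smul_one_unit_iff {s : ℝ} :
    (s • (1 : Matrix Unit Unit ℝ)).PosSemidef ↔ 0 ≤ s :=
  ⟨fun h => by simpa using h.diag_nonneg (i := ()), PosSemidef.one.smul⟩

variable [DecidableEq ν] [DecidableEq ν']

lemma posSemidef_smul_one_add_weightedGram_comp {v : ι → ν → ℝ} {t : ι → ℝ} {b : ℝ} {e : ν' → ν}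
    (he : e.Injective) (h : (b • 1 + weightedGram v t).PosSemidef) :
    (b • 1 + weightedGram (fun i => v i ∘ e) t).PosSemidef := by
  simpa only [submatrix_add, submatrix_smul, submatrix_one e he, weightedGram_submatrix,
    Pi.add_apply, Pi.smul_apply] using h.submatrix e

/-- Two families are rounded simultaneously through the vectors `(v i, w i)`, since
`(a + b) ^ 2 ≤ 2 a ^ 2 + 2 b ^ 2`. -/
lemma posSemidef_smul_one_sub_weightedGram_sumElim
    [Finite ν] [Finite ν'] {v : ι → ν → ℝ} {w : ι → ν' → ℝ} {x : ι → ℝ} (hx : 0 ≤ x) {Λ : ℝ}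
    (hv : (Λ • 1 - weightedGram v x).PosSemidef) (hw : (Λ • 1 - weightedGram w x).PosSemidef) :
    ((2 * Λ) • 1 - weightedGram (fun i => Sum.elim (v i) (w i)) x).PosSemidef := by
  cases nonempty_fintype ν
  cases nonempty_fintype ν'
  rw [posSemidef_smul_one_sub_weightedGram_iff] at hv hw ⊢
  intro u
  obtain ⟨u, u', rfl⟩ : ∃ u₁ u₂, u = Sum.elim u₁ u₂ := ⟨_, _, (Sum.elim_comp_inl_inr u).symm⟩
  simp only [sumElim_dotProduct_sumElim]
  calc ∑ i, x i * (v i ⬝ᵥ u + w i ⬝ᵥ u') ^ 2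
      ≤ ∑ i, (2 * (x i * (v i ⬝ᵥ u) ^ 2) + 2 * (x i * (w i ⬝ᵥ u') ^ 2)) :=
        Finset.sum_le_sum fun i _ => by
          linarith [mul_le_mul_of_nonneg_left (add_sq_le (a := v i ⬝ᵥ u) (b := w i ⬝ᵥ u')) (hx i)]
    _ = 2 * ∑ i, x i * (v i ⬝ᵥ u) ^ 2 + 2 * ∑ i, x i * (w i ⬝ᵥ u') ^ 2 := by
        rw [Finset.sum_add_distrib, Finset.mul_sum, Finset.mul_sum]
    _ ≤ 2 * Λ * (u ⬝ᵥ u + u' ⬝ᵥ u') := by linarith [hv u, hw u']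

variable [Fintype ν] [Fintype ν']

lemma barrierOn_gramPolynomial [DecidableEq ι] (v : ι → ν → ℝ) {A c Y : ℝ} (hc : 0 < c)
    (hv : ∀ i, v i ⬝ᵥ v i ≤ A) {u : ι → ℝ} (hu : ((Y - c) • 1 + weightedGram v u).PosSemidef) :
    BarrierOn (A / c) u fun t => (gramPolynomial v t).eval Y := by
  intro t hut
  have hM : (Y • 1 + weightedGram v t - c • 1).PosSemidef := by
    convert hu.add (weightedGram_posSemidef v (sub_nonneg.mpr hut)) using 1
    rw [weightedGram_sub]
    module
  simp only [partialDiff, eval_gramPolynomial, weightedGram_add, weightedGram_single, ← add_assoc]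
  exact ⟨det_pos_of_posSemidef_sub hc hM, fun i => det_add_vecMulVec_sub_det_le hc hM (hv i)⟩

lemma sum_map_smul_single_add [DecidableEq ι] (d : ι → ℝ) :
    (Finset.univ.toList.map fun i =>
      d i • (𝐞 (Sum.inl i) : ι ⊕ ι → ℝ) + d i • 𝐞 (Sum.inr i)).sum = Sum.elim d d := by
  rw [Finset.sum_map_toList]
  funext c
  rcases c with c | c <;> simp [Finset.sum_apply, Pi.single_apply]

/-- The barrier height is `2 A / b`, and the slack `4 A x i / b` in the `i`-th coordinate uses up at
most half of `b • 1`. -/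
lemma contractAll_gramPolynomial_pos [DecidableEq ι] {v : ι → ν → ℝ} {x : ι → ℝ}
    (hx : ∀ i, 0 ≤ x i ∧ x i ≤ 1) {A Λ b : ℝ} (hb : 0 < b) (hA : 0 ≤ A) (hv : ∀ i, v i ⬝ᵥ v i ≤ A)
    (hΛ : (Λ • 1 - weightedGram v x).PosSemidef) (hAΛ : 8 * A * Λ ≤ b ^ 2) {Y : ℝ} (hY : b ≤ Y) :
    0 < (contractAll (fun i => x i * (1 - x i)) Finset.univ.toList
      (disjointMul (gramPolynomial v) (gramPolynomial v)) 0).eval Y := by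
  set φ := A / (b / 2) with hφ
  have hφ0 : 0 ≤ φ := by positivity
  have hφΛ : 2 * φ * Λ ≤ b / 2 := by
    rw [hφ, show 2 * (A / (b / 2)) * Λ = 4 * A * Λ / b by field_simp; ring, div_le_iff₀ hb]
    linarith
  have hslack : ((Y - b / 2) • 1 + weightedGram v (-((2 * φ) • x))).PosSemidef := by
    have hrest : 0 ≤ Y - b / 2 - 2 * φ * Λ := by linarith
    convert (hΛ.smul (mul_nonneg zero_le_two hφ0)).add (PosSemidef.one.smul hrest) using 1
    rw [weightedGram_neg, weightedGram_smul]
    module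
  have hbarrier := barrierOn_gramPolynomial v (half_pos hb) hv hslack
  have hstart : BarrierOn φ (-Sum.elim ((2 * φ) • x) ((2 * φ) • x))
      fun w => (disjointMul (gramPolynomial v) (gramPolynomial v) w).eval Y := by
    rw [← Sum.elim_neg_neg]
    simp only [disjointMul, eval_mul]
    exact hbarrier.disjointMul hbarrier
  have hp := (realStable_gramPolynomial v).disjointMul (realStable_gramPolynomial v)
  have hr (i) : 0 ≤ x i * (1 - x i) := mul_nonneg (hx i).1 (sub_nonneg.mpr (hx i).2)
  have hd (i) : 2 * φ * (x i * (1 - x i)) ≤ ((2 * φ) • x) i :=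
    mul_le_mul_of_nonneg_left (mul_le_of_le_one_right (hx i).1 (sub_le_self 1 (hx i).1))
      (by positivity)
  refine (hstart.contractAll hp hr hd _ 0 ?_).1
  rw [sum_map_smul_single_add, neg_add_cancel]

lemma exists_rounding_posSemidef (v : ι → ν → ℝ) {x : ι → ℝ} (hx : ∀ i, 0 ≤ x i ∧ x i ≤ 1)
    {A Λ b : ℝ} (hb : 0 < b) (hA : 0 ≤ A) (hv : ∀ i, v i ⬝ᵥ v i ≤ A)
    (hΛ : (Λ • 1 - weightedGram v x).PosSemidef) (hAΛ : 8 * A * Λ ≤ b ^ 2) :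
    ∃ z : ι → ℝ, (∀ i, z i = 0 ∨ z i = 1) ∧ (b • 1 + weightedGram v (x - z)).PosSemidef ∧
      (b • 1 + weightedGram v (z - x)).PosSemidef := by
  classical
  have hp := (realStable_gramPolynomial v).disjointMul (realStable_gramPolynomial v)
  have htop (w) : ∀ᶠ Y in atTop,
      0 < (disjointMul (gramPolynomial v) (gramPolynomial v) w).eval Y := by
    filter_upwards [eventually_gramPolynomial_pos v (w ∘ Sum.inl),
      eventually_gramPolynomial_pos v (w ∘ Sum.inr)] with Y h h'
    simpa only [disjointMul, eval_mul] using mul_pos h h'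
  obtain ⟨u, hu, -, hpos⟩ := hp.exists_moves_pos htop hx (Finset.nodup_toList _)
    fun Y hY => contractAll_gramPolynomial_pos hx hb hA hv hΛ hAΛ hY
  have hdet (Y) (hY : b ≤ Y) :
      (Y • 1 + weightedGram v u).det * (Y • 1 + weightedGram v (-u)).det ≠ 0 := by
    simpa [disjointMul, eval_gramPolynomial] using (hpos Y hY).ne'
  refine ⟨x - u, fun i => ?_, ?_, ?_⟩
  · rcases hu i (Finset.mem_toList.mpr (Finset.mem_univ i)) with h | h <;> simp [h]
  · rw [sub_sub_cancel]
    exact posSemidef_of_det_ne_zero (weightedGram_isHermitian v u) fun Y hY =>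
      left_ne_zero_of_mul (hdet Y hY)
  · rw [sub_sub_cancel_left]
    exact posSemidef_of_det_ne_zero (weightedGram_isHermitian v (-u)) fun Y hY =>
      right_ne_zero_of_mul (hdet Y hY)

lemma exists_simultaneous_rounding_posSemidef
    (v : ι → ν → ℝ) (w : ι → ν' → ℝ) {x : ι → ℝ} (hx : ∀ i, 0 ≤ x i ∧ x i ≤ 1)
    {A Λ b : ℝ} (hb : 0 < b) (hA : 0 ≤ A) (hv : ∀ i, v i ⬝ᵥ v i ≤ A) (hw : ∀ i, w i ⬝ᵥ w i ≤ A)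
    (hvΛ : (Λ • 1 - weightedGram v x).PosSemidef) (hwΛ : (Λ • 1 - weightedGram w x).PosSemidef)
    (hAΛ : 32 * A * Λ ≤ b ^ 2) :
    ∃ z : ι → ℝ, (∀ i, z i = 0 ∨ z i = 1) ∧
      ((b • 1 + weightedGram v (x - z)).PosSemidef ∧ (b • 1 + weightedGram v (z - x)).PosSemidef) ∧
        (b • 1 + weightedGram w (x - z)).PosSemidef ∧
          (b • 1 + weightedGram w (z - x)).PosSemidef := by
  have hsq (i) : Sum.elim (v i) (w i) ⬝ᵥ Sum.elim (v i) (w i) ≤ 2 * A := by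
    rw [sumElim_dotProduct_sumElim]
    linarith [hv i, hw i]
  obtain ⟨z, hz, hpos, hneg⟩ := exists_rounding_posSemidef (fun i => Sum.elim (v i) (w i)) hx hb
    (mul_nonneg zero_le_two hA) hsq
    (posSemidef_smul_one_sub_weightedGram_sumElim (fun i => (hx i).1) hvΛ hwΛ) (by linarith)
  have left {t : ι → ℝ} := posSemidef_smul_one_add_weightedGram_comp
    (v := fun i => Sum.elim (v i) (w i)) (t := t) (b := b) Sum.inl_injective
  have right {t : ι → ℝ} := posSemidef_smul_one_add_weightedGram_comp
    (v := fun i => Sum.elim (v i) (w i)) (t := t) (b := b) Sum.inr_injective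
  exact ⟨z, hz, ⟨left hpos, left hneg⟩, right hpos, right hneg⟩

/-- The cost `a` enters as the family of one-dimensional vectors `√(a i)`. -/
lemma exists_rounding_posSemidef_cost (v : ι → ν → ℝ) {x a : ι → ℝ} (hx : ∀ i, 0 ≤ x i ∧ x i ≤ 1)
    (ha : 0 ≤ a) {A Λ b : ℝ} (hb : 0 < b) (hA : 0 ≤ A) (hv : ∀ i, v i ⬝ᵥ v i ≤ A)
    (haA : ∀ i, a i ≤ A) (hvΛ : (Λ • 1 - weightedGram v x).PosSemidef)
    (haΛ : ∑ i, a i * x i ≤ Λ) (hAΛ : 32 * A * Λ ≤ b ^ 2) :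
    ∃ z : ι → ℝ, (∀ i, z i = 0 ∨ z i = 1) ∧
      ((b • 1 + weightedGram v (x - z)).PosSemidef ∧ (b • 1 + weightedGram v (z - x)).PosSemidef) ∧
      |∑ i, a i * x i - ∑ i, a i * z i| ≤ b := by
  have hw (i) : (fun _ : Unit => √(a i)) ⬝ᵥ (fun _ => √(a i)) ≤ A := by
    simpa [dotProduct, Real.mul_self_sqrt (ha i)] using haA i
  have hwΛ : (Λ • 1 - weightedGram (fun i (_ : Unit) => √(a i)) x).PosSemidef := by
    rw [weightedGram_sqrt ha, ← sub_smul, posSemidef_smul_one_unit_iff]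
    exact sub_nonneg.mpr haΛ
  obtain ⟨z, hz, hmatrix, hpos, hneg⟩ :=
    exists_simultaneous_rounding_posSemidef v _ hx hb hA hv hw hvΛ hwΛ hAΛ
  rw [weightedGram_sqrt ha, ← add_smul, posSemidef_smul_one_unit_iff] at hpos hneg
  simp only [Pi.sub_apply, mul_sub, Finset.sum_sub_distrib] at hpos hneg
  exact ⟨z, hz, hmatrix, abs_le.mpr ⟨by linarith, by linarith⟩⟩

/-- The cost is rescaled by `Λ / ∑ j, c j * x j`. If that sum is zero, then so is `c`. -/
lemma exists_rounding_posSemidef_relative_cost (v : ι → ν → ℝ) {x c : ι → ℝ}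
    (hx : ∀ i, 0 ≤ x i ∧ x i ≤ 1) (hc : ∀ i, 0 ≤ c i) {A Λ b : ℝ} (hA : 0 ≤ A) (hΛ : 0 < Λ)
    (hb : 0 < b) (hv : ∀ i, v i ⬝ᵥ v i ≤ A) (hvΛ : (Λ • 1 - weightedGram v x).PosSemidef)
    (hcA : ∀ i, c i ≤ A * (∑ j, c j * x j) / Λ) (hAΛ : 32 * A * Λ ≤ b ^ 2) :
    ∃ z : ι → ℝ, (∀ i, z i = 0 ∨ z i = 1) ∧
      ((b • 1 - (weightedGram v x - weightedGram v z)).PosSemidef ∧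
        (weightedGram v x - weightedGram v z + b • 1).PosSemidef) ∧
      |∑ i, c i * x i - ∑ i, c i * z i| ≤ b / Λ * ∑ i, c i * x i := by
  set T := ∑ j, c j * x j with hT
  have hT0 : 0 ≤ T := Finset.sum_nonneg fun j _ => mul_nonneg (hc j) (hx j).1
  have hscale (t : ι → ℝ) : ∑ i, Λ / T * c i * t i = Λ / T * ∑ i, c i * t i := by
    simp only [mul_assoc, Finset.mul_sum]
  have hcost (i) : Λ / T * c i ≤ A :=
    calc Λ / T * c i ≤ Λ / T * (A * T / Λ) := by gcongr; exact hcA i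
      _ = A * (T / T) := by field_simp
      _ ≤ A := mul_le_of_le_one_right hA (div_self_le_one T)
  have htotal : ∑ i, Λ / T * c i * x i ≤ Λ := by
    rw [hscale, ← hT, div_mul_comm]
    exact mul_le_of_le_one_left hΛ.le (div_self_le_one T)
  obtain ⟨z, hz, ⟨hpos, hneg⟩, hcostz⟩ := exists_rounding_posSemidef_cost v hx
    (fun i => mul_nonneg (div_nonneg hΛ.le hT0) (hc i)) hb hA hv hcost hvΛ htotal hAΛ
  rw [weightedGram_sub, add_comm] at hpos
  rw [weightedGram_sub, add_sub, ← sub_sub_eq_add_sub] at hneg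
  refine ⟨z, hz, ⟨hneg, hpos⟩, ?_⟩
  rcases hT0.eq_or_lt with hzero | hTpos
  · have hc0 (i) : c i = 0 := le_antisymm (by simpa [← hzero] using hcA i) (hc i)
    simp [← hzero, hc0]
  · rw [hscale, hscale, ← hT, ← mul_sub, abs_mul, abs_of_pos (div_pos hΛ hTpos),
      ← le_div_iff₀' (div_pos hΛ hTpos)] at hcostz
    exact hcostz.trans_eq (by rw [div_div_eq_mul_div, div_mul_eq_mul_div])

end MatrixRounding

end SpectralRounding

theorem two_sided_spectral_rounding_general_general {ι ν : Type*} [Fintype ι] [Fintype ν]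
    [DecidableEq ν] (v : ι → ν → ℝ) (x c : ι → ℝ) (lam l : ℝ) (hx : ∀ i, 0 ≤ x i ∧ x i ≤ 1)
    (hc : ∀ i, 0 ≤ c i) (hlam : 0 < lam) (hl : 0 < l)
    (hop : (lam • 1 - ∑ i, x i • vecMulVec (v i) (v i)).PosSemidef)
    (hv : ∀ i, √(∑ j, v i j ^ 2) ≤ l) (hcinf : ∀ i, c i ≤ l ^ 2 * (∑ j, c j * x j) / lam) :
    ∃ z : ι → ℝ, (∀ i, z i = 0 ∨ z i = 1) ∧
      (((8 * l * √lam) • 1 - ((∑ i, x i • vecMulVec (v i) (v i))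
          - ∑ i, z i • vecMulVec (v i) (v i))).PosSemidef ∧
        ((∑ i, x i • vecMulVec (v i) (v i)) - ∑ i, z i • vecMulVec (v i) (v i)
          + (8 * l * √lam) • 1).PosSemidef) ∧
      |(∑ i, c i * x i) - ∑ i, c i * z i| ≤ (8 * l / √lam) * ∑ i, c i * x i := by
  have hsq : 32 * l ^ 2 * lam ≤ (8 * l * √lam) ^ 2 := by
    rw [mul_pow, mul_pow, Real.sq_sqrt hlam.le]
    gcongr
    norm_num
  have hratio : 8 * l / √lam = 8 * l * √lam / lam := by
    rw [mul_div_assoc _ √lam, Real.sqrt_div_self, ← div_eq_mul_inv]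
  have hnorm (i) : v i ⬝ᵥ v i ≤ l ^ 2 := by
    simpa only [dotProduct, sq] using (Real.sqrt_le_left hl.le).mp (hv i)
  rw [hratio]
  exact SpectralRounding.exists_rounding_posSemidef_relative_cost v hx hc (sq_nonneg l) hlam
    (by positivity) hnorm hop hcinf hsq

/-- **Two-sided spectral rounding with a linear constraint, general scaling.**
If `‖∑ xᵢ vᵢ vᵢᵀ‖_op ≤ λ`, `‖vᵢ‖ ≤ l` for all `i`, `c_∞ ≤ l² ⟨c, x⟩ / λ`, and `l ≤ √λ`,
then there is `z ∈ {0,1}^m` with `‖∑ xᵢ vᵢ vᵢᵀ - ∑ zᵢ vᵢ vᵢᵀ‖_op ≤ 8 l √λ` and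
`|⟨c, x⟩ - ⟨c, z⟩| ≤ (8 l / √λ) ⟨c, x⟩`. -/
theorem two_sided_spectral_rounding_general {n m : ℕ} (v : Fin m → Fin n → ℝ)
    (x c : Fin m → ℝ) (lam l : ℝ)
    (hx : ∀ i, 0 ≤ x i ∧ x i ≤ 1)
    (hc : ∀ i, 0 ≤ c i)
    (hlam : 0 < lam) (hl : 0 < l)
    (hop : OpNormLE (∑ i, x i • vecMulVec (v i) (v i)) lam)
    (hv : ∀ i, Real.sqrt (∑ j, v i j ^ 2) ≤ l)
    (hcinf : ∀ i, c i ≤ l^2 * (∑ j, c j * x j) / lam)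
    (hllam : l ≤ Real.sqrt lam) :
    ∃ z : Fin m → ℝ, (∀ i, z i = 0 ∨ z i = 1) ∧
      OpNormLE ((∑ i, x i • vecMulVec (v i) (v i)) - ∑ i, z i • vecMulVec (v i) (v i))
        (8 * l * Real.sqrt lam) ∧
      |(∑ i, c i * x i) - ∑ i, c i * z i| ≤ (8 * l / Real.sqrt lam) * ∑ i, c i * x i := by
  exact two_sided_spectral_rounding_general_general v x c lam l hx hc hlam hl hop.1 hv hcinf
end
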